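/- arXiv:2001.01933 — 2 statements merged into one kernel-verified Lean document; each statement's English description precedes it below -/
import Mathlib

section
/- For every ε > 0 the following holds: for n ranging over even natural numbers and Δ drawn from U(n), with probability tending to 1 as n → ∞, the number of (n/2+1)-element subsets x of [n] that are holes of Δ and such that no other hole x' of size n/2+1 satisfies |x ∩ x'| = n/2 is at least (1−ε)·2^{(n−1)/2}/√(πn). (This yields that the homology group H_{n/2−1}(Δ) over any field has rank at least (1+o(1))·2^{(n−1)/2}/√(πn) with high probability.) -/
open scoped Classical

noncomputable section

/-- `Δ` is a simplicial complex on vertex set `Fin n`: all faces are nonempty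
and it is downward closed. -/
def IsComplex {n : ℕ} (Δ : Finset (Finset (Fin n))) : Prop :=
  (∀ x ∈ Δ, x.Nonempty) ∧
    ∀ x ∈ Δ, ∀ y : Finset (Fin n), y.Nonempty → y ⊆ x → y ∈ Δ

/-- The finite set of all simplicial complexes on `n` vertices. -/
def allComplexes (n : ℕ) : Finset (Finset (Finset (Fin n))) :=
  Finset.univ.filter IsComplex

/-- The probability, under the uniform measure `U(n)` on all simplicial
complexes on `n` vertices, of the event `P`. -/
def uniformProb (n : ℕ) (P : Finset (Finset (Fin n)) → Prop) : ℝ :=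
  (((allComplexes n).filter P).card : ℝ) / ((allComplexes n).card : ℝ)

/-- `x` is a hole of `Δ` of dimension `m`: an `(m+1)`-set that is not a face
although all its `m`-subsets are faces. -/
def IsHole {n : ℕ} (Δ : Finset (Finset (Fin n))) (m : ℕ) (x : Finset (Fin n)) : Prop :=
  x.card = m + 1 ∧ x ∉ Δ ∧ ∀ y ⊆ x, y.card = m → y ∈ Δ

/-!
Call a middle set of a complex on `2 * k` vertices *forced* if the faces off the middle layer decide
whether it is a face: it lies under a larger face or over a smaller non-face. Given the part off the
middle layer, the remaining middle sets are independent fair coins.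

There are few forced sets on average. The part above the middle layer is encoded layer by layer by a
container argument: a sparse random sample of the shadow of a layer, together with the cofaces of
the sample that the shadow does not fill and a few greedily chosen corrections, determines a small
set containing the layer, so that larger faces cost fewer bits than the middle sets that they force
would need. By Kraft's inequality these codes give a sub-probability weight on complexes, and Gibbs'
inequality compares it with the uniform distribution, whose entropy is at least the number of middle
sets. The part below the middle layer is treated in the same way through Alexander duality.

Hence for almost every `(k + 1)`-set, all facets of the set and of its neighbours are free, and the
second moment method in each fibre of the map forgetting the middle layer shows that the number of
isolated holes is at least `(1 - o(1)) * centralBinom k / 2 ^ (k + 1)`, which Stirling's formula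
evaluates.
-/

namespace UniformComplex

open Finset

/-! ### Greedy covers, Bernoulli subsets, Gibbs' inequality and Kraft sums -/

section Tools

variable {α β ι : Type*}

-- A maximal `R` satisfying the first bound satisfies the second.
theorem exists_greedy_cover [DecidableEq α] (A : Finset ι) (s : ι → Finset α) (ψ : ℕ) :
    ∃ R ⊆ A, ψ * #R ≤ #(R.biUnion s) ∧ ∀ x ∈ A, #(s x \ R.biUnion s) ≤ ψ := by
  obtain ⟨R, hR, hmax⟩ := exists_max_image {R ∈ A.powerset | ψ * #R ≤ #(R.biUnion s)} card
    ⟨∅, by simp⟩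
  simp only [mem_filter, mem_powerset, and_imp] at hR hmax
  refine ⟨R, hR.1, hR.2, fun x hx => ?_⟩
  by_contra! hgain
  have hxR : x ∉ R := fun hxR => by
    simp [sdiff_eq_empty_iff_subset.2 (subset_biUnion_of_mem s hxR)] at hgain
  have hcard := card_insert_of_notMem hxR
  have hunion : #((insert x R).biUnion s) = #(s x \ R.biUnion s) + #(R.biUnion s) := by
    rw [biUnion_insert, ← sdiff_union_self_eq_union, card_union_of_disjoint sdiff_disjoint]
  have := hmax (insert x R) (insert_subset hx hR.1) (by rw [hcard, hunion, mul_add]; omega)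
  omega

/-- The expectation of `φ T` for a random subset `T` of `Y` that contains each element of `Y`
independently with probability `p`. -/
def bernoulliMean (p : ℝ) (Y : Finset α) (φ : Finset α → ℝ) : ℝ :=
  ∑ T ∈ Y.powerset, p ^ #T * (1 - p) ^ (#Y - #T) * φ T

variable {p : ℝ} {Y : Finset α}

theorem bernoulliMean_const (c : ℝ) : bernoulliMean p Y (fun _ => c) = c := by
  rw [bernoulliMean, ← sum_mul, sum_pow_mul_eq_add_pow]
  simp

theorem bernoulliMean_add (φ χ : Finset α → ℝ) :
    bernoulliMean p Y (fun T => φ T + χ T) = bernoulliMean p Y φ + bernoulliMean p Y χ := by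
  simp only [bernoulliMean, mul_add, sum_add_distrib]

theorem bernoulliMean_const_mul (c : ℝ) (φ : Finset α → ℝ) :
    bernoulliMean p Y (fun T => c * φ T) = c * bernoulliMean p Y φ := by
  simp only [bernoulliMean, mul_left_comm, mul_sum]

theorem bernoulliMean_sum (s : Finset ι) (φ : ι → Finset α → ℝ) :
    bernoulliMean p Y (fun T => ∑ i ∈ s, φ i T) = ∑ i ∈ s, bernoulliMean p Y (φ i) := by
  simp only [bernoulliMean, mul_sum]
  exact sum_comm

theorem bernoulliMean_mono (hp0 : 0 ≤ p) (hp1 : p ≤ 1) {φ χ : Finset α → ℝ}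
    (h : ∀ T, φ T ≤ χ T) : bernoulliMean p Y φ ≤ bernoulliMean p Y χ := by
  have := sub_nonneg.2 hp1
  exact sum_le_sum fun T _ => mul_le_mul_of_nonneg_left (h T) (by positivity)

theorem exists_le_bernoulliMean (hp0 : 0 ≤ p) (hp1 : p ≤ 1) (φ : Finset α → ℝ) :
    ∃ T ⊆ Y, φ T ≤ bernoulliMean p Y φ := by
  have := sub_nonneg.2 hp1
  have htotal : ∑ T ∈ Y.powerset, p ^ #T * (1 - p) ^ (#Y - #T) = 1 := by
    simpa [bernoulliMean] using bernoulliMean_const (p := p) (Y := Y) 1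
  obtain ⟨T, hT, hle⟩ := (concaveOn_id (𝕜 := ℝ) convex_univ).exists_le_of_centerMass
    (t := Y.powerset) (w := fun T => p ^ #T * (1 - p) ^ (#Y - #T)) (p := φ)
    (fun T _ => by positivity) (by simp [htotal]) (fun _ _ => Set.mem_univ _)
  rw [centerMass_eq_of_sum_1 _ _ htotal] at hle
  exact ⟨T, mem_powerset.1 hT, hle⟩

theorem card_mul_log_card_le_sum_neg_log {Ω : Finset β} {w : β → ℝ} (hw : ∀ x ∈ Ω, 0 < w x)
    (hsum : ∑ x ∈ Ω, w x ≤ 1) : #Ω * Real.log #Ω ≤ ∑ x ∈ Ω, -Real.log (w x) := by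
  obtain rfl | hne := Ω.eq_empty_or_nonempty
  · simp
  have hcard : (0 : ℝ) < #Ω := by exact_mod_cast hne.card_pos
  have htangent : ∀ x ∈ Ω, Real.log #Ω + Real.log (w x) ≤ #Ω * w x - 1 := fun x hx => by
    rw [← Real.log_mul hcard.ne' (hw x hx).ne']
    exact Real.log_le_sub_one_of_pos (mul_pos hcard (hw x hx))
  have htotal := sum_le_sum htangent
  rw [sum_add_distrib, sum_sub_distrib, ← mul_sum] at htotal
  simp only [sum_const, nsmul_eq_mul, mul_one] at htotal
  rw [sum_neg_distrib]
  nlinarith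

theorem sum_pow_card_le_exp (E : Finset α) {θ : ℝ} (hθ : 0 ≤ θ) :
    ∑ z ∈ E.powerset, θ ^ #z ≤ Real.exp (θ * #E) := by
  have hbinom := sum_pow_mul_eq_add_pow θ 1 E
  simp only [one_pow, mul_one] at hbinom
  rw [hbinom, mul_comm, Real.exp_nat_mul]
  exact pow_le_pow_left₀ (by positivity) (Real.add_one_le_exp θ) _

variable [DecidableEq α]

theorem bernoulliMean_disjoint {Z : Finset α} (hZ : Z ⊆ Y) :
    bernoulliMean p Y (fun T => if Disjoint T Z then 1 else 0) = (1 - p) ^ #Z := by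
  have havoid : {T ∈ Y.powerset | Disjoint T Z} = (Y \ Z).powerset := by
    ext T
    simp only [mem_filter, mem_powerset, subset_sdiff]
  have hfactor : ∀ T ∈ (Y \ Z).powerset, p ^ #T * (1 - p) ^ (#Y - #T) =
      p ^ #T * (1 - p) ^ (#(Y \ Z) - #T) * (1 - p) ^ #Z := fun T hT => by
    have := card_le_card (mem_powerset.1 hT)
    have := card_sdiff_add_card_eq_card hZ
    rw [mul_assoc, ← pow_add]
    congr 2
    omega
  simp only [bernoulliMean, mul_ite, mul_one, mul_zero]
  rw [← sum_filter, havoid, sum_congr rfl hfactor, ← sum_mul, sum_pow_mul_eq_add_pow]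
  simp

theorem bernoulliMean_mem {y : α} (hy : y ∈ Y) :
    bernoulliMean p Y (fun T => if y ∈ T then 1 else 0) = p := by
  have hcompl : (fun T : Finset α => if y ∈ T then (1 : ℝ) else 0) =
      fun T => 1 + -1 * if Disjoint T {y} then 1 else 0 := by
    ext T
    by_cases hT : y ∈ T <;> simp [hT]
  rw [hcompl, bernoulliMean_add, bernoulliMean_const_mul, bernoulliMean_const,
    bernoulliMean_disjoint (singleton_subset_iff.2 hy), card_singleton]
  ring

theorem bernoulliMean_sum_inter {G : Finset α} (hG : G ⊆ Y) (f : α → ℝ) :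
    bernoulliMean p Y (fun T => ∑ y ∈ G ∩ T, f y) = p * ∑ y ∈ G, f y := by
  have hindicator : ∀ T, ∑ y ∈ G ∩ T, f y = ∑ y ∈ G, f y * if y ∈ T then 1 else 0 := fun T => by
    rw [← filter_mem_eq_inter, sum_filter]
    simp only [mul_ite, mul_one, mul_zero]
  simp only [hindicator, bernoulliMean_sum, bernoulliMean_const_mul]
  rw [mul_sum]
  exact sum_congr rfl fun y hy => by rw [bernoulliMean_mem (hG hy), mul_comm]

theorem sum_pow_card_tuple_mul_le_exp [Fintype ι] {𝒟 : Finset β}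
    {f : β → ι → Finset α} {E : Finset α} (hf : ∀ D ∈ 𝒟, ∀ t, f D t ⊆ E) {v : β → ℝ}
    (hfibre : ∀ Z, ∑ D ∈ 𝒟 with f D = Z, v D ≤ 1) {θ : ℝ} (hθ : 0 ≤ θ) :
    ∑ D ∈ 𝒟, θ ^ (∑ t, #(f D t)) * v D ≤ Real.exp (Fintype.card ι * (θ * #E)) := by
  have hmaps : ∀ D ∈ 𝒟, f D ∈ Fintype.piFinset fun _ : ι => E.powerset := fun D hD =>
    Fintype.mem_piFinset.2 fun t => mem_powerset.2 (hf D hD t)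
  calc ∑ D ∈ 𝒟, θ ^ (∑ t, #(f D t)) * v D
      = ∑ Z ∈ Fintype.piFinset fun _ : ι => E.powerset,
          (∏ t, θ ^ #(Z t)) * ∑ D ∈ 𝒟 with f D = Z, v D := by
        rw [← sum_fiberwise_of_maps_to hmaps]
        refine sum_congr rfl fun Z _ => ?_
        rw [mul_sum]
        refine sum_congr rfl fun D hD => ?_
        rw [(mem_filter.1 hD).2, prod_pow_eq_pow_sum]
    _ ≤ ∑ Z ∈ Fintype.piFinset fun _ : ι => E.powerset, ∏ t, θ ^ #(Z t) :=
        sum_le_sum fun Z _ =>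
          mul_le_of_le_one_right (prod_nonneg fun _ _ => by positivity) (hfibre Z)
    _ = (∑ z ∈ E.powerset, θ ^ #z) ^ Fintype.card ι := by
        rw [← prod_univ_sum (fun _ : ι => E.powerset) (fun _ z => θ ^ #z), prod_const, card_univ]
    _ ≤ Real.exp (θ * #E) ^ Fintype.card ι :=
        pow_le_pow_left₀ (sum_nonneg fun _ _ => by positivity) (sum_pow_card_le_exp E hθ) _
    _ = Real.exp (Fintype.card ι * (θ * #E)) := (Real.exp_nat_mul _ _).symm

end Tools

/-! ### Graph containers for filled elements -/

/-- Two consecutive layers of a graded poset, seen as a biregular bipartite graph: every upper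
element `x` has `downDeg` facets `down x`, every lower element `y` has `upDeg` cofaces `up y`, and
two upper elements share at most one facet. -/
structure LayerPair (α : Type*) where
  upper : Finset α
  lower : Finset α
  down : α → Finset α
  up : α → Finset α
  downDeg : ℕ
  upDeg : ℕ
  down_subset : ∀ x ∈ upper, down x ⊆ lower
  up_subset : ∀ y ∈ lower, up y ⊆ upper
  card_down : ∀ x ∈ upper, #(down x) = downDeg
  card_up : ∀ y ∈ lower, #(up y) = upDeg
  mem_down_iff : ∀ x ∈ upper, ∀ y ∈ lower, (y ∈ down x ↔ x ∈ up y)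
  eq_of_mem_down : ∀ y ∈ lower, ∀ x ∈ up y, ∀ x' ∈ up y, x ≠ x' →
    ∀ z ∈ down x, z ∈ down x' → z = y

namespace LayerPair

variable {α ι : Type*} [DecidableEq α] (P : LayerPair α)

/-- The upper elements all of whose facets lie in `G`. -/
def filled (G : Finset α) : Finset α := {x ∈ P.upper | P.down x ⊆ G}

/-- The number of incidences between `G` and upper elements that are not filled by `G`. -/
def openIncidences (G : Finset α) : ℕ := ∑ y ∈ G, #(P.up y \ P.filled G)

/-- The unfilled cofaces of the sampled elements `G ∩ T`. -/
def unfilledCofaces (G T : Finset α) : Finset α := (G ∩ T).biUnion P.up \ P.filled G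

/-- The elements known to lie in `G` once `sample = G ∩ T` and the unfilled cofaces of the sample
are known: the facets of all other cofaces of the sample. -/
def revealed (sample unfilled : Finset α) : Finset α :=
  (sample.biUnion P.up \ unfilled).biUnion P.down

/-- The elements of `G` that share a filled coface with `y`. -/
def filledNbhd (G : Finset α) (y : α) : Finset α := (P.up y ∩ P.filled G).biUnion P.down

variable {P} {G T : Finset α}

theorem filled_subset_upper (G : Finset α) : P.filled G ⊆ P.upper := filter_subset _ _

theorem down_subset_of_mem_filled {x : α} (hx : x ∈ P.filled G) : P.down x ⊆ G :=
  (mem_filter.1 hx).2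

theorem sum_card_up_inter {A B : Finset α} (hA : A ⊆ P.upper) (hB : B ⊆ P.lower) :
    ∑ y ∈ B, #(P.up y ∩ A) = ∑ x ∈ A, #(P.down x ∩ B) := by
  have hswap := sum_card_bipartiteAbove_eq_sum_card_bipartiteBelow (s := B) (t := A)
    (fun y x => y ∈ P.down x)
  convert hswap using 3 with y hy x
  · ext x
    simp only [mem_inter, mem_bipartiteAbove, and_comm]
    exact and_congr_right fun hx => (P.mem_down_iff x (hA hx) y (hB hy)).symm
  · ext y
    simp only [mem_inter, mem_bipartiteBelow, and_comm]

theorem upDeg_mul_card (hG : G ⊆ P.lower) :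
    P.upDeg * #G = P.downDeg * #(P.filled G) + P.openIncidences G := by
  have hfilled : ∑ y ∈ G, #(P.up y ∩ P.filled G) = P.downDeg * #(P.filled G) := by
    rw [sum_card_up_inter (filled_subset_upper G) hG, mul_comm]
    refine sum_const_nat fun x hx => ?_
    rw [inter_eq_left.2 (down_subset_of_mem_filled hx), P.card_down x (filled_subset_upper G hx)]
  rw [← hfilled, openIncidences, ← sum_add_distrib, mul_comm]
  refine (sum_const_nat fun y hy => ?_).symm
  rw [add_comm, card_sdiff_add_card_inter, P.card_up y (hG hy)]

theorem revealed_subset : P.revealed (G ∩ T) (P.unfilledCofaces G T) ⊆ G := by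
  refine biUnion_subset.2 fun x hx => ?_
  simp only [unfilledCofaces, mem_sdiff, not_and, not_not] at hx
  exact down_subset_of_mem_filled (hx.2 hx.1)

theorem mem_revealed (hG : G ⊆ P.lower) {y : α} (hy : y ∈ G)
    (hT : ¬ Disjoint T (P.filledNbhd G y)) :
    y ∈ P.revealed (G ∩ T) (P.unfilledCofaces G T) := by
  obtain ⟨z, hzT, hz⟩ := not_disjoint_iff.1 hT
  obtain ⟨x, hx, hzx⟩ := mem_biUnion.1 hz
  obtain ⟨hxy, hxG⟩ := mem_inter.1 hx
  have hxU := filled_subset_upper G hxG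
  have hzG := down_subset_of_mem_filled hxG hzx
  refine mem_biUnion.2 ⟨x, mem_sdiff.2 ⟨?_, fun hmem => (mem_sdiff.1 hmem).2 hxG⟩,
    (P.mem_down_iff x hxU y (hG hy)).2 hxy⟩
  exact mem_biUnion.2 ⟨z, mem_inter.2 ⟨hzG, hzT⟩, (P.mem_down_iff x hxU z (hG hzG)).1 hzx⟩

theorem card_mul_le_card_biUnion_down {y : α} (hy : y ∈ P.lower) {U : Finset α}
    (hU : U ⊆ P.up y) : #U * (P.downDeg - 1) ≤ #(U.biUnion P.down) := by
  have hdisjoint : (U : Set α).PairwiseDisjoint fun x => (P.down x).erase y := by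
    intro x hx x' hx' hne
    refine disjoint_left.2 fun z hz hz' => (mem_erase.1 hz).1 ?_
    exact P.eq_of_mem_down y hy x (hU hx) x' (hU hx') hne z (mem_erase.1 hz).2 (mem_erase.1 hz').2
  calc #U * (P.downDeg - 1) = ∑ x ∈ U, (P.downDeg - 1) := by rw [sum_const, smul_eq_mul]
    _ ≤ ∑ x ∈ U, #((P.down x).erase y) := sum_le_sum fun x hx => by
        rw [← P.card_down x (P.up_subset y hy (hU hx))]
        exact pred_card_le_card_erase
    _ = #(U.biUnion fun x => (P.down x).erase y) := (card_biUnion hdisjoint).symm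
    _ ≤ #(U.biUnion P.down) := card_le_card (biUnion_mono fun x _ => erase_subset _ _)

theorem upDeg_mul_card_sparse_le (hG : G ⊆ P.lower) :
    P.upDeg * #{y ∈ G | 2 * #(P.up y ∩ P.filled G) < P.upDeg} ≤ 2 * P.openIncidences G := by
  rw [openIncidences, mul_sum, mul_comm, ← smul_eq_mul, ← sum_const]
  refine (sum_le_sum fun y hy => ?_).trans (sum_le_sum_of_subset (filter_subset _ _))
  obtain ⟨hyG, hsparse⟩ := mem_filter.1 hy
  have := card_sdiff_add_card_inter (P.up y) (P.filled G)
  rw [P.card_up y (hG hyG)] at this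
  omega

variable {p : ℝ}

theorem bernoulliMean_card_sample (hG : G ⊆ P.lower) :
    bernoulliMean p P.lower (fun T => #(G ∩ T)) = p * #G := by
  simpa using bernoulliMean_sum_inter hG (p := p) fun _ => 1

theorem bernoulliMean_card_unfilledCofaces_le (hp0 : 0 ≤ p) (hp1 : p ≤ 1) (hG : G ⊆ P.lower) :
    bernoulliMean p P.lower (fun T => #(P.unfilledCofaces G T)) ≤ p * P.openIncidences G := by
  have hcard : ∀ T, (#(P.unfilledCofaces G T) : ℝ) ≤ ∑ y ∈ G ∩ T, (#(P.up y \ P.filled G) : ℝ) :=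
    fun T => by
      have hunion : P.unfilledCofaces G T = (G ∩ T).biUnion fun y => P.up y \ P.filled G := by
        ext x
        simp only [unfilledCofaces, mem_sdiff, mem_biUnion]
        tauto
      exact_mod_cast hunion ▸ card_biUnion_le
  refine (bernoulliMean_mono hp0 hp1 hcard).trans_eq ?_
  rw [bernoulliMean_sum_inter hG, openIncidences, Nat.cast_sum]

theorem filledNbhd_subset (G : Finset α) (y : α) : P.filledNbhd G y ⊆ G :=
  biUnion_subset.2 fun _ hx => down_subset_of_mem_filled (mem_inter.1 hx).2

theorem pow_card_filledNbhd_le (hp0 : 0 ≤ p) (hp1 : p ≤ 1) {r : ℕ}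
    (hr : 2 * r ≤ P.upDeg * (P.downDeg - 1)) {y : α} (hy : y ∈ P.lower) :
    (1 - p) ^ #(P.filledNbhd G y) ≤
      (if 2 * #(P.up y ∩ P.filled G) < P.upDeg then 1 else 0) + (1 - p) ^ r := by
  have hp : 0 ≤ 1 - p := by linarith
  split_ifs with hsparse
  · linarith [pow_nonneg hp r, pow_le_one₀ hp (by linarith : 1 - p ≤ 1) (n := #(P.filledNbhd G y))]
  · rw [zero_add]
    refine pow_le_pow_of_le_one hp (by linarith) ?_
    have hcard : #(P.up y ∩ P.filled G) * (P.downDeg - 1) ≤ #(P.filledNbhd G y) :=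
      card_mul_le_card_biUnion_down hy inter_subset_left
    have := Nat.mul_le_mul_right (P.downDeg - 1) (not_lt.1 hsparse)
    nlinarith

theorem card_sdiff_revealed_le (hG : G ⊆ P.lower) (T : Finset α) :
    #(G \ P.revealed (G ∩ T) (P.unfilledCofaces G T)) ≤
      #{y ∈ G | Disjoint T (P.filledNbhd G y)} := by
  refine card_le_card fun y hy => mem_filter.2 ⟨(mem_sdiff.1 hy).1, ?_⟩
  by_contra hT
  exact (mem_sdiff.1 hy).2 (mem_revealed hG (mem_sdiff.1 hy).1 hT)

theorem bernoulliMean_card_sdiff_revealed_le (hp0 : 0 ≤ p) (hp1 : p ≤ 1) (hG : G ⊆ P.lower)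
    {r : ℕ} (hdeg : 0 < P.upDeg) (hr : 2 * r ≤ P.upDeg * (P.downDeg - 1)) :
    bernoulliMean p P.lower (fun T => #(G \ P.revealed (G ∩ T) (P.unfilledCofaces G T))) ≤
      2 / P.upDeg * P.openIncidences G + (1 - p) ^ r * #G := by
  have hmissed : ∀ T, (#(G \ P.revealed (G ∩ T) (P.unfilledCofaces G T)) : ℝ) ≤
      ∑ y ∈ G, if Disjoint T (P.filledNbhd G y) then 1 else 0 := fun T => by
    rw [sum_boole]
    exact_mod_cast card_sdiff_revealed_le hG T
  have hsparse : (#{y ∈ G | 2 * #(P.up y ∩ P.filled G) < P.upDeg} : ℝ) ≤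
      2 / P.upDeg * P.openIncidences G := by
    rw [div_mul_eq_mul_div, le_div_iff₀ (by positivity), mul_comm]
    exact_mod_cast upDeg_mul_card_sparse_le hG
  calc _ ≤ ∑ y ∈ G, (1 - p) ^ #(P.filledNbhd G y) := by
        refine (bernoulliMean_mono hp0 hp1 hmissed).trans_eq ?_
        rw [bernoulliMean_sum]
        exact sum_congr rfl fun y _ => bernoulliMean_disjoint ((filledNbhd_subset G y).trans hG)
    _ ≤ ∑ y ∈ G, ((if 2 * #(P.up y ∩ P.filled G) < P.upDeg then 1 else 0) + (1 - p) ^ r) :=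
        sum_le_sum fun y hy => pow_card_filledNbhd_le hp0 hp1 hr (hG hy)
    _ ≤ 2 / P.upDeg * P.openIncidences G + (1 - p) ^ r * #G := by
        rw [sum_add_distrib, sum_boole, sum_const, nsmul_eq_mul, mul_comm (#G : ℝ)]
        linarith

theorem exists_sample {Ω : Finset ι} {G : ι → Finset α} (hG : ∀ i ∈ Ω, G i ⊆ P.lower)
    {c₁ c₂ : ℝ} (hc₁ : 0 ≤ c₁) (hc₂ : 0 ≤ c₂) (hp0 : 0 ≤ p) (hp1 : p ≤ 1) {r : ℕ}
    (hdeg : 0 < P.upDeg) (hr : 2 * r ≤ P.upDeg * (P.downDeg - 1)) :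
    ∃ T, ∑ i ∈ Ω, (c₁ * #(G i ∩ T) + c₁ * #(P.unfilledCofaces (G i) T) +
        c₂ * #(G i \ P.revealed (G i ∩ T) (P.unfilledCofaces (G i) T))) ≤
      ∑ i ∈ Ω, (c₁ * (p * #(G i)) + c₁ * (p * P.openIncidences (G i)) +
        c₂ * (2 / P.upDeg * P.openIncidences (G i) + (1 - p) ^ r * #(G i))) := by
  obtain ⟨T, -, hle⟩ := exists_le_bernoulliMean (Y := P.lower) hp0 hp1 fun T =>
    ∑ i ∈ Ω, (c₁ * #(G i ∩ T) + c₁ * #(P.unfilledCofaces (G i) T) +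
      c₂ * #(G i \ P.revealed (G i ∩ T) (P.unfilledCofaces (G i) T)))
  refine ⟨T, hle.trans ?_⟩
  rw [bernoulliMean_sum]
  refine sum_le_sum fun i hi => ?_
  rw [bernoulliMean_add, bernoulliMean_add, bernoulliMean_const_mul, bernoulliMean_const_mul,
    bernoulliMean_const_mul, bernoulliMean_card_sample (hG i hi)]
  gcongr
  · exact bernoulliMean_card_unfilledCofaces_le hp0 hp1 (hG i hi)
  · exact bernoulliMean_card_sdiff_revealed_le hp0 hp1 (hG i hi) hdeg hr

end LayerPair

/-- The code word of a set `G` of lower elements in the container lemma: the sampled elements of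
`G`, their unfilled cofaces, greedily chosen filled elements (`seeds`) and greedily chosen elements
outside `G` (`excluded`). -/
@[ext] structure Fingerprint (α : Type*) where
  sample : Finset α
  unfilled : Finset α
  seeds : Finset α
  excluded : Finset α

namespace LayerPair

variable {α : Type*} [DecidableEq α] (P : LayerPair α)

/-- The part of the encoded set that is certain from the fingerprint. -/
def core (z : Fingerprint α) : Finset α :=
  P.revealed z.sample z.unfilled ∪ z.seeds.biUnion P.down

/-- The upper elements with at most `ψ` facets outside `F`. -/
def nearlyFilled (ψ : ℕ) (F : Finset α) : Finset α := {x ∈ P.upper | #(P.down x \ F) ≤ ψ}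

/-- A set of upper elements, read off the fingerprint, that contains all filled elements. -/
def container (ψ : ℕ) (z : Fingerprint α) : Finset α :=
  P.nearlyFilled ψ (P.core z) \ z.excluded.biUnion P.up

/-- A lower approximation of the encoded set, read off the fingerprint: lower elements with more
than `ψ` cofaces in the container must belong to the encoded set. -/
def approx (ψ : ℕ) (z : Fingerprint α) : Finset α :=
  P.core z ∪ {y ∈ P.lower | ψ < #(P.up y ∩ P.container ψ z)}

/-- `z` is a fingerprint of `G` with respect to the sample set `T` and the degree threshold `ψ`. -/
structure IsFingerprint (ψ : ℕ) (T G : Finset α) (z : Fingerprint α) : Prop where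
  sample_eq : z.sample = G ∩ T
  unfilled_eq : z.unfilled = P.unfilledCofaces G T
  seeds_subset : z.seeds ⊆ P.filled G
  excluded_subset : z.excluded ⊆ P.lower
  card_seeds_le : ψ * #z.seeds ≤ #(G \ P.revealed (G ∩ T) (P.unfilledCofaces G T))
  card_excluded_le : ψ * #z.excluded ≤ #(P.nearlyFilled ψ (P.core z) \ P.filled G)
  core_subset : P.core z ⊆ G
  filled_subset : P.filled G ⊆ P.container ψ z
  card_up_inter_le : ∀ y ∈ P.lower \ G, #(P.up y ∩ P.container ψ z) ≤ ψ

variable {P} {G T : Finset α} {ψ : ℕ}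

theorem exists_seeds {L : Finset α} (hL : L ⊆ G) (ψ : ℕ) :
    ∃ R ⊆ P.filled G, ψ * #R ≤ #(G \ L) ∧ L ∪ R.biUnion P.down ⊆ G ∧
      P.filled G ⊆ P.nearlyFilled ψ (L ∪ R.biUnion P.down) := by
  obtain ⟨R, hR, hcard, hgreedy⟩ := exists_greedy_cover (P.filled G) (fun x => P.down x \ L) ψ
  have hdown : R.biUnion P.down ⊆ G :=
    biUnion_subset.2 fun x hx => down_subset_of_mem_filled (hR hx)
  have hgain : R.biUnion (fun x => P.down x \ L) = R.biUnion P.down \ L := by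
    ext z
    simp only [mem_biUnion, mem_sdiff]
    tauto
  rw [hgain] at hcard
  refine ⟨R, hR, hcard.trans (card_le_card (sdiff_subset_sdiff hdown le_rfl)),
    union_subset hL hdown, fun x hx => mem_filter.2 ⟨filled_subset_upper G hx, ?_⟩⟩
  have hrest : P.down x \ (L ∪ R.biUnion P.down) =
      (P.down x \ L) \ R.biUnion fun x => P.down x \ L := by
    rw [hgain]
    ext z
    simp only [mem_sdiff, mem_union]
    tauto
  exact hrest ▸ hgreedy x hx

theorem exists_excluded {S : Finset α} (hS : P.filled G ⊆ S) (ψ : ℕ) :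
    ∃ Q ⊆ P.lower, ψ * #Q ≤ #(S \ P.filled G) ∧ P.filled G ⊆ S \ Q.biUnion P.up ∧
      ∀ y ∈ P.lower \ G, #(P.up y ∩ (S \ Q.biUnion P.up)) ≤ ψ := by
  obtain ⟨Q, hQ, hcard, hgreedy⟩ := exists_greedy_cover (P.lower \ G) (fun y => P.up y ∩ S) ψ
  have hgain : Q.biUnion (fun y => P.up y ∩ S) = Q.biUnion P.up ∩ S := (biUnion_inter Q P.up S).symm
  have hdisjoint : ∀ x ∈ P.filled G, x ∉ Q.biUnion P.up := fun x hx hxQ => by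
    obtain ⟨y, hyQ, hxy⟩ := mem_biUnion.1 hxQ
    obtain ⟨hy, hyG⟩ := mem_sdiff.1 (hQ hyQ)
    exact hyG (down_subset_of_mem_filled hx
      ((P.mem_down_iff x (filled_subset_upper G hx) y hy).2 hxy))
  rw [hgain] at hcard
  refine ⟨Q, hQ.trans sdiff_subset, hcard.trans (card_le_card fun x hx => ?_),
    fun x hx => mem_sdiff.2 ⟨hS hx, hdisjoint x hx⟩, fun y hy => ?_⟩
  · obtain ⟨hxQ, hxS⟩ := mem_inter.1 hx
    exact mem_sdiff.2 ⟨hxS, fun hxG => hdisjoint x hxG hxQ⟩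
  · have hrest : P.up y ∩ (S \ Q.biUnion P.up) = (P.up y ∩ S) \ Q.biUnion fun y => P.up y ∩ S := by
      rw [hgain]
      ext x
      simp only [mem_sdiff, mem_inter]
      tauto
    exact hrest ▸ hgreedy y hy

theorem exists_isFingerprint (ψ : ℕ) (T G : Finset α) : ∃ z, P.IsFingerprint ψ T G z := by
  obtain ⟨R, hR, hcardR, hcore, hnear⟩ :=
    exists_seeds (P := P) (revealed_subset (T := T) (G := G)) ψ
  obtain ⟨Q, hQ, hcardQ, hfilled, hup⟩ := exists_excluded hnear ψ
  exact ⟨⟨G ∩ T, P.unfilledCofaces G T, R, Q⟩,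
    rfl, rfl, hR, hQ, hcardR, hcardQ, hcore, hfilled, hup⟩

theorem unfilledCofaces_subset_upper (hG : G ⊆ P.lower) : P.unfilledCofaces G T ⊆ P.upper :=
  sdiff_subset.trans (biUnion_subset.2 fun y hy => P.up_subset y (hG (mem_inter.1 hy).1))

theorem card_nearlyFilled_sdiff_filled_le (hG : G ⊆ P.lower) {F : Finset α} (hF : F ⊆ G) (ψ : ℕ) :
    (P.downDeg - ψ) * #(P.nearlyFilled ψ F \ P.filled G) ≤ P.openIncidences G := by
  have hupper : P.nearlyFilled ψ F \ P.filled G ⊆ P.upper :=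
    sdiff_subset.trans (filter_subset _ _)
  calc _ = ∑ _x ∈ P.nearlyFilled ψ F \ P.filled G, (P.downDeg - ψ) := by
        rw [sum_const, smul_eq_mul, mul_comm]
    _ ≤ ∑ x ∈ P.nearlyFilled ψ F \ P.filled G, #(P.down x ∩ G) := sum_le_sum fun x hx => by
        obtain ⟨hxU, hxF⟩ := mem_filter.1 (mem_sdiff.1 hx).1
        have := card_sdiff_add_card_inter (P.down x) F
        have := card_le_card (inter_subset_inter_left hF : P.down x ∩ F ⊆ P.down x ∩ G)
        have := P.card_down x hxU
        omega
    _ = ∑ y ∈ G, #(P.up y ∩ (P.nearlyFilled ψ F \ P.filled G)) := (sum_card_up_inter hupper hG).symm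
    _ ≤ P.openIncidences G := sum_le_sum fun y _ => card_le_card fun x hx => by
        simp only [mem_inter, mem_sdiff] at hx ⊢
        tauto

namespace IsFingerprint

variable {z : Fingerprint α}

theorem approx_subset (hz : P.IsFingerprint ψ T G z) : P.approx ψ z ⊆ G := by
  refine union_subset hz.core_subset fun y hy => ?_
  obtain ⟨hyL, hlarge⟩ := mem_filter.1 hy
  by_contra hyG
  exact (hz.card_up_inter_le y (mem_sdiff.2 ⟨hyL, hyG⟩)).not_gt hlarge

theorem sum_card_down_sdiff_le (hz : P.IsFingerprint ψ T G z) :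
    ∑ x ∈ P.container ψ z, #(P.down x \ G) ≤
      ψ * #(P.nearlyFilled ψ (P.core z) \ P.filled G) := by
  have hunfilled : ∑ x ∈ P.container ψ z \ P.filled G, #(P.down x \ G) =
      ∑ x ∈ P.container ψ z, #(P.down x \ G) := by
    refine sum_subset sdiff_subset fun x hx hxG => ?_
    have hxG : x ∈ P.filled G := by simpa [hx] using hxG
    simp [sdiff_eq_empty_iff_subset.2 (down_subset_of_mem_filled hxG)]
  have hnear : P.container ψ z \ P.filled G ⊆ P.nearlyFilled ψ (P.core z) \ P.filled G :=
    sdiff_subset_sdiff sdiff_subset le_rfl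
  calc ∑ x ∈ P.container ψ z, #(P.down x \ G)
      ≤ ∑ x ∈ P.nearlyFilled ψ (P.core z) \ P.filled G, #(P.down x \ G) :=
        hunfilled ▸ sum_le_sum_of_subset hnear
    _ ≤ ∑ _x ∈ P.nearlyFilled ψ (P.core z) \ P.filled G, ψ := sum_le_sum fun x hx =>
        (card_le_card (sdiff_subset_sdiff le_rfl hz.core_subset)).trans
          (mem_filter.1 (mem_sdiff.1 hx).1).2
    _ = ψ * #(P.nearlyFilled ψ (P.core z) \ P.filled G) := by
        rw [sum_const, smul_eq_mul, mul_comm]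

theorem downDeg_mul_card_container_le (hz : P.IsFingerprint ψ T G z) (hG : G ⊆ P.lower) :
    P.downDeg * #(P.container ψ z) ≤ P.upDeg * #(P.approx ψ z) + ψ * #(G \ P.approx ψ z) +
      ψ * #(P.nearlyFilled ψ (P.core z) \ P.filled G) := by
  have hupper : P.container ψ z ⊆ P.upper := sdiff_subset.trans (filter_subset _ _)
  have happrox : ∑ x ∈ P.container ψ z, #(P.down x ∩ P.approx ψ z) ≤
      P.upDeg * #(P.approx ψ z) := by
    rw [← sum_card_up_inter hupper (hz.approx_subset.trans hG), mul_comm, ← smul_eq_mul]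
    refine sum_le_card_nsmul _ _ _ fun y hy => ?_
    rw [← P.card_up y (hG (hz.approx_subset hy))]
    exact card_le_card inter_subset_left
  have hmissed : ∑ x ∈ P.container ψ z, #(P.down x ∩ (G \ P.approx ψ z)) ≤
      ψ * #(G \ P.approx ψ z) := by
    rw [← sum_card_up_inter hupper (sdiff_subset.trans hG), mul_comm, ← smul_eq_mul]
    refine sum_le_card_nsmul _ _ _ fun y hy => ?_
    obtain ⟨hyG, hy⟩ := mem_sdiff.1 hy
    by_contra! hlarge
    exact hy (mem_union_right _ (mem_filter.2 ⟨hG hyG, hlarge⟩))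
  have hsplit : ∀ x ∈ P.container ψ z, P.downDeg =
      #(P.down x ∩ P.approx ψ z) + #(P.down x ∩ (G \ P.approx ψ z)) + #(P.down x \ G) := by
    intro x hx
    rw [← P.card_down x (hupper hx), ← card_sdiff_add_card_inter (P.down x) G,
      ← card_sdiff_add_card_inter (P.down x ∩ G) (P.approx ψ z), inter_assoc,
      inter_eq_right.2 hz.approx_subset, inter_sdiff_assoc]
    ring
  rw [mul_comm, ← smul_eq_mul, ← sum_const, sum_congr rfl hsplit, sum_add_distrib, sum_add_distrib]
  exact add_le_add (add_le_add happrox hmissed) hz.sum_card_down_sdiff_le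

end IsFingerprint

end LayerPair

namespace Fingerprint

variable {α : Type*}

/-- The number of elements recorded in a fingerprint. -/
def size (z : Fingerprint α) : ℕ := #z.sample + #z.unfilled + #z.seeds + #z.excluded

/-- The tuple of sets recorded for an encoded set: its fingerprint and a set of corrections. -/
def codeWord (z : Fingerprint α) (extra : Finset α) : Fin 5 → Finset α :=
  ![z.sample, z.unfilled, z.seeds, z.excluded, extra]

theorem sum_card_codeWord (z : Fingerprint α) (extra : Finset α) :
    ∑ t, #(z.codeWord extra t) = z.size + #extra := by
  simp [Fin.sum_univ_five, codeWord, size]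

theorem codeWord_inj {z z' : Fingerprint α} {extra extra' : Finset α} :
    z.codeWord extra = z'.codeWord extra' ↔ z = z' ∧ extra = extra' := by
  simp [codeWord, Fingerprint.ext_iff, and_assoc]

end Fingerprint

/-- Numerical conditions under which the container lemma saves a factor `1 - 1 / (2 * a)`, for
layers with `a` facets and `b` cofaces per element. Here `p` is the sampling rate, `lam` the cost
(in nats) of recording one element, `ψ` the degree threshold and `r` a lower bound for the number of
elements that can reveal a typical element. -/
structure ContainerParams (a b : ℕ) (p lam : ℝ) (ψ r : ℕ) : Prop where
  p_nonneg : 0 ≤ p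
  p_le_one : p ≤ 1
  one_le_lam : 1 ≤ lam
  ψ_pos : 0 < ψ
  b_lt_a : b < a
  a_le : a ≤ 4 * b
  ψ_le : 8 * ψ ≤ a
  r_le : 2 * r ≤ b * (a - 1)
  sampling_cost_le : a * lam * p + a * lam * (1 - p) ^ r / ψ ≤ 1 / 4
  overhead_le : a * lam * p + 10 * lam / ψ + 2 * ψ / a ≤ 1 / (64 * lam)

theorem log_two_gt_d2 : 0.69 < Real.log 2 := by linarith [Real.log_two_gt_d9]

theorem log_two_lt_d1 : Real.log 2 < 0.7 := by linarith [Real.log_two_lt_d9]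

namespace ContainerParams

variable {a b ψ r : ℕ} {p lam : ℝ}

theorem a_pos (h : ContainerParams a b p lam ψ r) : (0 : ℝ) < a := by
  exact_mod_cast h.b_lt_a.pos

theorem lam_pos (h : ContainerParams a b p lam ψ r) : 0 < lam := by linarith [h.one_le_lam]

theorem overhead_mul_le_one (h : ContainerParams a b p lam ψ r) :
    (lam * p + 10 * lam / (ψ * a) + 2 * ψ / a ^ 2) * (64 * lam * a) ≤ 1 := by
  have ha := h.a_pos
  have hlam := h.lam_pos
  have hψ : (0 : ℝ) < ψ := by exact_mod_cast h.ψ_pos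
  have := h.overhead_le
  rw [le_div_iff₀ (by positivity)] at this
  refine le_of_eq_of_le ?_ this
  field_simp

theorem overhead_le_half_log_two_div (h : ContainerParams a b p lam ψ r) :
    lam * p + 10 * lam / (ψ * a) ≤ Real.log 2 / (2 * a) := by
  have ha := h.a_pos
  have hp := h.p_nonneg
  have hlam := h.lam_pos
  have : (lam * p + 10 * lam / (ψ * a)) * (64 * a) ≤ 1 := by
    refine le_trans ?_ h.overhead_mul_le_one
    have := h.one_le_lam
    refine mul_le_mul (le_add_of_nonneg_right (by positivity)) ?_ (by positivity) (by positivity)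
    nlinarith
  rw [le_div_iff₀ (by positivity)]
  linarith [log_two_gt_d2]

theorem sampling_cost_le_div (h : ContainerParams a b p lam ψ r) :
    lam * p + lam / ψ * (1 - p) ^ r ≤ Real.log 2 / (2 * a) := by
  have ha := h.a_pos
  rw [le_div_iff₀ (by positivity)]
  have : (lam * p + lam / ψ * (1 - p) ^ r) * (2 * a) =
    2 * (a * lam * p + a * lam * (1 - p) ^ r / ψ) := by ring
  linarith [h.sampling_cost_le, log_two_gt_d2]

-- The two cases of the container lemma. `t` counts the elements missed by the approximation: if
-- they are few, recording them determines `G` exactly; if they are many, the container is small.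
theorem exact_cost_le (h : ContainerParams a b p lam ψ r) {g e t c cost : ℝ} (he : 0 ≤ e)
    (hfew : lam * t * (2 * a) ≤ Real.log 2 * e) (hc : c ≤ (1 - 1 / a) * g - e / a)
    (hcost : cost ≤ Real.log 2 / (2 * a) * g + (lam * p + 10 * lam / (ψ * a)) * e) :
    cost + lam * t + Real.log 2 * c ≤ Real.log 2 * (1 - 1 / (2 * a)) * g := by
  have ha := h.a_pos
  have hmissed : lam * t ≤ Real.log 2 * e / (2 * a) := by
    rw [le_div_iff₀ (by positivity)]
    exact hfew
  have hover := mul_le_mul_of_nonneg_right h.overhead_le_half_log_two_div he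
  have hfilled := mul_le_mul_of_nonneg_left hc (Real.log_nonneg one_le_two)
  have hsum : Real.log 2 / (2 * a) * g + Real.log 2 / (2 * a) * e + Real.log 2 * e / (2 * a) +
      Real.log 2 * ((1 - 1 / a) * g - e / a) = Real.log 2 * (1 - 1 / (2 * a)) * g := by
    field_simp
    ring
  linarith

theorem container_cost_le (h : ContainerParams a b p lam ψ r) {g e t s cost : ℝ} (he : 0 ≤ e)
    (hmany : Real.log 2 * e ≤ lam * t * (2 * a))
    (hs : s ≤ (1 - 1 / a) * g - t / 8 + 2 * ψ / a ^ 2 * e)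
    (hcost : cost ≤ Real.log 2 / (2 * a) * g + (lam * p + 10 * lam / (ψ * a)) * e) :
    cost + Real.log 2 * s ≤ Real.log 2 * (1 - 1 / (2 * a)) * g := by
  have ha := h.a_pos
  have hlam := h.lam_pos
  have hlog := log_two_gt_d2
  have hover : (lam * p + 10 * lam / (ψ * a) + 2 * ψ / a ^ 2) * e ≤ Real.log 2 * (t / 8) := by
    refine le_of_mul_le_mul_right (a := 64 * lam * a) ?_ (by positivity)
    have hsquare : e ≤ 4 * Real.log 2 * (Real.log 2 * e) := by
      have : 1 ≤ 4 * Real.log 2 * Real.log 2 := by nlinarith only [hlog]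
      nlinarith
    calc _ = (lam * p + 10 * lam / (ψ * a) + 2 * ψ / a ^ 2) * (64 * lam * a) * e := by ring
      _ ≤ 1 * e := mul_le_mul_of_nonneg_right h.overhead_mul_le_one he
      _ ≤ 4 * Real.log 2 * (lam * t * (2 * a)) := by nlinarith
      _ = Real.log 2 * (t / 8) * (64 * lam * a) := by ring
  have hcontainer := mul_le_mul_of_nonneg_left hs (Real.log_nonneg one_le_two)
  have hloss : Real.log 2 * (2 * ψ / a ^ 2 * e) ≤ 2 * ψ / a ^ 2 * e :=
    mul_le_of_le_one_left (by positivity) (by linarith [log_two_lt_d1])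
  have hsum : Real.log 2 / (2 * a) * g + Real.log 2 * ((1 - 1 / a) * g) =
      Real.log 2 * (1 - 1 / (2 * a)) * g := by
    field_simp
    ring
  linarith

end ContainerParams

namespace LayerPair

variable {α ι : Type*} [DecidableEq α] {P : LayerPair α} {ψ r : ℕ} {p lam : ℝ}

theorem card_filled_le (h : ContainerParams P.downDeg P.upDeg p lam ψ r) {G : Finset α}
    (hG : G ⊆ P.lower) :
    (#(P.filled G) : ℝ) ≤ (1 - 1 / P.downDeg) * #G - P.openIncidences G / P.downDeg := by
  have ha := h.a_pos
  have hcount : (P.upDeg : ℝ) * #G = P.downDeg * #(P.filled G) + P.openIncidences G := by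
    exact_mod_cast upDeg_mul_card hG
  have hdeg : (P.upDeg : ℝ) + 1 ≤ P.downDeg := by exact_mod_cast h.b_lt_a
  rw [show (1 - 1 / (P.downDeg : ℝ)) * #G - P.openIncidences G / P.downDeg =
    ((P.downDeg - 1) * #G - P.openIncidences G) / P.downDeg by field_simp, le_div_iff₀ ha]
  nlinarith

theorem card_nearlyFilled_sdiff_filled_le_div (h : ContainerParams P.downDeg P.upDeg p lam ψ r)
    {G F : Finset α} (hG : G ⊆ P.lower) (hF : F ⊆ G) :
    (#(P.nearlyFilled ψ F \ P.filled G) : ℝ) ≤ 2 * P.openIncidences G / P.downDeg := by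
  have hhalf : P.downDeg ≤ 2 * (P.downDeg - ψ) := by have := h.ψ_le; omega
  have hcount := card_nearlyFilled_sdiff_filled_le hG hF ψ
  have : P.downDeg * #(P.nearlyFilled ψ F \ P.filled G) ≤ 2 * P.openIncidences G := by nlinarith
  rw [le_div_iff₀ h.a_pos, mul_comm]
  exact_mod_cast this

namespace IsFingerprint

variable {T G : Finset α} {z : Fingerprint α}

theorem card_container_le (hz : P.IsFingerprint ψ T G z) (hG : G ⊆ P.lower)
    (h : ContainerParams P.downDeg P.upDeg p lam ψ r) :
    (#(P.container ψ z) : ℝ) ≤ (1 - 1 / P.downDeg) * #G - #(G \ P.approx ψ z) / 8 +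
      2 * ψ / P.downDeg ^ 2 * P.openIncidences G := by
  have ha := h.a_pos
  have hnear := card_nearlyFilled_sdiff_filled_le_div h hG hz.core_subset
  have happrox : (#(P.approx ψ z) : ℝ) = #G - #(G \ P.approx ψ z) := by
    rw [← card_sdiff_add_card_eq_card hz.approx_subset]
    push_cast
    ring
  have hcount : (P.downDeg : ℝ) * #(P.container ψ z) ≤ P.upDeg * #(P.approx ψ z) +
      ψ * #(G \ P.approx ψ z) + ψ * #(P.nearlyFilled ψ (P.core z) \ P.filled G) := by
    exact_mod_cast hz.downDeg_mul_card_container_le hG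
  have hdeg : (P.upDeg : ℝ) + 1 ≤ P.downDeg := by exact_mod_cast h.b_lt_a
  have hdeg' : (P.downDeg : ℝ) ≤ 4 * P.upDeg := by exact_mod_cast h.a_le
  have hψ : (8 * ψ : ℝ) ≤ P.downDeg := by exact_mod_cast h.ψ_le
  have hnear' := mul_le_mul_of_nonneg_left hnear (Nat.cast_nonneg (α := ℝ) ψ)
  rw [show (1 - 1 / (P.downDeg : ℝ)) * #G - #(G \ P.approx ψ z) / 8 +
      2 * ψ / P.downDeg ^ 2 * P.openIncidences G = ((P.downDeg - 1) * #G -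
      P.downDeg / 8 * #(G \ P.approx ψ z) + ψ * (2 * P.openIncidences G / P.downDeg)) / P.downDeg
    by field_simp, le_div_iff₀ ha]
  rw [happrox] at hcount
  nlinarith

theorem size_cost_le (hz : P.IsFingerprint ψ T G z) (hG : G ⊆ P.lower)
    (h : ContainerParams P.downDeg P.upDeg p lam ψ r) :
    lam * z.size ≤ lam * #(G ∩ T) + lam * #(P.unfilledCofaces G T) +
      lam / ψ * #(G \ P.revealed (G ∩ T) (P.unfilledCofaces G T)) +
      lam / ψ * (2 * P.openIncidences G / P.downDeg) := by
  have hlam := h.lam_pos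
  have hψ : (0 : ℝ) < ψ := by exact_mod_cast h.ψ_pos
  have hseeds : (ψ * #z.seeds : ℝ) ≤ #(G \ P.revealed (G ∩ T) (P.unfilledCofaces G T)) := by
    exact_mod_cast hz.card_seeds_le
  have hexcluded : (ψ * #z.excluded : ℝ) ≤ 2 * P.openIncidences G / P.downDeg :=
    le_trans (by exact_mod_cast hz.card_excluded_le)
      (card_nearlyFilled_sdiff_filled_le_div h hG hz.core_subset)
  have hscale : ∀ u : ℝ, lam * u = lam / ψ * (ψ * u) := fun u => by field_simp
  have := mul_le_mul_of_nonneg_left hseeds (by positivity : 0 ≤ lam / ψ)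
  have := mul_le_mul_of_nonneg_left hexcluded (by positivity : 0 ≤ lam / ψ)
  simp only [Fingerprint.size, hz.sample_eq, hz.unfilled_eq]
  push_cast
  linarith [hscale #z.seeds, hscale #z.excluded]

end IsFingerprint

theorem exists_sample_size_cost_le (h : ContainerParams P.downDeg P.upDeg p lam ψ r)
    {Ω : Finset ι} {G : ι → Finset α} (hG : ∀ i ∈ Ω, G i ⊆ P.lower) :
    ∃ T, ∀ z : ι → Fingerprint α, (∀ i ∈ Ω, P.IsFingerprint ψ T (G i) (z i)) →
      ∑ i ∈ Ω, lam * ((z i).size : ℝ) ≤ Real.log 2 / (2 * P.downDeg) * ∑ i ∈ Ω, (#(G i) : ℝ) +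
        (lam * p + 10 * lam / (ψ * P.downDeg)) * ∑ i ∈ Ω, (P.openIncidences (G i) : ℝ) := by
  have ha := h.a_pos
  have hlam := h.lam_pos
  have hdeg : 0 < P.upDeg := by have := h.b_lt_a; have := h.a_le; omega
  obtain ⟨T, hT⟩ := exists_sample hG hlam.le (by positivity : 0 ≤ lam / ψ) h.p_nonneg h.p_le_one
    hdeg h.r_le
  refine ⟨T, fun z hz => (sum_le_sum fun i hi => (hz i hi).size_cost_le (hG i hi) h).trans ?_⟩
  rw [sum_add_distrib]
  refine (add_le_add_left hT _).trans ?_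
  rw [mul_sum, mul_sum, ← sum_add_distrib]
  rw [← sum_add_distrib]
  refine sum_le_sum fun i _ => ?_
  have hratio : 2 / (P.upDeg : ℝ) ≤ 8 / P.downDeg := by
    rw [div_le_div_iff₀ (by positivity) ha]
    have : (P.downDeg : ℝ) ≤ 4 * P.upDeg := by exact_mod_cast h.a_le
    linarith
  have hopen := mul_le_mul_of_nonneg_left
    (mul_le_mul_of_nonneg_right hratio (Nat.cast_nonneg (α := ℝ) (P.openIncidences (G i))))
    (by positivity : 0 ≤ lam / ψ)
  have hsampling := mul_le_mul_of_nonneg_right h.sampling_cost_le_div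
    (Nat.cast_nonneg (α := ℝ) #(G i))
  have hsum : lam / ψ * (8 / P.downDeg * P.openIncidences (G i)) +
      lam / ψ * (2 * P.openIncidences (G i) / P.downDeg) =
      10 * lam / (ψ * P.downDeg) * P.openIncidences (G i) := by
    ring
  linarith

theorem IsFingerprint.codeWord_subset {T G extra : Finset α} {z : Fingerprint α}
    (hz : P.IsFingerprint ψ T G z) (hG : G ⊆ P.lower) (hextra : extra ⊆ P.lower) (t : Fin 5) :
    z.codeWord extra t ⊆ P.upper ∪ P.lower := by
  have hlower {B : Finset α} (hB : B ⊆ P.lower) : B ⊆ P.upper ∪ P.lower :=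
    hB.trans subset_union_right
  have hupper {B : Finset α} (hB : B ⊆ P.upper) : B ⊆ P.upper ∪ P.lower :=
    hB.trans subset_union_left
  fin_cases t
  · exact hlower (hz.sample_eq.subset.trans (inter_subset_left.trans hG))
  · exact hupper (hz.unfilled_eq.subset.trans (unfilledCofaces_subset_upper hG))
  · exact hupper (hz.seeds_subset.trans (filled_subset_upper G))
  · exact hlower hz.excluded_subset
  · exact hlower hextra

-- If the approximations miss few elements in total, record the missed ones, which makes `G` itself
-- decodable; otherwise the containers are small enough on their own.
theorem exists_container_code (h : ContainerParams P.downDeg P.upDeg p lam ψ r) {Ω : Finset ι}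
    {G : ι → Finset α} (hG : ∀ i ∈ Ω, G i ⊆ P.lower) :
    ∃ (code : Finset α → Fin 5 → Finset α) (S : Finset α → Finset α),
      (∀ B ⊆ P.lower, ∀ t, code B t ⊆ P.upper ∪ P.lower) ∧
      (∀ B ⊆ P.lower, P.filled B ⊆ S B) ∧
      (∀ B ⊆ P.lower, ∀ B' ⊆ P.lower, code B = code B' → S B = S B') ∧
      ∑ i ∈ Ω, (lam * (∑ t, #(code (G i) t) : ℕ) + Real.log 2 * #(S (G i))) ≤
        Real.log 2 * (1 - 1 / (2 * P.downDeg)) * ∑ i ∈ Ω, (#(G i) : ℝ) := by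
  obtain ⟨T, hT⟩ := exists_sample_size_cost_le h hG
  choose z hz using fun B => exists_isFingerprint (P := P) ψ T B
  have hcost := hT (fun i => z (G i)) fun i _ => hz (G i)
  let missed B := B \ P.approx ψ (z B)
  have he : 0 ≤ ∑ i ∈ Ω, (P.openIncidences (G i) : ℝ) := by positivity
  rcases le_total (lam * (∑ i ∈ Ω, (#(missed (G i)) : ℝ)) * (2 * P.downDeg))
    (Real.log 2 * ∑ i ∈ Ω, (P.openIncidences (G i) : ℝ)) with hfew | hmany
  · refine ⟨fun B => (z B).codeWord (missed B), P.filled,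
      fun B hB => (hz B).codeWord_subset hB (sdiff_subset.trans hB), fun _ _ => le_rfl,
      fun B _ B' _ heq => ?_, ?_⟩
    · obtain ⟨hzeq, hmissed⟩ := Fingerprint.codeWord_inj.1 heq
      rw [← sdiff_union_of_subset (hz B).approx_subset,
        ← sdiff_union_of_subset (hz B').approx_subset]
      exact congrArg₂ (fun u v => P.filled (u ∪ P.approx ψ v)) hmissed hzeq
    · have hfilled := sum_le_sum fun i hi => card_filled_le h (hG i hi)
      rw [sum_sub_distrib, ← mul_sum, ← sum_div] at hfilled
      refine le_of_eq_of_le ?_ (h.exact_cost_le he hfew hfilled hcost)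
      simp only [Fingerprint.sum_card_codeWord, Nat.cast_add, mul_add, sum_add_distrib, mul_sum]
  · refine ⟨fun B => (z B).codeWord ∅, fun B => P.container ψ (z B),
      fun B hB => (hz B).codeWord_subset hB (empty_subset _), fun B _ => (hz B).filled_subset,
      fun B _ B' _ heq => congrArg (P.container ψ) (Fingerprint.codeWord_inj.1 heq).1, ?_⟩
    have hcontainer := sum_le_sum fun i hi => (hz (G i)).card_container_le (hG i hi) h
    rw [sum_add_distrib, sum_sub_distrib, ← mul_sum, ← mul_sum, ← sum_div] at hcontainer
    refine le_of_eq_of_le ?_ (h.container_cost_le he hmany hcontainer hcost)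
    simp only [Fingerprint.sum_card_codeWord, card_empty, add_zero, sum_add_distrib, mul_sum]

end LayerPair

/-! ### Codes for the part of a complex above a given level -/

universe u

/-- The `j`-element subsets of `V`. -/
def layer (V : Type*) [Fintype V] (j : ℕ) : Finset (Finset V) := powersetCard j univ

/-- The `j`-element sets contained in a member of `D`. -/
def shadowAt {V : Type*} [DecidableEq V] (j : ℕ) (D : Finset (Finset V)) : Finset (Finset V) :=
  D.biUnion (powersetCard j)

/-- The members of `D` with more than `j` elements. -/
def above {V : Type*} (j : ℕ) (D : Finset (Finset V)) : Finset (Finset V) := {x ∈ D | j < #x}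

/-- Families of sets of size larger than `j` that are closed under subsets of size larger than `j`,
i.e. the possible parts above level `j` of a simplicial complex. -/
def truncatedComplexes (V : Type*) [Fintype V] [DecidableEq V] (j : ℕ) :
    Finset (Finset (Finset V)) :=
  {D | ∀ x ∈ D, j < #x ∧ ∀ y ⊆ x, j < #y → y ∈ D}

section Basic

variable {V : Type*} {j : ℕ} {D : Finset (Finset V)} {x y : Finset V}

theorem mem_layer [Fintype V] : x ∈ layer V j ↔ #x = j := by
  simp [layer]

theorem card_layer (V : Type*) [Fintype V] (j : ℕ) : #(layer V j) = (Fintype.card V).choose j := by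
  simp [layer]

theorem mem_above : x ∈ above j D ↔ x ∈ D ∧ j < #x := mem_filter

variable [DecidableEq V]

theorem mem_shadowAt : y ∈ shadowAt j D ↔ #y = j ∧ ∃ x ∈ D, y ⊆ x := by
  simp only [shadowAt, mem_biUnion, mem_powersetCard]
  tauto

variable [Fintype V]

theorem shadowAt_subset_layer (j : ℕ) (D : Finset (Finset V)) : shadowAt j D ⊆ layer V j :=
  fun _ hy => mem_layer.2 (mem_shadowAt.1 hy).1

theorem mem_truncatedComplexes :
    D ∈ truncatedComplexes V j ↔ ∀ x ∈ D, j < #x ∧ ∀ y ⊆ x, j < #y → y ∈ D := by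
  simp [truncatedComplexes]

theorem above_succ_mem (hD : D ∈ truncatedComplexes V j) :
    above (j + 1) D ∈ truncatedComplexes V (j + 1) := by
  rw [mem_truncatedComplexes] at hD ⊢
  intro x hx
  obtain ⟨hxD, hjx⟩ := mem_above.1 hx
  exact ⟨hjx, fun y hyx hjy => mem_above.2 ⟨(hD x hxD).2 y hyx (by omega), hjy⟩⟩

theorem slice_union_above (hD : D ∈ truncatedComplexes V j) :
    D.slice (j + 1) ∪ above (j + 1) D = D := by
  ext x
  have := mem_truncatedComplexes.1 hD x
  grind [mem_slice, mem_above]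

theorem shadowAt_above_subset_slice (hD : D ∈ truncatedComplexes V j) :
    shadowAt (j + 1) (above (j + 1) D) ⊆ D.slice (j + 1) := by
  intro y hy
  obtain ⟨hcard, x, hx, hyx⟩ := mem_shadowAt.1 hy
  exact mem_slice.2
    ⟨(mem_truncatedComplexes.1 hD x (mem_above.1 hx).1).2 y hyx (by omega), hcard⟩

/-- The layers `j + 1` and `j` of the Boolean lattice. -/
def subsetLayers (V : Type*) [Fintype V] [DecidableEq V] (j : ℕ) : LayerPair (Finset V) where
  upper := layer V (j + 1)
  lower := layer V j
  down x := powersetCard j x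
  up y := yᶜ.image fun i => insert i y
  downDeg := j + 1
  upDeg := Fintype.card V - j
  down_subset _ _ _ hy := mem_layer.2 (mem_powersetCard.1 hy).2
  up_subset y hy x hx := by
    obtain ⟨i, hi, rfl⟩ := mem_image.1 hx
    rw [mem_layer, card_insert_of_notMem (mem_compl.1 hi), mem_layer.1 hy]
  card_down x hx := by rw [card_powersetCard, mem_layer.1 hx, Nat.choose_succ_self_right]
  card_up y hy := by
    rw [card_image_of_injOn (by simpa using insert_inj_on y), card_compl, mem_layer.1 hy]
  mem_down_iff x hx y hy := by
    rw [mem_layer] at hx hy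
    have hcover : x ∈ yᶜ.image (fun i => insert i y) ↔ y ⋖ x := by
      simp [covBy_iff_exists_insert]
    rw [hcover, mem_powersetCard, covBy_iff_card_sdiff_eq_one]
    refine and_congr_right fun hyx => ?_
    have := card_sdiff_add_card_eq_card hyx
    omega
  eq_of_mem_down y hy x hx x' hx' hne z hz hz' := by
    obtain ⟨i, hi, rfl⟩ := mem_image.1 hx
    obtain ⟨i', hi', rfl⟩ := mem_image.1 hx'
    rw [mem_compl] at hi hi'
    rw [mem_powersetCard] at hz hz'
    have hii' : i ≠ i' := fun h => hne (h ▸ rfl)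
    refine eq_of_subset_of_card_le (fun v hv => ?_) (by rw [hz.2, mem_layer.1 hy])
    have := hz.1 hv
    have := hz'.1 hv
    grind

theorem slice_subset_filled_shadowAt (j : ℕ) (D : Finset (Finset V)) :
    D.slice (j + 1) ⊆ (subsetLayers V j).filled (shadowAt j D) := by
  intro x hx
  obtain ⟨hxD, hcard⟩ := mem_slice.1 hx
  exact mem_filter.2 ⟨mem_layer.2 hcard, fun y hy => mem_biUnion.2 ⟨x, hxD, hy⟩⟩

end Basic

/-- A positive sub-probability weight on `𝒟`; by Kraft's inequality `-log w` is the length, in nats,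
of a code for the elements of `𝒟`. -/
structure IsCodeWeight {β : Type*} (𝒟 : Finset β) (w : β → ℝ) : Prop where
  pos : ∀ D ∈ 𝒟, 0 < w D
  sum_le_one : ∑ D ∈ 𝒟, w D ≤ 1

/-- Every finite family of truncated complexes has a code whose average length is, up to `err`, a
fraction `1 - 1 / (2 * (j + 1))` of the average number of bits available in the shadow. -/
def HasShortCodes (V : Type u) [Fintype V] [DecidableEq V] (j : ℕ) (err : ℝ) : Prop :=
  ∀ ⦃ι : Type u⦄ (Ω : Finset ι) (D : ι → Finset (Finset V)),
    (∀ i ∈ Ω, D i ∈ truncatedComplexes V j) →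
      ∃ w, IsCodeWeight (truncatedComplexes V j) w ∧
        ∑ i ∈ Ω, -Real.log (w (D i)) ≤
          Real.log 2 * (1 - 1 / (2 * (j + 1 : ℕ))) * ∑ i ∈ Ω, (#(shadowAt j (D i)) : ℝ) +
            #Ω * err

/-- The weight of `D` when it is described by the code word of its shadow, paying a factor `θ` for
each element, then the part above level `j + 1`, weighted by `w`, and finally one bit for each
element of the container `S` that is not forced to be a face by the part above. -/
def containerWeight {V : Type*} [DecidableEq V]
    (code : Finset (Finset V) → Fin 5 → Finset (Finset V))
    (S : Finset (Finset V) → Finset (Finset V)) (w : Finset (Finset V) → ℝ) (θ : ℝ) (j : ℕ)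
    (D : Finset (Finset V)) : ℝ :=
  θ ^ (∑ t, #(code (shadowAt j D) t)) * (w (above (j + 1) D) *
    (1 / 2) ^ (#(S (shadowAt j D)) - #(shadowAt (j + 1) (above (j + 1) D))))

section ShortCodes

variable {V : Type u} [Fintype V] [DecidableEq V] {j : ℕ}

theorem truncatedComplexes_subset_powerset :
    truncatedComplexes V j ⊆ (above j (univ : Finset (Finset V))).powerset := fun _ hD =>
  mem_powerset.2 fun x hx => mem_above.2 ⟨mem_univ x, (mem_truncatedComplexes.1 hD x hx).1⟩

theorem one_div_two_mul_succ_le_one (j : ℕ) : 1 / (2 * (j + 1 : ℕ) : ℝ) ≤ 1 := by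
  rw [div_le_one (by positivity)]
  push_cast
  linarith [Nat.cast_nonneg (α := ℝ) j]

theorem log_two_mul_rate_le (j : ℕ) {s : ℝ} (hs : 0 ≤ s) :
    Real.log 2 * (1 - 1 / (2 * (j + 1 : ℕ))) * s ≤ Real.log 2 * s := by
  have : 0 ≤ 1 / (2 * (j + 1 : ℕ) : ℝ) := by positivity
  exact mul_le_mul_of_nonneg_right
    (mul_le_of_le_one_right (Real.log_nonneg one_le_two) (sub_le_self _ this)) hs

theorem hasShortCodes_trivial (V : Type u) [Fintype V] [DecidableEq V] (j : ℕ) :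
    HasShortCodes V j (Real.log 2 * #(above j (univ : Finset (Finset V)))) := by
  intro ι Ω D _
  set M := above j (univ : Finset (Finset V))
  have hcard : (#(truncatedComplexes V j) : ℝ) ≤ 2 ^ #M := by
    exact_mod_cast (card_le_card truncatedComplexes_subset_powerset).trans (card_powerset M).le
  refine ⟨fun _ => (1 / 2) ^ #M, ⟨fun _ _ => by positivity, ?_⟩, ?_⟩
  · calc ∑ _D ∈ truncatedComplexes V j, (1 / 2 : ℝ) ^ #M
        = #(truncatedComplexes V j) * (1 / 2) ^ #M := by rw [sum_const, nsmul_eq_mul]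
      _ ≤ 2 ^ #M * (1 / 2) ^ #M := by gcongr
      _ = 1 := by rw [← mul_pow]; norm_num
  · rw [sum_const, nsmul_eq_mul, Real.log_pow, one_div, Real.log_inv]
    have hrate := sub_nonneg.2 (one_div_two_mul_succ_le_one j)
    have : 0 ≤ Real.log 2 * (1 - 1 / (2 * (j + 1 : ℕ))) * ∑ i ∈ Ω, (#(shadowAt j (D i)) : ℝ) := by
      positivity
    linarith

theorem HasShortCodes.mono {err err' : ℝ} (h : HasShortCodes V j err) (herr : err ≤ err') :
    HasShortCodes V j err' := by
  intro ι Ω D hD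
  obtain ⟨w, hw, hlen⟩ := h Ω D hD
  exact ⟨w, hw, hlen.trans (by gcongr)⟩

-- Given the part `E` above level `j + 1`, only the layer `j + 1` of `D` is undetermined, and it
-- lies between the shadow of `E` and `S`.
theorem card_extensions_le {𝒟 : Finset (Finset (Finset V))} {E S : Finset (Finset V)}
    (h𝒟 : 𝒟 ⊆ truncatedComplexes V j) (hE : ∀ D ∈ 𝒟, above (j + 1) D = E)
    (hS : ∀ D ∈ 𝒟, D.slice (j + 1) ⊆ S) : #𝒟 ≤ 2 ^ (#S - #(shadowAt (j + 1) E)) := by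
  obtain rfl | ⟨D₀, hD₀⟩ := 𝒟.eq_empty_or_nonempty
  · exact Nat.zero_le _
  have hshadow : ∀ D ∈ 𝒟, shadowAt (j + 1) E ⊆ D.slice (j + 1) := fun D hD =>
    hE D hD ▸ shadowAt_above_subset_slice (h𝒟 hD)
  rw [← card_Icc_finset ((hshadow D₀ hD₀).trans (hS D₀ hD₀))]
  refine card_le_card_of_injOn (fun D => D.slice (j + 1))
    (fun D hD => mem_coe.2 (mem_Icc.2 ⟨hshadow D hD, hS D hD⟩)) fun D hD D' hD' heq => ?_
  rw [← slice_union_above (h𝒟 hD), ← slice_union_above (h𝒟 hD'), hE D hD, hE D' hD']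
  exact congrArg (· ∪ E) heq

theorem sum_extension_weight_le_one {w : Finset (Finset V) → ℝ}
    (hw : IsCodeWeight (truncatedComplexes V (j + 1)) w) {𝒟 : Finset (Finset (Finset V))}
    {S : Finset (Finset V)} (h𝒟 : 𝒟 ⊆ truncatedComplexes V j)
    (hS : ∀ D ∈ 𝒟, D.slice (j + 1) ⊆ S) :
    ∑ D ∈ 𝒟, w (above (j + 1) D) *
      (1 / 2) ^ (#S - #(shadowAt (j + 1) (above (j + 1) D))) ≤ 1 := by
  rw [← sum_fiberwise_of_maps_to fun D hD => above_succ_mem (h𝒟 hD)]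
  refine (sum_le_sum fun E hE => ?_).trans hw.sum_le_one
  set d := #S - #(shadowAt (j + 1) E)
  have hcard : (#{D ∈ 𝒟 | above (j + 1) D = E} : ℝ) ≤ 2 ^ d := by
    exact_mod_cast card_extensions_le ((filter_subset _ _).trans h𝒟)
      (fun D hD => (mem_filter.1 hD).2) fun D hD => hS D (mem_filter.1 hD).1
  have hpos := hw.pos E hE
  calc ∑ D ∈ 𝒟 with above (j + 1) D = E,
        w (above (j + 1) D) * (1 / 2) ^ (#S - #(shadowAt (j + 1) (above (j + 1) D)))
      = ∑ D ∈ 𝒟 with above (j + 1) D = E, w E * (1 / 2) ^ d :=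
        sum_congr rfl fun D hD => by rw [(mem_filter.1 hD).2]
    _ = #{D ∈ 𝒟 | above (j + 1) D = E} * (w E * (1 / 2) ^ d) := by rw [sum_const, nsmul_eq_mul]
    _ ≤ 2 ^ d * (w E * (1 / 2) ^ d) := by gcongr
    _ = w E * (2 * (1 / 2)) ^ d := by rw [mul_pow]; ring
    _ = w E := by norm_num

section ContainerWeight

variable {code : Finset (Finset V) → Fin 5 → Finset (Finset V)}
  {S : Finset (Finset V) → Finset (Finset V)} {w : Finset (Finset V) → ℝ}

theorem containerWeight_pos (hw : IsCodeWeight (truncatedComplexes V (j + 1)) w) {θ : ℝ}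
    (hθ : 0 < θ) {D : Finset (Finset V)} (hD : D ∈ truncatedComplexes V j) :
    0 < containerWeight code S w θ j D := by
  have := hw.pos _ (above_succ_mem hD)
  unfold containerWeight
  positivity

theorem sum_containerWeight_le (hw : IsCodeWeight (truncatedComplexes V (j + 1)) w)
    (hcode : ∀ B ⊆ layer V j, ∀ t, code B t ⊆ layer V (j + 1) ∪ layer V j)
    (hS : ∀ B ⊆ layer V j, (subsetLayers V j).filled B ⊆ S B)
    (hdet : ∀ B ⊆ layer V j, ∀ B' ⊆ layer V j, code B = code B' → S B = S B') {θ : ℝ}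
    (hθ : 0 ≤ θ) :
    ∑ D ∈ truncatedComplexes V j, containerWeight code S w θ j D ≤
      Real.exp (5 * (θ * #(layer V (j + 1) ∪ layer V j))) := by
  have hkraft := sum_pow_card_tuple_mul_le_exp (ι := Fin 5) (𝒟 := truncatedComplexes V j)
    (f := fun D => code (shadowAt j D)) (E := layer V (j + 1) ∪ layer V j)
    (fun D _ t => hcode _ (shadowAt_subset_layer j D) t)
    (v := fun D => w (above (j + 1) D) *
      (1 / 2) ^ (#(S (shadowAt j D)) - #(shadowAt (j + 1) (above (j + 1) D)))) ?_ hθ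
  · simpa only [containerWeight, Fintype.card_fin, Nat.cast_ofNat] using hkraft
  intro Z
  obtain hempty | ⟨D₀, hD₀⟩ :=
    {D ∈ truncatedComplexes V j | code (shadowAt j D) = Z}.eq_empty_or_nonempty
  · rw [hempty, sum_empty]
    exact zero_le_one
  have hcontainer : ∀ D ∈ {D ∈ truncatedComplexes V j | code (shadowAt j D) = Z},
      S (shadowAt j D) = S (shadowAt j D₀) := fun D hD =>
    hdet _ (shadowAt_subset_layer j D) _ (shadowAt_subset_layer j D₀)
      ((mem_filter.1 hD).2.trans (mem_filter.1 hD₀).2.symm)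
  rw [sum_congr rfl fun D hD => by rw [hcontainer D hD]]
  refine sum_extension_weight_le_one hw (filter_subset _ _) fun D hD => ?_
  rw [← hcontainer D hD]
  exact (slice_subset_filled_shadowAt j D).trans (hS _ (shadowAt_subset_layer j D))

theorem neg_log_containerWeight (hw : IsCodeWeight (truncatedComplexes V (j + 1)) w)
    (hS : ∀ B ⊆ layer V j, (subsetLayers V j).filled B ⊆ S B) (lam : ℝ)
    {D : Finset (Finset V)} (hD : D ∈ truncatedComplexes V j) :
    -Real.log (containerWeight code S w (Real.exp (-lam)) j D) =
      lam * (∑ t, #(code (shadowAt j D) t) : ℕ) + Real.log 2 * #(S (shadowAt j D)) +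
        -Real.log (w (above (j + 1) D)) -
        Real.log 2 * #(shadowAt (j + 1) (above (j + 1) D)) := by
  have hsub : shadowAt (j + 1) (above (j + 1) D) ⊆ S (shadowAt j D) :=
    ((shadowAt_above_subset_slice hD).trans (slice_subset_filled_shadowAt j D)).trans
      (hS _ (shadowAt_subset_layer j D))
  have hpos := hw.pos _ (above_succ_mem hD)
  rw [containerWeight, Real.log_mul (by positivity) (by positivity),
    Real.log_mul hpos.ne' (by positivity), Real.log_pow, Real.log_exp, Real.log_pow, one_div,
    Real.log_inv, Nat.cast_sub (card_le_card hsub)]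
  ring

end ContainerWeight

theorem card_two_layers_le (V : Type*) [Fintype V] [DecidableEq V] (j : ℕ) :
    (#(layer V (j + 1) ∪ layer V j) : ℝ) ≤
      (Fintype.card V).choose (j + 1) + (Fintype.card V).choose j := by
  rw [← card_layer, ← card_layer]
  exact_mod_cast card_union_le _ _

-- The part above level `j + 1` costs at most `log 2` per element of its shadow, and the container
-- weight does not pay for that shadow again.
theorem HasShortCodes.step {err p lam : ℝ} {ψ r : ℕ} (hcodes : HasShortCodes V (j + 1) err)
    (h : ContainerParams (j + 1) (Fintype.card V - j) p lam ψ r) :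
    HasShortCodes V j (err + 5 * Real.exp (-lam) *
      ((Fintype.card V).choose (j + 1) + (Fintype.card V).choose j)) := by
  intro ι Ω D hD
  obtain ⟨w, hw, hlen⟩ := hcodes Ω (fun i => above (j + 1) (D i))
    fun i hi => above_succ_mem (hD i hi)
  obtain ⟨code, S, hcode, hS, hdet, hcost⟩ := LayerPair.exists_container_code
    (P := subsetLayers V j) h (fun i _ => shadowAt_subset_layer j (D i)) (Ω := Ω)
  set K := 5 * (Real.exp (-lam) * #(layer V (j + 1) ∪ layer V j))
  refine ⟨fun E => containerWeight code S w (Real.exp (-lam)) j E * Real.exp (-K),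
    ⟨fun E hE => mul_pos (containerWeight_pos hw (Real.exp_pos _) hE) (Real.exp_pos _), ?_⟩, ?_⟩
  · rw [← sum_mul, Real.exp_neg K, ← div_eq_mul_inv, div_le_one (Real.exp_pos _)]
    exact sum_containerWeight_le hw hcode hS hdet (Real.exp_pos _).le
  have hlog : ∀ i ∈ Ω, -Real.log (containerWeight code S w (Real.exp (-lam)) j (D i) *
      Real.exp (-K)) = lam * (∑ t, #(code (shadowAt j (D i)) t) : ℕ) +
        Real.log 2 * #(S (shadowAt j (D i))) + -Real.log (w (above (j + 1) (D i))) -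
        Real.log 2 * #(shadowAt (j + 1) (above (j + 1) (D i))) + K := fun i hi => by
    rw [Real.log_mul (containerWeight_pos hw (Real.exp_pos _) (hD i hi)).ne' (Real.exp_ne_zero _),
      neg_add, neg_log_containerWeight hw hS lam (hD i hi), Real.log_exp, neg_neg]
  rw [sum_congr rfl hlog, sum_add_distrib, sum_sub_distrib, sum_add_distrib, ← mul_sum, sum_const,
    nsmul_eq_mul]
  have hshadow := log_two_mul_rate_le (j + 1) (sum_nonneg fun i (_ : i ∈ Ω) =>
    Nat.cast_nonneg (α := ℝ) #(shadowAt (j + 1) (above (j + 1) (D i))))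
  have hK : K ≤ 5 * Real.exp (-lam) *
      ((Fintype.card V).choose (j + 1) + (Fintype.card V).choose j) := by
    rw [mul_assoc]
    exact mul_le_mul_of_nonneg_left
      (mul_le_mul_of_nonneg_left (card_two_layers_le V j) (Real.exp_pos _).le) (by norm_num)
  have hΩK := mul_le_mul_of_nonneg_left hK (Nat.cast_nonneg (α := ℝ) #Ω)
  have hdown : (subsetLayers V j).downDeg = j + 1 := rfl
  rw [hdown] at hcost
  linarith

end ShortCodes

/-! ### The middle layer of a complex -/

section MiddleLayer

variable {n k : ℕ} {Δ Δ' B : Finset (Finset (Fin n))} {x : Finset (Fin n)}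

/-- The Alexander dual, whose faces are the complements of the nonempty non-faces. -/
def alexanderDual (Δ : Finset (Finset (Fin n))) : Finset (Finset (Fin n)) :=
  {x | xᶜ.Nonempty ∧ xᶜ ∉ Δ}

/-- The part of a complex on `2 * k` vertices off the middle layer `k`. The part below the middle
layer is recorded through the Alexander dual, which turns it into a part above. -/
def offMiddle (k : ℕ) (Δ : Finset (Finset (Fin n))) :
    Finset (Finset (Fin n)) × Finset (Finset (Fin n)) :=
  (above k Δ, above k (alexanderDual Δ))

/-- The middle sets that contain a nonempty non-face of smaller size. -/
def forcedOut (k : ℕ) (Δ : Finset (Finset (Fin n))) : Finset (Finset (Fin n)) :=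
  (shadowAt k (above k (alexanderDual Δ))).image compl

/-- The middle sets whose membership in `Δ` is determined by `offMiddle k Δ`. -/
def forced (k : ℕ) (Δ : Finset (Finset (Fin n))) : Finset (Finset (Fin n)) :=
  shadowAt k (above k Δ) ∪ forcedOut k Δ

/-- The middle sets that can be added to or removed from `Δ` independently of each other. -/
def free (k : ℕ) (Δ : Finset (Finset (Fin n))) : Finset (Finset (Fin n)) :=
  layer (Fin n) k \ forced k Δ

/-- The complexes that agree with `Δ` off the middle layer. -/
def fibre (k : ℕ) (Δ : Finset (Finset (Fin n))) : Finset (Finset (Finset (Fin n))) :=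
  {Δ' ∈ allComplexes n | offMiddle k Δ' = offMiddle k Δ}

/-- The complex obtained from `Δ` by replacing its free middle faces by `B`. -/
def refill (k : ℕ) (Δ B : Finset (Finset (Fin n))) : Finset (Finset (Fin n)) :=
  (Δ \ free k Δ) ∪ B

theorem mem_allComplexes : Δ ∈ allComplexes n ↔ IsComplex Δ := by
  simp [allComplexes]

theorem mem_above_alexanderDual :
    x ∈ above k (alexanderDual Δ) ↔ (xᶜ.Nonempty ∧ xᶜ ∉ Δ) ∧ k < #x := by
  simp [mem_above, alexanderDual]

theorem above_mem_truncatedComplexes (hΔ : IsComplex Δ) (k : ℕ) :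
    above k Δ ∈ truncatedComplexes (Fin n) k := by
  refine mem_truncatedComplexes.2 fun x hx => ?_
  obtain ⟨hxΔ, hkx⟩ := mem_above.1 hx
  exact ⟨hkx, fun y hyx hky =>
    mem_above.2 ⟨hΔ.2 x hxΔ y (card_pos.1 (by omega)) hyx, hky⟩⟩

theorem above_alexanderDual_mem_truncatedComplexes (hΔ : IsComplex Δ) (k : ℕ) :
    above k (alexanderDual Δ) ∈ truncatedComplexes (Fin n) k := by
  refine mem_truncatedComplexes.2 fun x hx => ?_
  obtain ⟨⟨hne, hxΔ⟩, hkx⟩ := mem_above_alexanderDual.1 hx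
  refine ⟨hkx, fun y hyx hky => mem_above_alexanderDual.2 ⟨⟨?_, fun hyΔ => hxΔ ?_⟩, hky⟩⟩
  · exact hne.mono (compl_subset_compl.2 hyx)
  · exact hΔ.2 _ hyΔ _ hne (compl_subset_compl.2 hyx)

theorem shadowAt_above_subset (hk : 1 ≤ k) (hΔ : IsComplex Δ) : shadowAt k (above k Δ) ⊆ Δ := by
  intro y hy
  obtain ⟨hcard, x, hx, hyx⟩ := mem_shadowAt.1 hy
  exact hΔ.2 x (mem_above.1 hx).1 y (card_pos.1 (by omega)) hyx

theorem card_of_mem_free (hx : x ∈ free k Δ) : #x = k := mem_layer.1 (mem_sdiff.1 hx).1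

theorem forced_congr (h : offMiddle k Δ' = offMiddle k Δ) : forced k Δ' = forced k Δ := by
  obtain ⟨habove, hdual⟩ := Prod.mk.inj h
  rw [forced, forced, forcedOut, forcedOut, habove, hdual]

theorem free_congr (h : offMiddle k Δ' = offMiddle k Δ) : free k Δ' = free k Δ := by
  rw [free, free, forced_congr h]

theorem mem_refill_iff_of_notMem_free (hB : B ⊆ free k Δ) (hx : x ∉ free k Δ) :
    x ∈ refill k Δ B ↔ x ∈ Δ := by
  have : x ∉ B := fun h => hx (hB h)
  simp [refill, hx, this]

theorem refill_inter_free (hB : B ⊆ free k Δ) : refill k Δ B ∩ free k Δ = B := by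
  rw [refill, union_inter_distrib_right, sdiff_inter_self, empty_union, inter_eq_left.2 hB]

theorem refill_injOn (Δ : Finset (Finset (Fin n))) :
    Set.InjOn (refill k Δ) ((free k Δ).powerset : Set (Finset (Finset (Fin n)))) := by
  intro B hB B' hB' heq
  rw [← refill_inter_free (mem_powerset.1 hB), ← refill_inter_free (mem_powerset.1 hB'), heq]

end MiddleLayer

section TwoSidedCode

variable {k : ℕ} {Δ Δ' B : Finset (Finset (Fin (2 * k)))} {x y : Finset (Fin (2 * k))}

theorem card_compl_add_card_eq (x : Finset (Fin (2 * k))) : #xᶜ + #x = 2 * k := by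
  rw [card_compl_add_card, Fintype.card_fin]

theorem mem_forcedOut :
    y ∈ forcedOut k Δ ↔ #y = k ∧ ∃ z ⊆ y, #z < k ∧ z.Nonempty ∧ z ∉ Δ := by
  have hy := card_compl_add_card_eq y
  rw [forcedOut, mem_image]
  constructor
  · rintro ⟨y, hy', rfl⟩
    obtain ⟨hcard, x, hx, hyx⟩ := mem_shadowAt.1 hy'
    obtain ⟨⟨hne, hxΔ⟩, hkx⟩ := mem_above_alexanderDual.1 hx
    have hxc := card_compl_add_card_eq x
    rw [compl_compl] at hy
    exact ⟨by omega, xᶜ, compl_subset_compl.2 hyx, by omega, hne, hxΔ⟩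
  · rintro ⟨hcard, z, hzy, hzk, hne, hzΔ⟩
    have hz := card_compl_add_card_eq z
    refine ⟨yᶜ, mem_shadowAt.2 ⟨by omega, zᶜ, ?_, compl_subset_compl.2 hzy⟩, compl_compl y⟩
    rw [mem_above_alexanderDual, compl_compl]
    exact ⟨⟨hne, hzΔ⟩, by omega⟩

theorem notMem_of_mem_forcedOut (hΔ : IsComplex Δ) (hy : y ∈ forcedOut k Δ) : y ∉ Δ := by
  obtain ⟨-, z, hzy, -, hne, hzΔ⟩ := mem_forcedOut.1 hy
  exact fun hyΔ => hzΔ (hΔ.2 y hyΔ z hne hzy)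

theorem card_forced (hk : 1 ≤ k) (hΔ : IsComplex Δ) :
    #(forced k Δ) = #(shadowAt k (above k Δ)) + #(shadowAt k (above k (alexanderDual Δ))) := by
  have hdisj : Disjoint (shadowAt k (above k Δ)) (forcedOut k Δ) :=
    disjoint_left.2 fun _ hin hout =>
      notMem_of_mem_forcedOut hΔ hout (shadowAt_above_subset hk hΔ hin)
  rw [forced, card_union_of_disjoint hdisj, forcedOut, card_image_of_injective _ compl_injective]

theorem card_free_add_card_forced (Δ : Finset (Finset (Fin (2 * k)))) :
    #(free k Δ) + #(forced k Δ) = k.centralBinom := by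
  have hsub : forced k Δ ⊆ layer (Fin (2 * k)) k :=
    union_subset (shadowAt_subset_layer k _) fun y hy => mem_layer.2 (mem_forcedOut.1 hy).1
  rw [free, card_sdiff_add_card_eq_card hsub, card_layer, Fintype.card_fin, Nat.centralBinom]

theorem mem_iff_of_offMiddle_eq (hk : 1 ≤ k) (hΔ : IsComplex Δ) (hΔ' : IsComplex Δ')
    (h : offMiddle k Δ' = offMiddle k Δ) (hx : x ∉ free k Δ) : x ∈ Δ' ↔ x ∈ Δ := by
  obtain ⟨habove, hdual⟩ := Prod.mk.inj h
  rcases lt_trichotomy #x k with hlt | heq | hgt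
  · obtain rfl | hne := x.eq_empty_or_nonempty
    · exact iff_of_false (fun hx => not_nonempty_empty (hΔ'.1 _ hx))
        fun hx => not_nonempty_empty (hΔ.1 _ hx)
    · have hmem : xᶜ ∈ above k (alexanderDual Δ') ↔ xᶜ ∈ above k (alexanderDual Δ) := by rw [hdual]
      have hcard : k < #xᶜ := by have := card_compl_add_card_eq x; omega
      simpa only [mem_above_alexanderDual, compl_compl, hne, hcard, true_and, and_true,
        not_iff_not] using hmem
  · have hforced : x ∈ forced k Δ := by
      by_contra hx'
      exact hx (mem_sdiff.2 ⟨mem_layer.2 heq, hx'⟩)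
    rcases mem_union.1 hforced with hin | hout
    · exact iff_of_true (shadowAt_above_subset hk hΔ' (habove ▸ hin))
        (shadowAt_above_subset hk hΔ hin)
    · refine iff_of_false (notMem_of_mem_forcedOut hΔ' ?_) (notMem_of_mem_forcedOut hΔ hout)
      rwa [forcedOut, hdual]
  · have hmem : x ∈ above k Δ' ↔ x ∈ above k Δ := by rw [habove]
    simpa only [mem_above, hgt, and_true] using hmem

theorem isComplex_refill (hk : 1 ≤ k) (hΔ : IsComplex Δ) (hB : B ⊆ free k Δ) :
    IsComplex (refill k Δ B) := by
  refine ⟨fun x hx => ?_, fun x hx y hy hyx => ?_⟩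
  · rcases mem_union.1 hx with hx | hx
    · exact hΔ.1 x (mem_sdiff.1 hx).1
    · exact card_pos.1 (by rw [card_of_mem_free (hB hx)]; omega)
  obtain rfl | hssub := hyx.eq_or_ssubset
  · exact hx
  have hlt := card_lt_card hssub
  rcases mem_union.1 hx with hx | hx
  · have hxΔ := (mem_sdiff.1 hx).1
    have hyfree : y ∉ free k Δ := fun hfree => (mem_sdiff.1 hfree).2 <| mem_union_left _ <|
      mem_shadowAt.2 ⟨card_of_mem_free hfree, x,
        mem_above.2 ⟨hxΔ, (card_of_mem_free hfree).symm.trans_lt hlt⟩, hyx⟩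
    exact (mem_refill_iff_of_notMem_free hB hyfree).2 (hΔ.2 x hxΔ y hy hyx)
  · have hxk := card_of_mem_free (hB hx)
    rw [mem_refill_iff_of_notMem_free hB fun hfree => by have := card_of_mem_free hfree; omega]
    by_contra hyΔ
    exact (mem_sdiff.1 (hB hx)).2 <| mem_union_right _ <|
      mem_forcedOut.2 ⟨hxk, y, hyx, by omega, hy, hyΔ⟩

theorem offMiddle_refill (hB : B ⊆ free k Δ) : offMiddle k (refill k Δ B) = offMiddle k Δ := by
  have hmem {x : Finset (Fin (2 * k))} (hx : #x ≠ k) : x ∈ refill k Δ B ↔ x ∈ Δ :=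
    mem_refill_iff_of_notMem_free hB fun hfree => hx (card_of_mem_free hfree)
  refine Prod.ext ?_ ?_
  · ext x
    simp only [offMiddle, mem_above]
    exact and_congr_left fun hkx => hmem (by omega)
  · ext x
    simp only [offMiddle, mem_above_alexanderDual]
    have := card_compl_add_card_eq x
    exact and_congr_left fun hkx => and_congr_right fun _ => not_congr (hmem (by omega))

-- The middle layer decouples: every choice of free middle faces gives a complex.
theorem fibre_eq_image_refill (hk : 1 ≤ k) (hΔ : IsComplex Δ) :
    fibre k Δ = (free k Δ).powerset.image (refill k Δ) := by
  ext Δ'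
  simp only [fibre, mem_filter, mem_allComplexes, mem_image, mem_powerset]
  constructor
  · rintro ⟨hΔ', h⟩
    refine ⟨Δ' ∩ free k Δ, inter_subset_right, ?_⟩
    ext x
    by_cases hx : x ∈ free k Δ
    · simp [refill, hx]
    · rw [mem_refill_iff_of_notMem_free inter_subset_right hx,
        mem_iff_of_offMiddle_eq hk hΔ hΔ' h hx]
  · rintro ⟨B, hB, rfl⟩
    exact ⟨isComplex_refill hk hΔ hB, offMiddle_refill hB⟩

theorem card_fibre (hk : 1 ≤ k) (hΔ : IsComplex Δ) : #(fibre k Δ) = 2 ^ #(free k Δ) := by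
  rw [fibre_eq_image_refill hk hΔ, card_image_of_injOn (refill_injOn Δ), card_powerset]

theorem two_pow_centralBinom_le_card_allComplexes (hk : 1 ≤ k) :
    2 ^ k.centralBinom ≤ #(allComplexes (2 * k)) := by
  let skeleton : Finset (Finset (Fin (2 * k))) := {x | x.Nonempty ∧ #x ≤ k}
  have hmem : ∀ x, x ∈ skeleton ↔ x.Nonempty ∧ #x ≤ k := fun x => by simp [skeleton]
  have hcomplex : IsComplex skeleton := ⟨fun x hx => ((hmem x).1 hx).1, fun x hx y hy hyx =>
    (hmem y).2 ⟨hy, (card_le_card hyx).trans ((hmem x).1 hx).2⟩⟩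
  have habove : above k skeleton = ∅ := by
    refine eq_empty_of_forall_notMem fun x hx => ?_
    rw [mem_above, hmem] at hx
    omega
  have hdual : above k (alexanderDual skeleton) = ∅ := by
    refine eq_empty_of_forall_notMem fun x hx => ?_
    obtain ⟨⟨hne, hnotMem⟩, hkx⟩ := mem_above_alexanderDual.1 hx
    have := card_compl_add_card_eq x
    exact hnotMem ((hmem _).2 ⟨hne, by omega⟩)
  have hfree := card_free_add_card_forced skeleton
  rw [card_forced hk hcomplex, habove, hdual, shadowAt, biUnion_empty, card_empty,
    add_zero, add_zero] at hfree
  rw [← hfree, ← card_fibre hk hcomplex]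
  exact card_le_card (filter_subset _ _)

theorem sum_fibre_weight (hk : 1 ≤ k) (hΔ : IsComplex Δ)
    (w w' : Finset (Finset (Fin (2 * k))) → ℝ) :
    ∑ Δ' ∈ fibre k Δ, w (above k Δ') * w' (above k (alexanderDual Δ')) * (1 / 2) ^ #(free k Δ') =
      w (above k Δ) * w' (above k (alexanderDual Δ)) := by
  calc _ = ∑ _Δ' ∈ fibre k Δ, w (above k Δ) * w' (above k (alexanderDual Δ)) *
        (1 / 2) ^ #(free k Δ) := sum_congr rfl fun Δ' hΔ' => by
          obtain ⟨habove, hdual⟩ := Prod.mk.inj (mem_filter.1 hΔ').2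
          rw [free_congr (mem_filter.1 hΔ').2, habove, hdual]
    _ = w (above k Δ) * w' (above k (alexanderDual Δ)) * (2 * (1 / 2)) ^ #(free k Δ) := by
        rw [sum_const, card_fibre hk hΔ, nsmul_eq_mul, mul_pow]
        push_cast
        ring
    _ = w (above k Δ) * w' (above k (alexanderDual Δ)) := by norm_num

theorem sum_weight_le_one (hk : 1 ≤ k) {w w' : Finset (Finset (Fin (2 * k))) → ℝ}
    (hw : IsCodeWeight (truncatedComplexes (Fin (2 * k)) k) w)
    (hw' : IsCodeWeight (truncatedComplexes (Fin (2 * k)) k) w') :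
    ∑ Δ ∈ allComplexes (2 * k),
      w (above k Δ) * w' (above k (alexanderDual Δ)) * (1 / 2) ^ #(free k Δ) ≤ 1 := by
  set 𝒯 := truncatedComplexes (Fin (2 * k)) k
  have hmaps : ∀ Δ ∈ allComplexes (2 * k), offMiddle k Δ ∈ 𝒯 ×ˢ 𝒯 := fun Δ hΔ =>
    mem_product.2 ⟨above_mem_truncatedComplexes (mem_allComplexes.1 hΔ) k,
      above_alexanderDual_mem_truncatedComplexes (mem_allComplexes.1 hΔ) k⟩
  have hfibre : ∀ Q ∈ 𝒯 ×ˢ 𝒯, ∑ Δ ∈ allComplexes (2 * k) with offMiddle k Δ = Q,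
      w (above k Δ) * w' (above k (alexanderDual Δ)) * (1 / 2) ^ #(free k Δ) ≤
        w Q.1 * w' Q.2 := by
    intro Q hQ
    rw [mem_product] at hQ
    obtain hempty | ⟨Δ₀, hΔ₀⟩ :=
      {Δ ∈ allComplexes (2 * k) | offMiddle k Δ = Q}.eq_empty_or_nonempty
    · rw [hempty, sum_empty]
      exact (mul_pos (hw.pos _ hQ.1) (hw'.pos _ hQ.2)).le
    obtain ⟨hmem, rfl⟩ := mem_filter.1 hΔ₀
    exact (sum_fibre_weight hk (mem_allComplexes.1 hmem) w w').le
  rw [← sum_fiberwise_of_maps_to hmaps]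
  refine (sum_le_sum hfibre).trans ?_
  rw [sum_product' (f := fun E E' => w E * w' E'), ← sum_mul_sum]
  exact mul_le_one₀ hw.sum_le_one (sum_nonneg fun E hE => (hw'.pos E hE).le) hw'.sum_le_one

theorem neg_log_mul_free_weight {a b : ℝ} (ha : 0 < a) (hb : 0 < b)
    (Δ : Finset (Finset (Fin (2 * k)))) :
    -Real.log (a * b * (1 / 2) ^ #(free k Δ)) =
      -Real.log a + -Real.log b + Real.log 2 * (k.centralBinom - #(forced k Δ)) := by
  rw [Real.log_mul (by positivity) (by positivity), Real.log_mul ha.ne' hb.ne', Real.log_pow,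
    one_div, Real.log_inv, ← card_free_add_card_forced Δ]
  push_cast
  ring

-- Gibbs' inequality for the two-sided code: there are at least `2 ^ centralBinom k` complexes, so
-- the saving that the code makes on every forced middle set has to be paid by the error term.
theorem sum_card_forced_le (hk : 1 ≤ k) {err : ℝ} (h : HasShortCodes (Fin (2 * k)) k err) :
    Real.log 2 * (1 / (2 * (k + 1 : ℕ))) * ∑ Δ ∈ allComplexes (2 * k), (#(forced k Δ) : ℝ) ≤
      2 * #(allComplexes (2 * k)) * err := by
  set Ω := allComplexes (2 * k)
  have habove : ∀ Δ ∈ Ω, above k Δ ∈ truncatedComplexes (Fin (2 * k)) k := fun Δ hΔ =>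
    above_mem_truncatedComplexes (mem_allComplexes.1 hΔ) k
  have hdual : ∀ Δ ∈ Ω, above k (alexanderDual Δ) ∈ truncatedComplexes (Fin (2 * k)) k :=
    fun Δ hΔ => above_alexanderDual_mem_truncatedComplexes (mem_allComplexes.1 hΔ) k
  obtain ⟨w, hw, hlen⟩ := h Ω _ habove
  obtain ⟨w', hw', hlen'⟩ := h Ω _ hdual
  have hpos : ∀ Δ ∈ Ω, 0 < w (above k Δ) := fun Δ hΔ => hw.pos _ (habove Δ hΔ)
  have hpos' : ∀ Δ ∈ Ω, 0 < w' (above k (alexanderDual Δ)) := fun Δ hΔ => hw'.pos _ (hdual Δ hΔ)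
  have hgibbs := card_mul_log_card_le_sum_neg_log
    (fun Δ hΔ => mul_pos (mul_pos (hpos Δ hΔ) (hpos' Δ hΔ)) (by positivity))
    (sum_weight_le_one hk hw hw')
  rw [sum_congr rfl fun Δ hΔ => neg_log_mul_free_weight (hpos Δ hΔ) (hpos' Δ hΔ) Δ,
    sum_add_distrib, sum_add_distrib, ← mul_sum, sum_sub_distrib, sum_const, nsmul_eq_mul] at hgibbs
  have hlog : k.centralBinom * Real.log 2 ≤ Real.log #Ω := by
    rw [← Real.log_pow]
    refine Real.log_le_log (by positivity) ?_
    exact_mod_cast two_pow_centralBinom_le_card_allComplexes hk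
  have hΩlog := mul_le_mul_of_nonneg_left hlog (Nat.cast_nonneg (α := ℝ) #Ω)
  have hsum : ∑ Δ ∈ Ω, (#(forced k Δ) : ℝ) = ∑ Δ ∈ Ω, (#(shadowAt k (above k Δ)) : ℝ) +
      ∑ Δ ∈ Ω, (#(shadowAt k (above k (alexanderDual Δ))) : ℝ) := by
    rw [← sum_add_distrib]
    exact sum_congr rfl fun Δ hΔ => by
      exact_mod_cast card_forced hk (mem_allComplexes.1 hΔ)
  rw [hsum] at hgibbs ⊢
  linarith

end TwoSidedCode

/-! ### Descending to the middle layer -/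

theorem card_above_univ_le {k j : ℕ} (hj : 3 * k ≤ 2 * j) :
    (#(above j (univ : Finset (Finset (Fin (2 * k))))) : ℝ) ≤ (25 / 8) ^ k := by
  have hgen : ∑ x : Finset (Fin (2 * k)), (4 : ℝ) ^ #x = 25 ^ k := by
    have h := sum_pow_mul_eq_add_pow (4 : ℝ) 1 (univ : Finset (Fin (2 * k)))
    simp only [one_pow, mul_one, powerset_univ, card_univ, Fintype.card_fin] at h
    rw [h, pow_mul]
    norm_num
  have hterm : ∀ x ∈ above j (univ : Finset (Finset (Fin (2 * k)))), (8 : ℝ) ^ k ≤ 4 ^ #x := by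
    intro x hx
    have hjx := (mem_above.1 hx).2
    calc (8 : ℝ) ^ k = 2 ^ (3 * k) := by rw [pow_mul]; norm_num
      _ ≤ 2 ^ (2 * #x) := pow_le_pow_right₀ one_le_two (by omega)
      _ = 4 ^ #x := by rw [pow_mul]; norm_num
  rw [div_pow, le_div_iff₀ (by positivity), ← hgen, ← nsmul_eq_mul]
  exact (card_nsmul_le_sum _ _ _ hterm).trans
    (sum_le_sum_of_subset_of_nonneg (subset_univ _) fun _ _ _ => by positivity)

-- The layers above `3k/2` are exponentially smaller than the middle one, so the trivial code is
-- good enough there; each of the remaining `≤ k` steps costs one container argument.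
theorem hasShortCodes_middle {k : ℕ} {p lam : ℝ} {ψ r : ℕ}
    (h : ∀ j, k ≤ j → 2 * j ≤ 3 * k → ContainerParams (j + 1) (2 * k - j) p lam ψ r) :
    HasShortCodes (Fin (2 * k)) k
      ((25 / 8) ^ k + k * (10 * Real.exp (-lam) * k.centralBinom)) := by
  have hdescend : ∀ d, d ≤ (k + 1) / 2 → HasShortCodes (Fin (2 * k)) (k + (k + 1) / 2 - d)
      ((25 / 8) ^ k + d * (10 * Real.exp (-lam) * k.centralBinom)) := by
    intro d
    induction d with
    | zero =>
      refine fun _ => (hasShortCodes_trivial _ _).mono ?_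
      have htail := card_above_univ_le (k := k) (j := k + (k + 1) / 2 - 0) (by omega)
      rw [Nat.cast_zero, zero_mul, add_zero]
      exact (mul_le_of_le_one_left (Nat.cast_nonneg _) (log_two_lt_d1.le.trans (by norm_num))).trans
        htail
    | succ d ih =>
      intro hd
      obtain ⟨j, hj⟩ : ∃ j, j = k + (k + 1) / 2 - (d + 1) := ⟨_, rfl⟩
      have hcodes := ih (by omega)
      rw [show k + (k + 1) / 2 - d = j + 1 by omega] at hcodes
      have hparams := h j (by omega) (by omega)
      rw [← Fintype.card_fin (2 * k)] at hparams
      rw [← hj]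
      refine (hcodes.step hparams).mono ?_
      rw [Fintype.card_fin]
      have hsucc : ((2 * k).choose (j + 1) : ℝ) ≤ k.centralBinom := by
        exact_mod_cast Nat.choose_le_centralBinom (j + 1) k
      have hself : ((2 * k).choose j : ℝ) ≤ k.centralBinom := by
        exact_mod_cast Nat.choose_le_centralBinom j k
      have hcost := mul_le_mul_of_nonneg_left (add_le_add hsucc hself)
        (mul_nonneg (by norm_num : (0 : ℝ) ≤ 5) (Real.exp_pos (-lam)).le)
      push_cast
      linarith
  have hmiddle := hdescend ((k + 1) / 2) le_rfl
  rw [Nat.add_sub_cancel] at hmiddle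
  refine hmiddle.mono ?_
  have hsteps : (((k + 1) / 2 : ℕ) : ℝ) ≤ k := by exact_mod_cast (by omega)
  gcongr

section Parameters

variable {k : ℕ} {s : ℝ}

theorem eight_mul_log_div_sq_le_one (hk : 8 ≤ k) : 8 * Real.log k / (k : ℝ) ^ 2 ≤ 1 := by
  have hk8 : (8 : ℝ) ≤ k := by exact_mod_cast hk
  have hlog := Real.log_le_sub_one_of_pos (show (0 : ℝ) < k by linarith)
  rw [div_le_one (by positivity)]
  nlinarith

theorem one_sub_pow_le_one_div (hk : 8 ≤ k) :
    (1 - 8 * Real.log k / (k : ℝ) ^ 2) ^ (k * k / 4) ≤ 1 / k := by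
  have hk0 : (0 : ℝ) < k := by exact_mod_cast (by omega)
  have hlog0 : 0 ≤ Real.log k := Real.log_natCast_nonneg k
  have hexponent : Real.log k ≤ (k * k / 4 : ℕ) * (8 * Real.log k / (k : ℝ) ^ 2) := by
    have hnat : k * k ≤ 8 * (k * k / 4) := by
      have : 8 ≤ k * k := by nlinarith
      omega
    have hreal : (k : ℝ) * k ≤ 8 * (k * k / 4 : ℕ) := by exact_mod_cast hnat
    rw [mul_div_assoc', le_div_iff₀ (by positivity)]
    nlinarith
  calc (1 - 8 * Real.log k / (k : ℝ) ^ 2) ^ (k * k / 4)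
      ≤ Real.exp (-(8 * Real.log k / (k : ℝ) ^ 2)) ^ (k * k / 4) :=
        pow_le_pow_left₀ (sub_nonneg.2 (eight_mul_log_div_sq_le_one hk))
          (Real.one_sub_le_exp_neg _) _
    _ = Real.exp (-((k * k / 4 : ℕ) * (8 * Real.log k / (k : ℝ) ^ 2))) := by
        rw [← Real.exp_nat_mul, mul_neg]
    _ ≤ Real.exp (-Real.log k) := Real.exp_le_exp.2 (neg_le_neg hexponent)
    _ = 1 / k := by rw [Real.exp_neg, Real.exp_log hk0, one_div]

theorem sqrt_eq_cube (hs : 0 ≤ s) (hks : k = s ^ 6) : √(k : ℝ) = s ^ 3 := by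
  rw [hks, show s ^ 6 = (s ^ 3) ^ 2 by ring, Real.sqrt_sq (by positivity)]

theorem natSqrt_le_cube (hs : 0 ≤ s) (hks : k = s ^ 6) : (Nat.sqrt k : ℝ) ≤ s ^ 3 :=
  Real.nat_sqrt_le_real_sqrt.trans_eq (sqrt_eq_cube hs hks)

theorem cube_le_two_mul_natSqrt (hs : 2 ≤ s) (hks : k = s ^ 6) :
    s ^ 3 ≤ 2 * (Nat.sqrt k : ℝ) := by
  have hlt : √(k : ℝ) ≤ Nat.sqrt k + 1 := Real.real_sqrt_le_nat_sqrt_succ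
  rw [sqrt_eq_cube (by linarith) hks] at hlt
  have h2 : (2 : ℝ) ≤ s ^ 3 := hs.trans (le_self_pow₀ (by linarith) (by norm_num))
  linarith

/-- The range of `k` for which the container argument applies, with `s` the sixth root of `k`. All
error terms of `ContainerParams` are then `O(s⁻²)`, while `1 / lam` is of order at least `s⁻¹`. -/
structure IsLarge (k : ℕ) (s : ℝ) : Prop where
  le : 1000000 ≤ s
  eq_pow : k = s ^ 6
  log_le : Real.log k ≤ s

namespace IsLarge

theorem le_natCast (h : IsLarge k s) : (1000000 : ℝ) ≤ k := by
  have hle := h.le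
  rw [h.eq_pow]
  exact hle.trans (le_self_pow₀ (by linarith) (by norm_num))

theorem le_nat (h : IsLarge k s) : 1000000 ≤ k := by exact_mod_cast h.le_natCast

theorem one_le_log (h : IsLarge k s) : 1 ≤ Real.log k := by
  have hk := h.le_natCast
  rw [Real.le_log_iff_exp_le (by linarith)]
  linarith [Real.exp_one_lt_d9]

theorem natSqrt_pos (h : IsLarge k s) : 0 < Nat.sqrt k := Nat.sqrt_pos.2 (by linarith [h.le_nat])

theorem eight_mul_natSqrt_le (h : IsLarge k s) : 8 * Nat.sqrt k ≤ k := by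
  have h8 : 8 ≤ Nat.sqrt k := Nat.le_sqrt.2 (by linarith [h.le_nat])
  exact (Nat.mul_le_mul_right _ h8).trans (Nat.sqrt_le k)

theorem sampling_le (h : IsLarge k s) :
    (2 * k : ℝ) * (12 * Real.log k) * (8 * Real.log k / (k : ℝ) ^ 2) ≤ 192 / s ^ 2 := by
  have hk := h.le_natCast
  have hs1 : 1 ≤ s := by linarith [h.le]
  have hlog0 := h.one_le_log
  calc _ = 192 * Real.log k ^ 2 / k := by field_simp; ring
    _ ≤ 192 * s ^ 2 / k := by gcongr; exact h.log_le
    _ ≤ 192 * s ^ 2 / s ^ 4 := by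
        rw [h.eq_pow]
        gcongr 192 * s ^ 2 / ?_
        exact pow_le_pow_right₀ hs1 (by norm_num)
    _ = 192 / s ^ 2 := by field_simp

theorem log_div_natSqrt_le (h : IsLarge k s) : Real.log k / Nat.sqrt k ≤ 2 / s ^ 2 := by
  have hs := h.le
  have hψ : (0 : ℝ) < Nat.sqrt k := by exact_mod_cast h.natSqrt_pos
  rw [div_le_div_iff₀ hψ (by positivity)]
  calc Real.log k * s ^ 2 ≤ s * s ^ 2 := by gcongr; exact h.log_le
    _ = s ^ 3 := by ring
    _ ≤ 2 * Nat.sqrt k := cube_le_two_mul_natSqrt (by linarith) h.eq_pow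

theorem two_mul_natSqrt_div_le (h : IsLarge k s) : 2 * (Nat.sqrt k : ℝ) / k ≤ 2 / s ^ 2 := by
  have hs := h.le
  calc 2 * (Nat.sqrt k : ℝ) / k ≤ 2 * s ^ 3 / s ^ 6 := by
        rw [h.eq_pow]
        gcongr
        exact natSqrt_le_cube (by linarith) h.eq_pow
    _ = 2 / s ^ 3 := by field_simp
    _ ≤ 2 / s ^ 2 := by
        gcongr 2 / ?_
        exact pow_le_pow_right₀ (by linarith) (by norm_num)

theorem sampling_cost_le (h : IsLarge k s) :
    (2 * k : ℝ) * (12 * Real.log k) * (8 * Real.log k / (k : ℝ) ^ 2) +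
      (2 * k : ℝ) * (12 * Real.log k) * (1 / k) / Nat.sqrt k ≤ 1 / 4 := by
  have hs := h.le
  have hk := h.le_natCast
  calc _ = (2 * k : ℝ) * (12 * Real.log k) * (8 * Real.log k / (k : ℝ) ^ 2) +
        24 * (Real.log k / Nat.sqrt k) := by field_simp; ring
    _ ≤ 192 / s ^ 2 + 24 * (2 / s ^ 2) := by
        gcongr ?_ + 24 * ?_
        exacts [h.sampling_le, h.log_div_natSqrt_le]
    _ = 240 / s ^ 2 := by ring
    _ ≤ 1 / 4 := by
        rw [div_le_div_iff₀ (by positivity) (by norm_num)]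
        nlinarith

theorem overhead_le (h : IsLarge k s) :
    (2 * k : ℝ) * (12 * Real.log k) * (8 * Real.log k / (k : ℝ) ^ 2) +
      10 * (12 * Real.log k) / Nat.sqrt k + 2 * (Nat.sqrt k : ℝ) / k ≤
        1 / (64 * (12 * Real.log k)) := by
  have hs := h.le
  have hlog := h.log_le
  have hlog1 := h.one_le_log
  calc _ = (2 * k : ℝ) * (12 * Real.log k) * (8 * Real.log k / (k : ℝ) ^ 2) +
        120 * (Real.log k / Nat.sqrt k) + 2 * (Nat.sqrt k : ℝ) / k := by ring
    _ ≤ 192 / s ^ 2 + 120 * (2 / s ^ 2) + 2 / s ^ 2 := by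
        gcongr ?_ + 120 * ?_ + ?_
        exacts [h.sampling_le, h.log_div_natSqrt_le, h.two_mul_natSqrt_div_le]
    _ = 434 / s ^ 2 := by ring
    _ ≤ 1 / (64 * (12 * Real.log k)) := by
        rw [div_le_div_iff₀ (by positivity) (by positivity)]
        nlinarith

theorem containerParams (h : IsLarge k s) {j : ℕ} (hkj : k ≤ j) (hj : 2 * j ≤ 3 * k) :
    ContainerParams (j + 1) (2 * k - j) (8 * Real.log k / (k : ℝ) ^ 2) (12 * Real.log k)
      (Nat.sqrt k) (k * k / 4) := by
  have hk := h.le_nat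
  have hlog := h.one_le_log
  have hlow : (k : ℝ) ≤ (j + 1 : ℕ) := by exact_mod_cast (by omega)
  have hhigh : ((j + 1 : ℕ) : ℝ) ≤ 2 * k := by exact_mod_cast (by omega)
  exact
    { p_nonneg := by positivity
      p_le_one := eight_mul_log_div_sq_le_one (by omega)
      one_le_lam := by linarith
      ψ_pos := h.natSqrt_pos
      b_lt_a := by omega
      a_le := by omega
      ψ_le := by linarith [h.eight_mul_natSqrt_le]
      r_le := by
        have hprod := Nat.mul_le_mul (show k ≤ 2 * (2 * k - j) by omega) hkj
        rw [mul_assoc] at hprod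
        rw [Nat.add_sub_cancel]
        omega
      sampling_cost_le := by
        refine le_trans ?_ h.sampling_cost_le
        gcongr
        · exact pow_nonneg (sub_nonneg.2 (eight_mul_log_div_sq_le_one (by omega))) _
        · exact one_sub_pow_le_one_div (by omega)
      overhead_le := by
        refine le_trans ?_ h.overhead_le
        gcongr }

theorem hasShortCodes (h : IsLarge k s) :
    HasShortCodes (Fin (2 * k)) k ((25 / 8) ^ k + 10 * k.centralBinom / (k : ℝ) ^ 11) := by
  refine (hasShortCodes_middle fun j => h.containerParams (j := j)).mono (le_of_eq ?_)
  have hk0 : (0 : ℝ) < k := by linarith [h.le_natCast]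
  have hexp : Real.exp (-(12 * Real.log k)) = 1 / (k : ℝ) ^ 12 := by
    rw [Real.exp_neg, one_div, mul_comm, Real.exp_mul, Real.exp_log hk0]
    norm_cast
  rw [hexp]
  field_simp

end IsLarge

theorem eventually_isLarge : ∀ᶠ k : ℕ in Filter.atTop, IsLarge k ((k : ℝ) ^ (1 / 6 : ℝ)) := by
  have hroot : Filter.Tendsto (fun k : ℕ => (k : ℝ) ^ (1 / 6 : ℝ)) Filter.atTop Filter.atTop :=
    (tendsto_rpow_atTop (by norm_num)).comp tendsto_natCast_atTop_atTop
  have hlog := tendsto_natCast_atTop_atTop.eventually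
    ((isLittleO_log_rpow_atTop (show (0 : ℝ) < 1 / 6 by norm_num)).bound one_pos)
  filter_upwards [hroot.eventually_ge_atTop 1000000, hlog] with k hk hklog
  refine ⟨hk, ?_, ?_⟩
  · rw [← Real.rpow_natCast, ← Real.rpow_mul (Nat.cast_nonneg k)]
    norm_num
  · rw [one_mul, Real.norm_eq_abs, Real.norm_eq_abs,
      abs_of_nonneg (Real.rpow_nonneg (Nat.cast_nonneg k) _)] at hklog
    exact (le_abs_self _).trans hklog

theorem eventually_tail_le_centralBinom_div :
    ∀ᶠ k : ℕ in Filter.atTop, (25 / 8 : ℝ) ^ k ≤ k.centralBinom / (k : ℝ) ^ 11 := by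
  have hgeom := (tendsto_pow_const_mul_const_pow_of_abs_lt_one 12
    (show |(25 / 32 : ℝ)| < 1 by rw [abs_lt]; norm_num)).eventually_le_const one_half_pos
  filter_upwards [hgeom, Filter.eventually_ge_atTop 1] with k hk hk1
  have hfour : (4 : ℝ) ^ k ≤ 2 * k * k.centralBinom := by
    exact_mod_cast Nat.four_pow_le_two_mul_self_mul_centralBinom k hk1
  rw [le_div_iff₀ (by positivity)]
  calc (25 / 8 : ℝ) ^ k * (k : ℝ) ^ 11 = (25 / 32) ^ k * 4 ^ k * (k : ℝ) ^ 11 := by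
        rw [← mul_pow]
        norm_num
    _ ≤ (25 / 32) ^ k * (2 * k * k.centralBinom) * (k : ℝ) ^ 11 := by gcongr
    _ = (k : ℝ) ^ 12 * (25 / 32) ^ k * (2 * k.centralBinom) := by ring
    _ ≤ 1 / 2 * (2 * k.centralBinom) := by gcongr
    _ = k.centralBinom := by ring

theorem eventually_sum_card_forced_le : ∀ᶠ k : ℕ in Filter.atTop,
    ∑ Δ ∈ allComplexes (2 * k), (#(forced k Δ) : ℝ) ≤
      #(allComplexes (2 * k)) * k.centralBinom / (k : ℝ) ^ 8 := by
  filter_upwards [eventually_isLarge, eventually_tail_le_centralBinom_div] with k hlarge htail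
  have hk := hlarge.le_natCast
  have hcodes := hlarge.hasShortCodes.mono (add_le_add_left htail _)
  have hforced := sum_card_forced_le (by linarith [hlarge.le_nat]) hcodes
  have hrate : 1 / (8 * (k : ℝ)) ≤ Real.log 2 * (1 / (2 * (k + 1 : ℕ))) := by
    calc 1 / (8 * (k : ℝ)) = 1 / 2 * (1 / (4 * k)) := by field_simp; norm_num
      _ ≤ Real.log 2 * (1 / (2 * (k + 1 : ℕ))) := by
        gcongr ?_ * (1 / ?_)
        · linarith [log_two_gt_d2]
        · push_cast
          linarith
  have hsum := (mul_le_mul_of_nonneg_right hrate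
    (sum_nonneg fun Δ _ => Nat.cast_nonneg #(forced k Δ))).trans hforced
  rw [one_div_mul_eq_div, div_le_iff₀ (by positivity)] at hsum
  refine hsum.trans ?_
  calc _ = 176 / (k : ℝ) ^ 2 *
        (#(allComplexes (2 * k)) * k.centralBinom / (k : ℝ) ^ 8) := by field_simp; ring
    _ ≤ _ := by
        refine mul_le_of_le_one_left (by positivity) ?_
        rw [div_le_one (by positivity)]
        nlinarith

end Parameters

/-! ### The second moment method for nearly disjoint events -/

section SecondMoment

variable {α ι : Type*} {s t F B : Finset α} {S : ι → Finset α} {W : Finset ι}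
  {nbr : ι → Finset ι} {a d : ℕ} {δ : ℝ}

/-- The indicator of `s ⊆ B`, as a random variable of the random set `B`. -/
def subsetInd (s B : Finset α) : ℝ := if s ⊆ B then 1 else 0

/-- The number of sets of the family `S` over `W` that are contained in `B`. -/
def coveredCount (S : ι → Finset α) (W : Finset ι) (B : Finset α) : ℝ :=
  ∑ x ∈ W, subsetInd (S x) B

theorem subsetInd_nonneg (s B : Finset α) : 0 ≤ subsetInd s B := by
  rw [subsetInd]
  split_ifs <;> norm_num

theorem sum_powerset_subsetInd (hs : s ⊆ F) :
    ∑ B ∈ F.powerset, subsetInd s B = 2 ^ #F * (1 / 2) ^ #s := by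
  have hIcc : {B ∈ F.powerset | s ⊆ B} = Icc s F := by
    ext B
    simp only [mem_filter, mem_powerset, mem_Icc, and_comm]
  simp only [subsetInd]
  rw [sum_boole, hIcc, card_Icc_finset hs, one_div, inv_pow]
  push_cast
  rw [pow_sub₀ _ two_ne_zero (card_le_card hs)]

variable [DecidableEq α]

/-- The number of pairs of neighbouring sets of the family `S` over `W` contained in `B`. -/
def coveredPairs (S : ι → Finset α) (W : Finset ι) (nbr : ι → Finset ι) (B : Finset α) : ℝ :=
  ∑ x ∈ W, ∑ x' ∈ nbr x, subsetInd (S x ∪ S x') B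

theorem subsetInd_mul (s t B : Finset α) :
    subsetInd s B * subsetInd t B = subsetInd (s ∪ t) B := by
  simp only [subsetInd, union_subset_iff, ite_and, mul_ite, mul_one, mul_zero]
  split_ifs <;> rfl

variable (F S W nbr a d) in
/-- The sets `S x`, `x ∈ W`, have size `a + 1`, are disjoint unless they are neighbours, and share
at most one element with each of their at most `d` neighbours. -/
structure NearlyDisjoint : Prop where
  subset : ∀ x ∈ W, S x ⊆ F
  card_eq : ∀ x ∈ W, #(S x) = a + 1
  nbr_subset : ∀ x ∈ W, ∀ x' ∈ nbr x, S x' ⊆ F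
  le_card_union : ∀ x ∈ W, ∀ x' ∈ nbr x, 2 * a + 1 ≤ #(S x ∪ S x')
  disjoint : ∀ x ∈ W, ∀ x' ∈ W, x' ≠ x → x' ∉ nbr x → Disjoint (S x) (S x')
  notMem_nbr : ∀ x ∈ W, x ∉ nbr x
  card_nbr_le : ∀ x ∈ W, #(nbr x) ≤ d

namespace NearlyDisjoint

theorem sum_coveredCount (h : NearlyDisjoint F S W nbr a d) :
    ∑ B ∈ F.powerset, coveredCount S W B = 2 ^ #F * (#W * (1 / 2) ^ (a + 1)) := by
  simp only [coveredCount]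
  rw [sum_comm, sum_congr rfl fun x hx => by
    rw [sum_powerset_subsetInd (h.subset x hx), h.card_eq x hx], sum_const, nsmul_eq_mul]
  ring

theorem sum_nbr_le (h : NearlyDisjoint F S W nbr a d) {x : ι} (hx : x ∈ W) :
    ∑ x' ∈ nbr x, ∑ B ∈ F.powerset, subsetInd (S x ∪ S x') B ≤
      2 ^ #F * (d * (1 / 2) ^ (2 * a + 1)) := by
  have hpair : ∀ x' ∈ nbr x, ∑ B ∈ F.powerset, subsetInd (S x ∪ S x') B ≤
      2 ^ #F * (1 / 2) ^ (2 * a + 1) := by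
    intro x' hx'
    rw [sum_powerset_subsetInd (union_subset (h.subset x hx) (h.nbr_subset x hx x' hx'))]
    gcongr 2 ^ #F * ?_
    exact pow_le_pow_of_le_one (by norm_num) (by norm_num) (h.le_card_union x hx x' hx')
  calc _ ≤ #(nbr x) • ((2 : ℝ) ^ #F * (1 / 2) ^ (2 * a + 1)) := sum_le_card_nsmul _ _ _ hpair
    _ ≤ d * (2 ^ #F * (1 / 2) ^ (2 * a + 1)) := by
        rw [nsmul_eq_mul]
        gcongr
        exact h.card_nbr_le x hx
    _ = 2 ^ #F * (d * (1 / 2) ^ (2 * a + 1)) := by ring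

theorem sum_coveredPairs_le (h : NearlyDisjoint F S W nbr a d) :
    ∑ B ∈ F.powerset, coveredPairs S W nbr B ≤
      2 ^ #F * (#W * (d * (1 / 2) ^ (2 * a + 1))) := by
  simp only [coveredPairs]
  rw [sum_comm]
  calc _ ≤ #W • ((2 : ℝ) ^ #F * (d * (1 / 2) ^ (2 * a + 1))) :=
        sum_le_card_nsmul _ _ _ fun x hx => by rw [sum_comm]; exact h.sum_nbr_le hx
    _ = _ := by rw [nsmul_eq_mul, mul_left_comm]

theorem sum_pairs_le (h : NearlyDisjoint F S W nbr a d) {x : ι} (hx : x ∈ W) :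
    ∑ x' ∈ W, ∑ B ∈ F.powerset, subsetInd (S x ∪ S x') B ≤
      2 ^ #F * (#W * (1 / 2) ^ (2 * a + 2) + (1 / 2) ^ (a + 1) + d * (1 / 2) ^ (2 * a + 1)) := by
  set f : ι → ℝ := fun x' => ∑ B ∈ F.powerset, subsetInd (S x ∪ S x') B
  have hf : ∀ x', 0 ≤ f x' := fun x' => sum_nonneg fun B _ => subsetInd_nonneg _ B
  have hself : f x = 2 ^ #F * (1 / 2) ^ (a + 1) := by
    simp only [f, union_self]
    rw [sum_powerset_subsetInd (h.subset x hx), h.card_eq x hx]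
  have hfar : ∀ x' ∈ W \ insert x (nbr x), f x' ≤ 2 ^ #F * (1 / 2) ^ (2 * a + 2) := by
    intro x' hx'
    simp only [mem_sdiff, mem_insert, not_or] at hx'
    obtain ⟨hx'W, hne, hnbr⟩ := hx'
    simp only [f]
    rw [sum_powerset_subsetInd (union_subset (h.subset x hx) (h.subset x' hx'W)),
      card_union_of_disjoint (h.disjoint x hx x' hx'W hne hnbr), h.card_eq x hx,
      h.card_eq x' hx'W, ← two_mul, mul_add_one]
  calc ∑ x' ∈ W, f x' ≤ ∑ x' ∈ W \ insert x (nbr x) ∪ insert x (nbr x), f x' :=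
        sum_le_sum_of_subset_of_nonneg (by rw [sdiff_union_self_eq_union]; exact subset_union_left)
          fun x' _ _ => hf x'
    _ = ∑ x' ∈ W \ insert x (nbr x), f x' + (f x + ∑ x' ∈ nbr x, f x') := by
        rw [sum_union sdiff_disjoint, sum_insert (h.notMem_nbr x hx)]
    _ ≤ #W * (2 ^ #F * (1 / 2) ^ (2 * a + 2)) +
          (2 ^ #F * (1 / 2) ^ (a + 1) + 2 ^ #F * (d * (1 / 2) ^ (2 * a + 1))) := by
        rw [hself]
        gcongr
        · refine (sum_le_card_nsmul _ _ _ hfar).trans ?_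
          rw [nsmul_eq_mul]
          gcongr
          exact sdiff_subset
        · exact h.sum_nbr_le hx
    _ = _ := by ring

theorem sum_coveredCount_sq_le (h : NearlyDisjoint F S W nbr a d) :
    ∑ B ∈ F.powerset, coveredCount S W B ^ 2 ≤
      2 ^ #F * (#W * (#W * (1 / 2) ^ (2 * a + 2) + (1 / 2) ^ (a + 1) +
        d * (1 / 2) ^ (2 * a + 1))) := by
  simp only [coveredCount, sq, sum_mul_sum, subsetInd_mul]
  rw [sum_comm]
  calc _ ≤ #W • ((2 : ℝ) ^ #F * (#W * (1 / 2) ^ (2 * a + 2) + (1 / 2) ^ (a + 1) +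
          d * (1 / 2) ^ (2 * a + 1))) :=
        sum_le_card_nsmul _ _ _ fun x hx => by rw [sum_comm]; exact h.sum_pairs_le hx
    _ = _ := by rw [nsmul_eq_mul, mul_left_comm]

theorem sum_sq_deviation_le (h : NearlyDisjoint F S W nbr a d) :
    ∑ B ∈ F.powerset, (coveredCount S W B - (#W : ℝ) * (1 / 2) ^ (a + 1)) ^ 2 ≤
      2 ^ #F * ((#W : ℝ) * (1 / 2) ^ (a + 1) * (1 + (d : ℝ) * (1 / 2) ^ a)) := by
  set μ : ℝ := #W * (1 / 2) ^ (a + 1) with hμ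
  have hexpand : ∑ B ∈ F.powerset, (coveredCount S W B - μ) ^ 2 =
      ∑ B ∈ F.powerset, coveredCount S W B ^ 2 -
        2 * μ * ∑ B ∈ F.powerset, coveredCount S W B + 2 ^ #F * μ ^ 2 := by
    have hconst : (2 : ℝ) ^ #F * μ ^ 2 = ∑ _B ∈ F.powerset, μ ^ 2 := by
      rw [sum_const, card_powerset, nsmul_eq_mul]
      norm_cast
    rw [mul_sum, ← sum_sub_distrib, hconst, ← sum_add_distrib]
    exact sum_congr rfl fun B _ => by ring
  have hsq := h.sum_coveredCount_sq_le
  rw [show (#W : ℝ) * (#W * (1 / 2) ^ (2 * a + 2) + (1 / 2) ^ (a + 1) +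
      d * (1 / 2) ^ (2 * a + 1)) = μ ^ 2 + μ * (1 + d * (1 / 2) ^ a) by rw [hμ]; ring] at hsq
  rw [hexpand, h.sum_coveredCount]
  linarith

end NearlyDisjoint

-- Either the deviation of `y` or `j` itself is at least `t / 2`.
theorem one_le_chebyshev_add_markov {y j μ t : ℝ} (hj : 0 ≤ j) (ht : 0 < t)
    (h : y - j < μ - t) : 1 ≤ 4 / t ^ 2 * (y - μ) ^ 2 + 2 / t * j := by
  rcases le_or_gt (t / 2) j with hlarge | hsmall
  · have hmarkov : 1 ≤ 2 / t * j := by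
      rw [div_mul_eq_mul_div, le_div_iff₀ ht]
      linarith
    exact hmarkov.trans (le_add_of_nonneg_left (by positivity))
  · have hchebyshev : 1 ≤ 4 / t ^ 2 * (y - μ) ^ 2 := by
      rw [div_mul_eq_mul_div, le_div_iff₀ (by positivity)]
      nlinarith
    exact hchebyshev.trans (le_add_of_nonneg_right (by positivity))

/-- The bound on the probability that the number of covered sets without covered neighbours is below
`(1 - δ) * μ`, where `μ` is the expected number of covered sets and each covered set has `ρ` covered
neighbours in expectation. -/
def failureBound (ρ δ μ : ℝ) : ℝ := 4 * (1 + ρ) / (δ ^ 2 * μ) + 2 * ρ / δ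

theorem failureBound_antitone {ρ μ μ' : ℝ} (hρ : 0 ≤ ρ) (hδ : 0 < δ) (hμ : 0 < μ) (hμμ' : μ ≤ μ') :
    failureBound ρ δ μ' ≤ failureBound ρ δ μ := by
  rw [failureBound, failureBound]
  gcongr

theorem NearlyDisjoint.card_filter_lt_le (h : NearlyDisjoint F S W nbr a d) (hW : W.Nonempty)
    (hδ : 0 < δ) :
    (#{B ∈ F.powerset | coveredCount S W B - coveredPairs S W nbr B <
        (1 - δ) * (#W * (1 / 2) ^ (a + 1))} : ℝ) ≤
      2 ^ #F * failureBound (d * (1 / 2) ^ a) δ (#W * (1 / 2) ^ (a + 1)) := by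
  have hvar := h.sum_sq_deviation_le
  have hpairs := h.sum_coveredPairs_le
  set μ : ℝ := #W * (1 / 2) ^ (a + 1) with hμ
  have hμ0 : 0 < μ := mul_pos (by exact_mod_cast hW.card_pos) (by positivity)
  rw [show (#W : ℝ) * (d * (1 / 2) ^ (2 * a + 1)) = μ * (d * (1 / 2) ^ a) by
    rw [hμ]; ring] at hpairs
  set bound : Finset α → ℝ := fun B => 4 / (δ * μ) ^ 2 * (coveredCount S W B - μ) ^ 2 +
    2 / (δ * μ) * coveredPairs S W nbr B with hbound
  have hpairs0 : ∀ B, 0 ≤ coveredPairs S W nbr B := fun B =>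
    sum_nonneg fun x _ => sum_nonneg fun x' _ => subsetInd_nonneg _ B
  have hbound0 : ∀ B, 0 ≤ bound B := fun B => add_nonneg (by positivity)
    (mul_nonneg (by positivity) (hpairs0 B))
  calc (#{B ∈ F.powerset | coveredCount S W B - coveredPairs S W nbr B < (1 - δ) * μ} : ℝ)
      ≤ ∑ B ∈ F.powerset with coveredCount S W B - coveredPairs S W nbr B < (1 - δ) * μ,
          bound B := by
        rw [card_eq_sum_ones, Nat.cast_sum]
        refine sum_le_sum fun B hB => ?_
        rw [Nat.cast_one]
        exact one_le_chebyshev_add_markov (hpairs0 B) (mul_pos hδ hμ0)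
          (by linarith [(mem_filter.1 hB).2])
    _ ≤ ∑ B ∈ F.powerset, bound B :=
        sum_le_sum_of_subset_of_nonneg (filter_subset _ _) fun B _ _ => hbound0 B
    _ = 4 / (δ * μ) ^ 2 * ∑ B ∈ F.powerset, (coveredCount S W B - μ) ^ 2 +
          2 / (δ * μ) * ∑ B ∈ F.powerset, coveredPairs S W nbr B := by
        rw [hbound, sum_add_distrib, ← mul_sum, ← mul_sum]
    _ ≤ 4 / (δ * μ) ^ 2 * (2 ^ #F * (μ * (1 + d * (1 / 2) ^ a))) +
          2 / (δ * μ) * (2 ^ #F * (μ * (d * (1 / 2) ^ a))) := by gcongr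
    _ = 2 ^ #F * failureBound (d * (1 / 2) ^ a) δ μ := by
        rw [failureBound]
        field_simp

end SecondMoment

/-! ### Isolated holes over a fibre -/

namespace LayerPair

variable {α : Type*} [DecidableEq α] (P : LayerPair α) {F : Finset α} {x x' y : α} {a : ℕ}

/-- The upper elements that share a facet with `x`. -/
def star (x : α) : Finset α := (P.down x).biUnion P.up

/-- The upper elements such that all elements of their star have their facets in `F`. -/
def candidates (F : Finset α) : Finset α := {x ∈ P.upper | ∀ x' ∈ P.star x, P.down x' ⊆ F}

theorem mem_star (hx : x ∈ P.upper) :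
    x' ∈ P.star x ↔ x' ∈ P.upper ∧ ∃ y ∈ P.down x, y ∈ P.down x' := by
  have hlower := P.down_subset x hx
  simp only [star, mem_biUnion]
  constructor
  · rintro ⟨y, hy, hx'⟩
    have hx'upper := P.up_subset y (hlower hy) hx'
    exact ⟨hx'upper, y, hy, (P.mem_down_iff x' hx'upper y (hlower hy)).2 hx'⟩
  · rintro ⟨hx', y, hy, hyx'⟩
    exact ⟨y, hy, (P.mem_down_iff x' hx' y (hlower hy)).1 hyx'⟩

theorem mem_star_comm (hx : x ∈ P.upper) (hx' : x' ∈ P.upper) :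
    x' ∈ P.star x ↔ x ∈ P.star x' := by
  simp only [P.mem_star hx, P.mem_star hx', hx, hx', true_and]
  exact exists_congr fun y => and_comm

theorem self_mem_star (ha : P.downDeg = a + 1) (hx : x ∈ P.upper) : x ∈ P.star x := by
  obtain ⟨y, hy⟩ : (P.down x).Nonempty := card_pos.1 (by rw [P.card_down x hx]; omega)
  exact (P.mem_star hx).2 ⟨hx, y, hy, hy⟩

theorem card_star_le (hx : x ∈ P.upper) : #(P.star x) ≤ P.downDeg * P.upDeg := by
  rw [← P.card_down x hx]
  exact card_biUnion_le_card_mul _ _ _ fun y hy => (P.card_up y (P.down_subset x hx hy)).le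

theorem card_down_inter_down_le_one (hx : x ∈ P.upper) (hx' : x' ∈ P.upper) (hne : x ≠ x') :
    #(P.down x ∩ P.down x') ≤ 1 := by
  refine card_le_one.2 fun z hz y hy => ?_
  rw [mem_inter] at hy hz
  have hlower := P.down_subset x hx hy.1
  exact P.eq_of_mem_down y hlower x ((P.mem_down_iff x hx y hlower).1 hy.1) x'
    ((P.mem_down_iff x' hx' y hlower).1 hy.2) hne z hz.1 hz.2

theorem mem_candidates :
    x ∈ P.candidates F ↔ x ∈ P.upper ∧ ∀ x' ∈ P.star x, P.down x' ⊆ F := mem_filter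

theorem nearlyDisjoint_candidates (F : Finset α) (ha : P.downDeg = a + 1) :
    NearlyDisjoint F P.down (P.candidates F) (fun x => (P.star x).erase x) a
      (P.downDeg * P.upDeg) where
  subset x hx := by
    obtain ⟨hupper, hF⟩ := P.mem_candidates.1 hx
    exact hF x (P.self_mem_star ha hupper)
  card_eq x hx := by rw [P.card_down x (P.mem_candidates.1 hx).1, ha]
  nbr_subset x hx x' hx' := (P.mem_candidates.1 hx).2 x' (mem_of_mem_erase hx')
  le_card_union x hx x' hx' := by
    have hupper := (P.mem_candidates.1 hx).1
    obtain ⟨hne, hstar⟩ := mem_erase.1 hx'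
    have hupper' := ((P.mem_star hupper).1 hstar).1
    have hinter := P.card_down_inter_down_le_one hupper hupper' hne.symm
    have hunion := card_union_add_card_inter (P.down x) (P.down x')
    rw [P.card_down x hupper, P.card_down x' hupper', ha] at hunion
    omega
  disjoint x hx x' hx' hne hnbr := disjoint_left.2 fun y hy hy' =>
    hnbr (mem_erase.2 ⟨hne, (P.mem_star (P.mem_candidates.1 hx).1).2
      ⟨(P.mem_candidates.1 hx').1, y, hy, hy'⟩⟩)
  notMem_nbr x _ := notMem_erase x _
  card_nbr_le x hx := card_erase_le.trans (P.card_star_le (P.mem_candidates.1 hx).1)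

theorem card_upper_le (F : Finset α) :
    #P.upper ≤
      #(P.candidates F) + #(P.lower \ F) * (P.upDeg * (P.downDeg * P.upDeg)) := by
  have hcover : P.upper ⊆ P.candidates F ∪
      (P.lower \ F).biUnion fun y => (P.up y).biUnion P.star := by
    intro x hx
    by_cases hcand : ∀ x' ∈ P.star x, P.down x' ⊆ F
    · exact mem_union_left _ (P.mem_candidates.2 ⟨hx, hcand⟩)
    push Not at hcand
    obtain ⟨x', hx', hnot⟩ := hcand
    obtain ⟨y, hy, hyF⟩ := not_subset.1 hnot
    have hupper := ((P.mem_star hx).1 hx').1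
    have hlower := P.down_subset x' hupper hy
    exact mem_union_right _ (mem_biUnion.2 ⟨y, mem_sdiff.2 ⟨hlower, hyF⟩, mem_biUnion.2
      ⟨x', (P.mem_down_iff x' hupper y hlower).1 hy, (P.mem_star_comm hx hupper).1 hx'⟩⟩)
  have hsecond : ∀ y ∈ P.lower \ F,
      #((P.up y).biUnion P.star) ≤ P.upDeg * (P.downDeg * P.upDeg) := by
    intro y hy
    have hlower := (mem_sdiff.1 hy).1
    rw [← P.card_up y hlower]
    exact card_biUnion_le_card_mul _ _ _ fun x' hx' =>
      (P.card_star_le (P.up_subset y hlower hx')).trans_eq (by rw [P.card_up y hlower])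
  exact (card_le_card hcover).trans ((card_union_le _ _).trans
    (Nat.add_le_add_left (card_biUnion_le_card_mul _ _ _ hsecond) _))

end LayerPair

section IsolatedHoles

variable {n k : ℕ} {Δ B : Finset (Finset (Fin n))} {x x' : Finset (Fin n)}

/-- The holes of dimension `k` that meet no other such hole in a common facet. -/
def isolatedHoles (k : ℕ) (Δ : Finset (Finset (Fin n))) : Finset (Finset (Fin n)) :=
  Finset.univ.filter fun x => IsHole Δ k x ∧
    ∀ x' : Finset (Fin n), IsHole Δ k x' → x' ≠ x → (x ∩ x').card ≠ k

theorem mem_refill_iff_of_mem_free (hB : B ⊆ free k Δ) (hx : x ∈ free k Δ) :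
    x ∈ refill k Δ B ↔ x ∈ B := by
  rw [← refill_inter_free hB, mem_inter, refill_inter_free hB]
  exact (and_iff_left hx).symm

theorem isHole_refill (hB : B ⊆ free k Δ) (hx : #x = k + 1) (hdown : powersetCard k x ⊆ B) :
    IsHole (refill k Δ B) k x := by
  refine ⟨hx, fun hmem => ?_, fun y hyx hy => ?_⟩
  · have hxΔ : x ∈ Δ := (mem_refill_iff_of_notMem_free hB fun hfree => by
      have := card_of_mem_free hfree
      omega).1 hmem
    obtain ⟨y, hyx, hy⟩ := exists_subset_card_eq (show k ≤ #x by omega)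
    have hyfree := hB (hdown (mem_powersetCard.2 ⟨hyx, hy⟩))
    exact (mem_sdiff.1 hyfree).2 (mem_union_left _
      (mem_shadowAt.2 ⟨hy, x, mem_above.2 ⟨hxΔ, by omega⟩, hyx⟩))
  · have hyB := hdown (mem_powersetCard.2 ⟨hyx, hy⟩)
    exact (mem_refill_iff_of_mem_free hB (hB hyB)).2 hyB

theorem powersetCard_subset_of_isHole_refill (hB : B ⊆ free k Δ)
    (hfree : powersetCard k x ⊆ free k Δ) (hx : IsHole (refill k Δ B) k x) :
    powersetCard k x ⊆ B := fun y hy =>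
  (mem_refill_iff_of_mem_free hB (hfree hy)).1
    (hx.2.2 y (mem_powersetCard.1 hy).1 (mem_powersetCard.1 hy).2)

theorem exists_covered_nbr_of_notMem_isolatedHoles (hB : B ⊆ free k Δ)
    (hx : x ∈ (subsetLayers (Fin n) k).candidates (free k Δ)) (hdown : powersetCard k x ⊆ B)
    (hnot : x ∉ isolatedHoles k (refill k Δ B)) :
    ∃ x' ∈ ((subsetLayers (Fin n) k).star x).erase x, powersetCard k x' ⊆ B := by
  obtain ⟨hupper, hfree⟩ := (LayerPair.mem_candidates _).1 hx
  have hhole := isHole_refill hB (mem_layer.1 hupper) hdown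
  have hmeet : ¬ ∀ x', IsHole (refill k Δ B) k x' → x' ≠ x → #(x ∩ x') ≠ k := fun hall =>
    hnot (mem_filter.2 ⟨mem_univ x, hhole, hall⟩)
  push Not at hmeet
  obtain ⟨x', hhole', hne, hcap⟩ := hmeet
  have hstar : x' ∈ (subsetLayers (Fin n) k).star x := (LayerPair.mem_star _ hupper).2
    ⟨mem_layer.2 hhole'.1, x ∩ x', mem_powersetCard.2 ⟨inter_subset_left, hcap⟩,
      mem_powersetCard.2 ⟨inter_subset_right, hcap⟩⟩
  exact ⟨x', mem_erase.2 ⟨hne, hstar⟩,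
    powersetCard_subset_of_isHole_refill hB (hfree x' hstar) hhole'⟩

theorem subsetInd_sub_sum_nbr_le (hB : B ⊆ free k Δ)
    (hx : x ∈ (subsetLayers (Fin n) k).candidates (free k Δ)) :
    subsetInd (powersetCard k x) B - ∑ x' ∈ ((subsetLayers (Fin n) k).star x).erase x,
        subsetInd (powersetCard k x ∪ powersetCard k x') B ≤
      if x ∈ isolatedHoles k (refill k Δ B) then 1 else 0 := by
  have hnonneg : ∀ x' ∈ ((subsetLayers (Fin n) k).star x).erase x,
      0 ≤ subsetInd (powersetCard k x ∪ powersetCard k x') B := fun x' _ => subsetInd_nonneg _ _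
  have hsum := sum_nonneg hnonneg
  by_cases hdown : powersetCard k x ⊆ B
  · rw [subsetInd, if_pos hdown]
    split_ifs with hisolated
    · linarith
    obtain ⟨x', hx', hdown'⟩ :=
      exists_covered_nbr_of_notMem_isolatedHoles hB hx hdown hisolated
    have hterm := single_le_sum hnonneg hx'
    rw [subsetInd, if_pos (union_subset hdown hdown')] at hterm
    linarith
  · rw [subsetInd, if_neg hdown]
    split_ifs <;> linarith

theorem coveredCount_sub_coveredPairs_le_card_isolatedHoles (hB : B ⊆ free k Δ) :
    let P := subsetLayers (Fin n) k
    coveredCount P.down (P.candidates (free k Δ)) B -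
        coveredPairs P.down (P.candidates (free k Δ)) (fun x => (P.star x).erase x) B ≤
      #(isolatedHoles k (refill k Δ B)) := by
  intro P
  rw [coveredCount, coveredPairs, ← sum_sub_distrib]
  refine (sum_le_sum fun x hx => subsetInd_sub_sum_nbr_le hB hx).trans ?_
  rw [sum_boole]
  exact_mod_cast card_le_card fun x hx => (mem_filter.1 hx).2

end IsolatedHoles

section Fibres

variable {k : ℕ} {Δ : Finset (Finset (Fin (2 * k)))} {μ δ T : ℝ}

/-- The sets of size `k + 1` whose neighbourhood has only free facets. -/
def holeCandidates (k : ℕ) (Δ : Finset (Finset (Fin (2 * k)))) : Finset (Finset (Fin (2 * k))) :=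
  (subsetLayers (Fin (2 * k)) k).candidates (free k Δ)

/-- A bound on the expected number of covered neighbours of a hole candidate with covered facets. -/
def neighbourRate (k : ℕ) : ℝ := ((k + 1) * k : ℕ) * (1 / 2) ^ k

theorem upDeg_subsetLayers_middle (k : ℕ) : (subsetLayers (Fin (2 * k)) k).upDeg = k := by
  change Fintype.card (Fin (2 * k)) - k = k
  rw [Fintype.card_fin]
  omega

theorem choose_succ_le_card_holeCandidates_add (Δ : Finset (Finset (Fin (2 * k)))) :
    (2 * k).choose (k + 1) ≤ #(holeCandidates k Δ) + #(forced k Δ) * (k * ((k + 1) * k)) := by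
  have hforced : layer (Fin (2 * k)) k \ free k Δ ⊆ forced k Δ := by
    rw [free, sdiff_sdiff_right_self]
    exact inf_le_right
  calc (2 * k).choose (k + 1) = #(subsetLayers (Fin (2 * k)) k).upper := by
        simp [subsetLayers, card_layer]
    _ ≤ #(holeCandidates k Δ) + #(layer (Fin (2 * k)) k \ free k Δ) * (k * ((k + 1) * k)) := by
        have hupper := (subsetLayers (Fin (2 * k)) k).card_upper_le (free k Δ)
        rwa [upDeg_subsetLayers_middle] at hupper
    _ ≤ _ := by gcongr

theorem card_filter_fibre_lt_le (hk : 1 ≤ k) (hΔ : IsComplex Δ) (hμ : 0 < μ) (hδ : 0 < δ)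
    (hδ1 : δ < 1) (hT : T ≤ (1 - δ) * μ) (hcand : μ ≤ #(holeCandidates k Δ) * (1 / 2) ^ (k + 1)) :
    (#{Δ' ∈ fibre k Δ | (#(isolatedHoles k Δ') : ℝ) < T} : ℝ) ≤
      #(fibre k Δ) * failureBound (neighbourRate k) δ μ := by
  set P := subsetLayers (Fin (2 * k)) k
  set isolatedBound : Finset (Finset (Fin (2 * k))) → ℝ := fun B =>
    coveredCount P.down (holeCandidates k Δ) B -
      coveredPairs P.down (holeCandidates k Δ) (fun x => (P.star x).erase x) B
  set mean : ℝ := #(holeCandidates k Δ) * (1 / 2) ^ (k + 1) with hmean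
  have hnonempty : (holeCandidates k Δ).Nonempty := by
    rw [nonempty_iff_ne_empty]
    intro hempty
    rw [hmean, hempty, card_empty, Nat.cast_zero, zero_mul] at hcand
    linarith
  have hrefill : {Δ' ∈ fibre k Δ | (#(isolatedHoles k Δ') : ℝ) < T} ⊆
      {B ∈ (free k Δ).powerset | isolatedBound B < (1 - δ) * mean}.image (refill k Δ) := by
    intro Δ' hΔ'
    obtain ⟨hfibre, hfew⟩ := mem_filter.1 hΔ'
    rw [fibre_eq_image_refill hk hΔ] at hfibre
    obtain ⟨B, hB, rfl⟩ := mem_image.1 hfibre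
    refine mem_image_of_mem _ (mem_filter.2 ⟨hB, ?_⟩)
    calc isolatedBound B ≤ #(isolatedHoles k (refill k Δ B)) :=
          coveredCount_sub_coveredPairs_le_card_isolatedHoles (mem_powerset.1 hB)
      _ < T := hfew
      _ ≤ (1 - δ) * μ := hT
      _ ≤ (1 - δ) * mean := by gcongr
  calc (#{Δ' ∈ fibre k Δ | (#(isolatedHoles k Δ') : ℝ) < T} : ℝ)
      ≤ #{B ∈ (free k Δ).powerset | isolatedBound B < (1 - δ) * mean} := by
        exact_mod_cast (card_le_card hrefill).trans card_image_le
    _ ≤ 2 ^ #(free k Δ) * failureBound ((P.downDeg * P.upDeg : ℕ) * (1 / 2) ^ k) δ mean :=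
        (P.nearlyDisjoint_candidates (free k Δ) rfl).card_filter_lt_le hnonempty hδ
    _ = #(fibre k Δ) * failureBound (neighbourRate k) δ mean := by
        rw [card_fibre hk hΔ, upDeg_subsetLayers_middle, Nat.cast_pow, Nat.cast_ofNat]
        rfl
    _ ≤ #(fibre k Δ) * failureBound (neighbourRate k) δ μ := by
        gcongr
        exact failureBound_antitone (by rw [neighbourRate]; positivity) hδ hμ hcand

theorem card_filter_le_of_fibrewise {ι κ : Type*} [DecidableEq κ] {s : Finset ι} {f : ι → κ}
    {p : ι → Prop} [DecidablePred p] {c : ℝ}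
    (h : ∀ i ∈ s, (#{j ∈ s | p j ∧ f j = f i} : ℝ) ≤ #{j ∈ s | f j = f i} * c) :
    (#{j ∈ s | p j} : ℝ) ≤ #s * c := by
  rw [card_eq_sum_card_fiberwise (s := {j ∈ s | p j}) (t := s.image f) fun j hj =>
      mem_image_of_mem f (mem_filter.1 hj).1,
    card_eq_sum_card_fiberwise (s := s) (t := s.image f) fun j hj => mem_image_of_mem f hj]
  push_cast
  rw [sum_mul]
  refine sum_le_sum fun b hb => ?_
  obtain ⟨i, hi, rfl⟩ := mem_image.1 hb
  rw [filter_filter]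
  exact h i hi

variable (k) in
/-- The complexes with so few forced middle sets that almost all `(k + 1)`-sets are hole candidates.
The exponent leaves room for the `k * ((k + 1) * k)` candidates spoiled by each forced set. -/
def tameComplexes : Finset (Finset (Finset (Fin (2 * k)))) :=
  {Δ ∈ allComplexes (2 * k) | (#(forced k Δ) : ℝ) ≤ k.centralBinom / (k : ℝ) ^ 6}

theorem card_sdiff_tameComplexes_le (hk : 1 ≤ k)
    (hforced : ∑ Δ ∈ allComplexes (2 * k), (#(forced k Δ) : ℝ) ≤
      #(allComplexes (2 * k)) * k.centralBinom / (k : ℝ) ^ 8) :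
    (#(allComplexes (2 * k) \ tameComplexes k) : ℝ) ≤
      #(allComplexes (2 * k)) * (1 / (k : ℝ) ^ 2) := by
  have hthreshold : 0 < k.centralBinom / (k : ℝ) ^ 6 := by
    have := k.centralBinom_pos
    positivity
  refine le_of_mul_le_mul_right ?_ hthreshold
  calc #(allComplexes (2 * k) \ tameComplexes k) * (k.centralBinom / (k : ℝ) ^ 6)
      ≤ ∑ Δ ∈ allComplexes (2 * k) \ tameComplexes k, (#(forced k Δ) : ℝ) := by
        rw [← nsmul_eq_mul]
        refine card_nsmul_le_sum _ _ _ fun Δ hΔ => ?_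
        rw [tameComplexes, ← filter_not] at hΔ
        exact (not_le.1 (mem_filter.1 hΔ).2).le
    _ ≤ ∑ Δ ∈ allComplexes (2 * k), (#(forced k Δ) : ℝ) :=
        sum_le_sum_of_subset_of_nonneg sdiff_subset fun _ _ _ => Nat.cast_nonneg _
    _ ≤ #(allComplexes (2 * k)) * k.centralBinom / (k : ℝ) ^ 8 := hforced
    _ = _ := by field_simp

theorem le_card_holeCandidates (hk : 2 ≤ k) (hΔ : Δ ∈ tameComplexes k) :
    ((2 * k).choose (k + 1) : ℝ) - k.centralBinom / (k : ℝ) ^ 2 ≤ #(holeCandidates k Δ) := by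
  have hk2 : (2 : ℝ) ≤ k := by exact_mod_cast hk
  have hchoose : ((2 * k).choose (k + 1) : ℝ) ≤
      #(holeCandidates k Δ) + #(forced k Δ) * (k * ((k + 1) * k)) := by
    exact_mod_cast choose_succ_le_card_holeCandidates_add Δ
  have hspoiled : (#(forced k Δ) : ℝ) * (k * ((k + 1) * k)) ≤ k.centralBinom / (k : ℝ) ^ 2 :=
    calc (#(forced k Δ) : ℝ) * (k * ((k + 1) * k))
        ≤ k.centralBinom / (k : ℝ) ^ 6 * (k * (k ^ 2 * k)) := by
          gcongr
          · exact (mem_filter.1 hΔ).2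
          · nlinarith
      _ = k.centralBinom / (k : ℝ) ^ 2 := by field_simp
  linarith

theorem filter_tameComplexes_eq_fibre (hΔ : Δ ∈ tameComplexes k) :
    {Δ' ∈ tameComplexes k | offMiddle k Δ' = offMiddle k Δ} = fibre k Δ := by
  ext Δ'
  simp only [tameComplexes, fibre, mem_filter]
  constructor
  · exact fun h => ⟨h.1.1, h.2⟩
  · rintro ⟨hΔ', heq⟩
    exact ⟨⟨hΔ', by rw [forced_congr heq]; exact (mem_filter.1 hΔ).2⟩, heq⟩

variable (k) in
/-- A lower bound for the expected number of hole candidates whose facets are all faces, in a fibre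
of tame complexes. -/
def expectedHoles : ℝ :=
  (((2 * k).choose (k + 1) : ℝ) - k.centralBinom / (k : ℝ) ^ 2) * (1 / 2) ^ (k + 1)

theorem card_filter_tameComplexes_le (hk : 2 ≤ k) (hμ : 0 < expectedHoles k) (hδ : 0 < δ)
    (hδ1 : δ < 1) (hT : T ≤ (1 - δ) * expectedHoles k) :
    (#{Δ ∈ tameComplexes k | (#(isolatedHoles k Δ) : ℝ) < T} : ℝ) ≤
      #(tameComplexes k) * failureBound (neighbourRate k) δ (expectedHoles k) := by
  refine card_filter_le_of_fibrewise (f := offMiddle k) fun Δ hΔ => ?_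
  have hfilter : {Δ' ∈ tameComplexes k | (#(isolatedHoles k Δ') : ℝ) < T ∧
      offMiddle k Δ' = offMiddle k Δ} = {Δ' ∈ fibre k Δ | (#(isolatedHoles k Δ') : ℝ) < T} := by
    rw [← filter_tameComplexes_eq_fibre hΔ, filter_filter]
    simp only [and_comm]
  rw [hfilter, filter_tameComplexes_eq_fibre hΔ]
  refine card_filter_fibre_lt_le (by omega) (mem_allComplexes.1 (mem_filter.1 hΔ).1) hμ hδ hδ1 hT ?_
  rw [expectedHoles]
  gcongr
  exact le_card_holeCandidates hk hΔ

theorem card_filter_allComplexes_le (hk : 2 ≤ k) (hμ : 0 < expectedHoles k) (hδ : 0 < δ)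
    (hδ1 : δ < 1) (hT : T ≤ (1 - δ) * expectedHoles k)
    (hforced : ∑ Δ ∈ allComplexes (2 * k), (#(forced k Δ) : ℝ) ≤
      #(allComplexes (2 * k)) * k.centralBinom / (k : ℝ) ^ 8) :
    (#{Δ ∈ allComplexes (2 * k) | (#(isolatedHoles k Δ) : ℝ) < T} : ℝ) ≤
      #(allComplexes (2 * k)) *
        (1 / (k : ℝ) ^ 2 + failureBound (neighbourRate k) δ (expectedHoles k)) := by
  have hsplit : {Δ ∈ allComplexes (2 * k) | (#(isolatedHoles k Δ) : ℝ) < T} ⊆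
      (allComplexes (2 * k) \ tameComplexes k) ∪
        {Δ ∈ tameComplexes k | (#(isolatedHoles k Δ) : ℝ) < T} := by
    intro Δ hΔ
    obtain ⟨hmem, hfew⟩ := mem_filter.1 hΔ
    by_cases htame : Δ ∈ tameComplexes k
    · exact mem_union_right _ (mem_filter.2 ⟨htame, hfew⟩)
    · exact mem_union_left _ (mem_sdiff.2 ⟨hmem, htame⟩)
  calc (#{Δ ∈ allComplexes (2 * k) | (#(isolatedHoles k Δ) : ℝ) < T} : ℝ)
      ≤ #(allComplexes (2 * k) \ tameComplexes k) +
          #{Δ ∈ tameComplexes k | (#(isolatedHoles k Δ) : ℝ) < T} := by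
        exact_mod_cast (card_le_card hsplit).trans (card_union_le _ _)
    _ ≤ #(allComplexes (2 * k)) * (1 / (k : ℝ) ^ 2) +
          #(tameComplexes k) * failureBound (neighbourRate k) δ (expectedHoles k) :=
        add_le_add (card_sdiff_tameComplexes_le (by omega) hforced)
          (card_filter_tameComplexes_le hk hμ hδ hδ1 hT)
    _ ≤ #(allComplexes (2 * k)) * (1 / (k : ℝ) ^ 2) +
          #(allComplexes (2 * k)) * failureBound (neighbourRate k) δ (expectedHoles k) := by
        have hfailure : 0 ≤ failureBound (neighbourRate k) δ (expectedHoles k) := by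
          rw [failureBound, neighbourRate]
          positivity
        gcongr
        exact filter_subset _ _
    _ = _ := by ring

end Fibres

/-! ### Asymptotics -/

section Asymptotics

open Filter Topology

variable {k : ℕ} {δ ε : ℝ}

theorem centralBinom_mul_sqrt_div_four_pow (hk : 1 ≤ k) :
    k.centralBinom * √k / 4 ^ k = Stirling.stirlingSeq (2 * k) / Stirling.stirlingSeq k ^ 2 := by
  have hchoose : (k.centralBinom : ℝ) = (2 * k).factorial / (k.factorial : ℝ) ^ 2 := by
    rw [Nat.centralBinom, Nat.cast_choose ℝ (by omega), show 2 * k - k = k by omega, sq]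
  have hsqrt : √(2 * (2 * k : ℕ)) = 2 * √k := by
    rw [Nat.cast_mul, Nat.cast_ofNat, ← mul_assoc, ← sq, Real.sqrt_mul (by positivity),
      Real.sqrt_sq (by norm_num)]
  have hpow : ((2 * k : ℕ) / Real.exp 1) ^ (2 * k) = 4 ^ k * ((k / Real.exp 1) ^ k) ^ 2 := by
    push_cast
    rw [mul_div_assoc, mul_pow, pow_mul 2 2 k, mul_comm 2 k, pow_mul]
    norm_num
  rw [Stirling.stirlingSeq, Stirling.stirlingSeq, hchoose, hsqrt, hpow, div_pow _ _ 2,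
    mul_pow _ _ 2, Real.sq_sqrt (by positivity)]
  field_simp
  rw [Real.sq_sqrt (by positivity)]

theorem tendsto_centralBinom_mul_sqrt_div_four_pow :
    Tendsto (fun k : ℕ => k.centralBinom * √k / 4 ^ k) atTop (𝓝 (√Real.pi)⁻¹) := by
  have hstirling := Stirling.tendsto_stirlingSeq_sqrt_pi
  have hlimit := (hstirling.comp (tendsto_id.const_mul_atTop' two_pos)).div (hstirling.pow 2)
    (by positivity)
  rw [show √Real.pi / √Real.pi ^ 2 = (√Real.pi)⁻¹ by field_simp] at hlimit
  refine hlimit.congr' ?_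
  filter_upwards [eventually_ge_atTop 1] with k hk
  exact (centralBinom_mul_sqrt_div_four_pow hk).symm

theorem tendsto_one_div_sq_atTop : Tendsto (fun k : ℕ => 1 / (k : ℝ) ^ 2) atTop (𝓝 0) := by
  simpa only [div_pow, one_pow, ne_eq, OfNat.ofNat_ne_zero, not_false_eq_true, zero_pow] using
    (tendsto_one_div_atTop_nhds_zero_nat (𝕜 := ℝ)).pow 2

variable (k) in
/-- The asymptotic value `2 ^ ((n - 1) / 2) / √(π n)` of the number of isolated holes on `n = 2 * k`
vertices. -/
def holeThreshold : ℝ := (2 : ℝ) ^ (((2 * k : ℝ) - 1) / 2) / Real.sqrt (Real.pi * (2 * k))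

theorem holeThreshold_eq (k : ℕ) : holeThreshold k = 2 ^ k / (2 * (√Real.pi * √k)) := by
  have hpow : (2 : ℝ) ^ (((2 * k : ℝ) - 1) / 2) = 2 ^ k / √2 := by
    rw [show ((2 * k : ℝ) - 1) / 2 = k - 1 / 2 by ring, Real.rpow_sub two_pos,
      Real.rpow_natCast, ← Real.sqrt_eq_rpow]
  have hsqrt : √(Real.pi * (2 * k)) = √2 * (√Real.pi * √k) := by
    rw [Real.sqrt_mul Real.pi_pos.le, Real.sqrt_mul zero_le_two]
    ring
  rw [holeThreshold, hpow, hsqrt, div_div, ← mul_assoc, Real.mul_self_sqrt zero_le_two]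

theorem holeThreshold_pos (hk : 1 ≤ k) : 0 < holeThreshold k := by
  rw [holeThreshold_eq]
  positivity

theorem cast_choose_succ_eq (k : ℕ) :
    ((2 * k).choose (k + 1) : ℝ) = k.centralBinom * (k / (k + 1)) := by
  have hnat := Nat.choose_succ_right_eq (2 * k) k
  rw [show 2 * k - k = k by omega] at hnat
  have hreal : ((2 * k).choose (k + 1) : ℝ) * (k + 1) = k.centralBinom * k := by exact_mod_cast hnat
  rw [mul_div_assoc', eq_div_iff (by positivity), hreal]

theorem expectedHoles_eq (hk : 1 ≤ k) :
    expectedHoles k = holeThreshold k *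
      (k.centralBinom * √k / 4 ^ k * √Real.pi * (k / (k + 1) - 1 / (k : ℝ) ^ 2)) := by
  have hfour : (4 : ℝ) ^ k = 2 ^ k * 2 ^ k := by
    rw [← mul_pow]
    norm_num
  rw [expectedHoles, cast_choose_succ_eq, holeThreshold_eq, hfour, one_div_pow]
  field_simp
  ring

theorem tendsto_expectedHoles_div_holeThreshold :
    Tendsto (fun k => expectedHoles k / holeThreshold k) atTop (𝓝 1) := by
  have hcorrection : Tendsto (fun k : ℕ => (k : ℝ) / (k + 1) - 1 / (k : ℝ) ^ 2) atTop (𝓝 1) := by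
    simpa only [sub_zero] using
      (tendsto_natCast_div_add_atTop (1 : ℝ)).sub tendsto_one_div_sq_atTop
  have hlimit :=
    (tendsto_centralBinom_mul_sqrt_div_four_pow.mul_const (√Real.pi)).mul hcorrection
  rw [inv_mul_cancel₀ (by positivity), one_mul] at hlimit
  refine hlimit.congr' ?_
  filter_upwards [eventually_ge_atTop 1] with k hk
  rw [expectedHoles_eq hk, mul_div_cancel_left₀ _ (holeThreshold_pos hk).ne']

theorem tendsto_holeThreshold_inv : Tendsto (fun k => (holeThreshold k)⁻¹) atTop (𝓝 0) := by
  have hgeom := (tendsto_self_mul_const_pow_of_lt_one (r := (1 / 2 : ℝ)) (by norm_num)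
    (by norm_num)).const_mul (2 * √Real.pi)
  rw [mul_zero] at hgeom
  refine squeeze_zero' (Eventually.of_forall fun k => ?_) ?_ hgeom
  · rw [holeThreshold_eq]
    positivity
  · filter_upwards [eventually_ge_atTop 1] with k hk
    have hk1 : (1 : ℝ) ≤ k := by exact_mod_cast hk
    calc (holeThreshold k)⁻¹ = 2 * √Real.pi * (√k * (1 / 2) ^ k) := by
          rw [holeThreshold_eq, inv_div, one_div_pow]
          ring
      _ ≤ 2 * √Real.pi * (k * (1 / 2) ^ k) := by
          gcongr
          exact (Real.sqrt_le_left (by positivity)).2 (le_self_pow₀ hk1 two_ne_zero)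

theorem tendsto_expectedHoles_inv : Tendsto (fun k => (expectedHoles k)⁻¹) atTop (𝓝 0) := by
  have hlimit := tendsto_holeThreshold_inv.mul
    (tendsto_expectedHoles_div_holeThreshold.inv₀ one_ne_zero)
  rw [zero_mul] at hlimit
  refine hlimit.congr' ?_
  filter_upwards [eventually_ge_atTop 1] with k hk
  rw [inv_div, inv_mul_eq_div, div_div_cancel_left' (holeThreshold_pos hk).ne']

theorem tendsto_neighbourRate : Tendsto neighbourRate atTop (𝓝 0) := by
  have hlinear := tendsto_self_mul_const_pow_of_lt_one (r := (1 / 2 : ℝ)) (by norm_num)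
    (by norm_num)
  have hquadratic := tendsto_pow_const_mul_const_pow_of_lt_one 2 (r := (1 / 2 : ℝ)) (by norm_num)
    (by norm_num)
  have hlimit := hquadratic.add hlinear
  rw [add_zero] at hlimit
  refine hlimit.congr fun k => ?_
  rw [neighbourRate]
  push_cast
  ring

theorem tendsto_failureBound (δ : ℝ) :
    Tendsto (fun k => failureBound (neighbourRate k) δ (expectedHoles k)) atTop (𝓝 0) := by
  have hvariance := ((tendsto_neighbourRate.const_add 1).const_mul 4).mul
    (tendsto_expectedHoles_inv.const_mul (δ ^ 2)⁻¹)
  have hlimit := hvariance.add ((tendsto_neighbourRate.const_mul 2).div_const δ)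
  simp only [mul_zero, zero_div, add_zero] at hlimit
  refine hlimit.congr fun k => ?_
  rw [failureBound, div_eq_mul_inv _ (δ ^ 2 * expectedHoles k), mul_inv]

theorem eventually_holeThreshold_le (hδε : δ < ε) :
    ∀ᶠ k in atTop, (1 - ε) * holeThreshold k ≤ (1 - δ) * expectedHoles k := by
  have hlimit := tendsto_expectedHoles_div_holeThreshold.const_mul (1 - δ)
  filter_upwards [hlimit.eventually_const_lt (show 1 - ε < (1 - δ) * 1 by linarith),
    eventually_ge_atTop 1] with k hratio hk
  rw [← mul_div_assoc, lt_div_iff₀ (holeThreshold_pos hk)] at hratio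
  exact hratio.le

theorem eventually_expectedHoles_pos : ∀ᶠ k in atTop, 0 < expectedHoles k := by
  filter_upwards [tendsto_expectedHoles_div_holeThreshold.eventually_const_lt one_pos,
    eventually_ge_atTop 1] with k hratio hk
  exact (div_pos_iff_of_pos_right (holeThreshold_pos hk)).1 hratio

theorem eventually_one_sub_le_uniformProb (hδ : 0 < δ) (hδ1 : δ < 1) (hδε : δ < ε) :
    ∀ᶠ k : ℕ in atTop,
      1 - (1 / (k : ℝ) ^ 2 + failureBound (neighbourRate k) δ (expectedHoles k)) ≤
        uniformProb (2 * k) fun Δ => (1 - ε) * holeThreshold k ≤ #(isolatedHoles k Δ) := by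
  filter_upwards [eventually_holeThreshold_le hδε, eventually_sum_card_forced_le,
    eventually_expectedHoles_pos, eventually_ge_atTop 2] with k hthreshold hforced hμ hk
  have hfew := card_filter_allComplexes_le hk hμ hδ hδ1 hthreshold hforced
  have hcard : (0 : ℝ) < #(allComplexes (2 * k)) := by
    exact_mod_cast (pow_pos two_pos _).trans_le
      (two_pow_centralBinom_le_card_allComplexes (show 1 ≤ k by omega))
  have hsplit := card_filter_add_card_filter_not (s := allComplexes (2 * k))
    fun Δ => (1 - ε) * holeThreshold k ≤ #(isolatedHoles k Δ)
  simp only [not_le] at hsplit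
  rw [uniformProb, le_div_iff₀ hcard]
  rw [← hsplit] at hfew ⊢
  push_cast at hfew ⊢
  linarith

theorem uniformProb_le_one (n : ℕ) (P : Finset (Finset (Fin n)) → Prop) :
    uniformProb n P ≤ 1 :=
  div_le_one_of_le₀ (by exact_mod_cast card_filter_le _ _) (Nat.cast_nonneg _)

end Asymptotics

end UniformComplex

/-- For `Δ ~ U(n)` with `n` even, with high probability the number of holes `x`
of size `n/2 + 1` sharing no `(n/2)`-subset with any other hole is at least
`(1-ε)·2^{(n-1)/2}/√(πn)`. -/
theorem stmt6 (ε : ℝ) (hε : 0 < ε) :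
    Filter.Tendsto (fun m : ℕ =>
      uniformProb (2 * m) (fun Δ =>
        (1 - ε) * (2 : ℝ) ^ (((2 * m : ℝ) - 1) / 2) / Real.sqrt (Real.pi * (2 * m)) ≤
          ((Finset.univ.filter (fun x : Finset (Fin (2 * m)) =>
              IsHole Δ m x ∧
                ∀ x' : Finset (Fin (2 * m)), IsHole Δ m x' → x' ≠ x →
                  (x ∩ x').card ≠ m)).card : ℝ)))
      Filter.atTop (nhds 1) := by
  obtain ⟨δ, hδ, hδmin⟩ := exists_between (lt_min hε one_pos)
  obtain ⟨hδε, hδ1⟩ := lt_min_iff.1 hδmin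
  have hlower := (UniformComplex.tendsto_one_div_sq_atTop.add
    (UniformComplex.tendsto_failureBound δ)).const_sub 1
  rw [add_zero, sub_zero] at hlower
  have hmain := tendsto_of_tendsto_of_tendsto_of_le_of_le' hlower tendsto_const_nhds
    (UniformComplex.eventually_one_sub_le_uniformProb hδ hδ1 hδε)
    (Filter.Eventually.of_forall fun k => UniformComplex.uniformProb_le_one _ _)
  refine hmain.congr fun m => ?_
  simp only [UniformComplex.holeThreshold, UniformComplex.isolatedHoles, mul_div_assoc]
end
end

section
/- Fix real constants 0 < c < 1, ε > 0 and δ > 0, and let n range over values with cn ∈ ℕ, t = cn. Let p = p_n satisfy e^{−α(c)/c + ε} ≤ p_n ≤ 1, and let Δ ∼ RP(n,t,p_n). Then: (i) with probability tending to 1 there exists a (t+1)-element subset of [n] all of whose t-element subsets are faces of Δ; (ii) if moreover p_n ≤ 1 − ε, then with probability tending to 1 the number of (t+1)-element subsets of [n] all of whose t-element subsets are faces of Δ is at least exp((α(c)−δ)·n)·p_n^{cn}. -/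
open scoped Classical

noncomputable section

/-- The natural-log entropy function `α(c)`. -/
def entropy (c : ℝ) : ℝ := -c * Real.log c - (1 - c) * Real.log (1 - c)

/-- The simplicial complex generated by a family `F` of facets: all nonempty
subsets of members of `F`. -/
def genComplex {n : ℕ} (F : Finset (Finset (Fin n))) : Finset (Finset (Fin n)) :=
  Finset.univ.filter (fun x => x.Nonempty ∧ ∃ f ∈ F, x ⊆ f)

/-- The probability, under the random pure model `RP(n,t,p)` (each `t`-subset of
`[n]` is taken as a facet independently with probability `p`), of the event `P`
for the generated complex. -/
def rpProb (n t : ℕ) (p : ℝ) (P : Finset (Finset (Fin n)) → Prop) : ℝ :=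
  ∑ F ∈ (Finset.univ.filter (fun s : Finset (Fin n) => s.card = t)).powerset,
    (if P (genComplex F) then p ^ F.card * (1 - p) ^ (Nat.choose n t - F.card) else 0)

/-!
Second moment method. Let `X` be the number of `(t+1)`-sets all of whose `t`-subsets are facets.
Each `(t+1)`-set has `t + 1` subsets of size `t`, so `E X = C(n, t+1) p ^ (t+1)`. The events for
two `(t+1)`-sets are independent unless they share a `t`-subset, which happens for at most `n ^ 2`
partners of a given set; hence `Var X ≤ n ^ 2 * E X`, and Chebyshev's inequality shows
`X ≥ E X / 2` with probability at least `1 - 4 n ^ 2 / E X`.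

As `t = cn` is the mode of the binomial distribution with parameters `n` and `c`, its mass
`C(n, t) * exp (-α(c) n)` is at least `1 / (n + 1)`. So `C(n, t+1)` is `exp (α(c) n)` up to a
polynomial factor, and the lower bound on `p` makes `E X` exponentially large.
-/

open Finset Filter

section RandomSubset

variable {β ι : Type*} {T : Finset β} {p : ℝ}

/-- Expectation over the random subset `F` of `T` that contains each element of `T` independently
with probability `p`, as a linear functional on the functions of `F`. The probability of an event
is the expectation of its `0`-`1` indicator. -/
def randomSubsetExp (T : Finset β) (p : ℝ) : (Finset β → ℝ) →ₗ[ℝ] ℝ :=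
  ∑ F ∈ T.powerset, (p ^ #F * (1 - p) ^ (#T - #F)) • LinearMap.proj F

lemma randomSubsetExp_apply (T : Finset β) (p : ℝ) (f : Finset β → ℝ) :
    randomSubsetExp T p f = ∑ F ∈ T.powerset, p ^ #F * (1 - p) ^ (#T - #F) * f F := by
  simp [randomSubsetExp]

lemma randomSubsetExp_mono (hp0 : 0 ≤ p) (hp1 : p ≤ 1) {f g : Finset β → ℝ}
    (hfg : ∀ F ⊆ T, f F ≤ g F) : randomSubsetExp T p f ≤ randomSubsetExp T p g := by
  have := sub_nonneg.2 hp1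
  simp only [randomSubsetExp_apply]
  gcongr with F hF
  exact hfg F (mem_powerset.1 hF)

lemma randomSubsetExp_one (T : Finset β) (p : ℝ) : randomSubsetExp T p 1 = 1 := by
  simp [randomSubsetExp_apply, sum_pow_mul_eq_add_pow]

lemma randomSubsetExp_chebyshev_lower_tail (hp0 : 0 ≤ p) (hp1 : p ≤ 1) (X : Finset β → ℝ) (μ : ℝ)
    {a : ℝ} (ha : 0 < a) :
    1 - randomSubsetExp T p ((X - μ • 1) ^ 2) / a ^ 2 ≤
      randomSubsetExp T p (fun F => if μ - a ≤ X F then 1 else 0) := by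
  have pointwise (F : Finset β) :
      (1 - (a ^ 2)⁻¹ • (X - μ • 1) ^ 2 : Finset β → ℝ) F ≤ if μ - a ≤ X F then 1 else 0 := by
    have expand : (1 - (a ^ 2)⁻¹ • (X - μ • 1) ^ 2 : Finset β → ℝ) F =
        1 - (X F - μ) ^ 2 / a ^ 2 := by
      simp [div_eq_inv_mul]
    rw [expand]
    split_ifs with h
    · exact sub_le_self _ (by positivity)
    · rw [sub_nonpos, one_le_div (by positivity), sq_le_sq, abs_of_pos ha]
      exact (by linarith : a ≤ -(X F - μ)).trans (neg_le_abs _)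
  calc 1 - randomSubsetExp T p ((X - μ • 1) ^ 2) / a ^ 2
      = randomSubsetExp T p (1 - (a ^ 2)⁻¹ • (X - μ • 1) ^ 2) := by
        rw [map_sub, map_smul, randomSubsetExp_one, smul_eq_mul, div_eq_inv_mul]
    _ ≤ _ := randomSubsetExp_mono hp0 hp1 fun F _ => pointwise F

variable [DecidableEq β]

/-- The `0`-`1` indicator of the event `A ⊆ F`; partially applied to `A`, a random variable to which
`randomSubsetExp` applies. -/
def supersetIndicator (A F : Finset β) : ℝ := if A ⊆ F then 1 else 0

lemma supersetIndicator_mul (A B : Finset β) :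
    supersetIndicator A * supersetIndicator B = supersetIndicator (A ∪ B) := by
  ext F
  simp [supersetIndicator, union_subset_iff, ← ite_and, and_comm]

lemma randomSubsetExp_supersetIndicator {A : Finset β} (hA : A ⊆ T) (p : ℝ) :
    randomSubsetExp T p (supersetIndicator A) = p ^ #A := by
  have union_injOn : Set.InjOn (A ∪ ·) ((T \ A).powerset : Set (Finset β)) := by
    intro G hG G' hG' h
    simp only [coe_powerset, Set.mem_preimage, Set.mem_powerset_iff, coe_subset,
      subset_sdiff] at hG hG'
    rw [← union_sdiff_cancel_left hG.2.symm, show A ∪ G = A ∪ G' from h,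
      union_sdiff_cancel_left hG'.2.symm]
  calc randomSubsetExp T p (supersetIndicator A)
      = ∑ F ∈ Icc A T, p ^ #F * (1 - p) ^ (#T - #F) := by
        simp [randomSubsetExp_apply, supersetIndicator, Icc_eq_filter_powerset, sum_filter]
    _ = ∑ G ∈ (T \ A).powerset, p ^ #(A ∪ G) * (1 - p) ^ (#T - #(A ∪ G)) := by
        rw [Icc_eq_image_powerset hA, sum_image union_injOn]
    _ = ∑ G ∈ (T \ A).powerset, p ^ #A * (p ^ #G * (1 - p) ^ (#(T \ A) - #G)) := by
        refine sum_congr rfl fun G hG => ?_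
        have hGA : Disjoint A G := (subset_sdiff.1 (mem_powerset.1 hG)).2.symm
        rw [card_union_of_disjoint hGA, card_sdiff_of_subset hA, pow_add, Nat.sub_sub, mul_assoc]
    _ = p ^ #A := by
        rw [← mul_sum, sum_pow_mul_eq_add_pow, add_sub_cancel, one_pow, mul_one]

/-- The number of indices `x ∈ S` with `B x ⊆ F`, as a real-valued function of `F`: the
variable to which the second moment method is applied. -/
def containedCount (S : Finset ι) (B : ι → Finset β) : Finset β → ℝ :=
  ∑ x ∈ S, supersetIndicator (B x)

lemma containedCount_apply (S : Finset ι) (B : ι → Finset β) (F : Finset β) :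
    containedCount S B F = #{x ∈ S | B x ⊆ F} := by
  simp [containedCount, supersetIndicator]

variable {S : Finset ι} {B : ι → Finset β} {m D : ℕ}

lemma randomSubsetExp_containedCount (hB : ∀ x ∈ S, B x ⊆ T) (hm : ∀ x ∈ S, #(B x) = m) (p : ℝ) :
    randomSubsetExp T p (containedCount S B) = #S * p ^ m := by
  calc randomSubsetExp T p (containedCount S B)
      = ∑ _x ∈ S, p ^ m := by
        rw [containedCount, map_sum]
        exact sum_congr rfl fun x hx => by
          rw [randomSubsetExp_supersetIndicator (hB x hx), hm x hx]
    _ = #S * p ^ m := by rw [sum_const, nsmul_eq_mul]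

lemma randomSubsetExp_containedCount_sq (hB : ∀ x ∈ S, B x ⊆ T) (p : ℝ) :
    randomSubsetExp T p (containedCount S B ^ 2) = ∑ x ∈ S, ∑ y ∈ S, p ^ #(B x ∪ B y) := by
  simp only [containedCount, sq, sum_mul_sum, supersetIndicator_mul, map_sum]
  exact sum_congr rfl fun x hx => sum_congr rfl fun y hy =>
    randomSubsetExp_supersetIndicator (union_subset (hB x hx) (hB y hy)) p

lemma sum_pow_card_union_le (hp0 : 0 ≤ p) (hp1 : p ≤ 1) (hm : ∀ y ∈ S, #(B y) = m)
    {x : ι} (hx : x ∈ S) (hD : #{y ∈ S | ¬Disjoint (B x) (B y)} ≤ D) :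
    ∑ y ∈ S, p ^ #(B x ∪ B y) ≤ #S * (p ^ m * p ^ m) + D * p ^ m := by
  have term_le (y : ι) (hy : y ∈ S) :
      p ^ #(B x ∪ B y) ≤ p ^ m * p ^ m + if ¬Disjoint (B x) (B y) then p ^ m else 0 := by
    by_cases hd : Disjoint (B x) (B y)
    · simp [hd, card_union_of_disjoint, hm x hx, hm y hy, pow_add]
    · have union_le : p ^ #(B x ∪ B y) ≤ p ^ m :=
        pow_le_pow_of_le_one hp0 hp1 (hm x hx ▸ card_le_card subset_union_left)
      rw [if_pos hd]
      exact union_le.trans (le_add_of_nonneg_left (by positivity))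
  calc ∑ y ∈ S, p ^ #(B x ∪ B y)
      ≤ ∑ y ∈ S, (p ^ m * p ^ m + if ¬Disjoint (B x) (B y) then p ^ m else 0) :=
        sum_le_sum term_le
    _ = #S * (p ^ m * p ^ m) + #{y ∈ S | ¬Disjoint (B x) (B y)} * p ^ m := by
        rw [sum_add_distrib, ← sum_filter, sum_const, sum_const, nsmul_eq_mul, nsmul_eq_mul]
    _ ≤ #S * (p ^ m * p ^ m) + D * p ^ m := by gcongr

lemma randomSubsetExp_containedCount_sub_mean_sq_le (hp0 : 0 ≤ p) (hp1 : p ≤ 1)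
    (hB : ∀ x ∈ S, B x ⊆ T) (hm : ∀ x ∈ S, #(B x) = m)
    (hD : ∀ x ∈ S, #{y ∈ S | ¬Disjoint (B x) (B y)} ≤ D) :
    randomSubsetExp T p ((containedCount S B - (#S * p ^ m) • 1) ^ 2) ≤ D * (#S * p ^ m) := by
  set μ : ℝ := #S * p ^ m with hμ
  have second_moment_le : randomSubsetExp T p (containedCount S B ^ 2) ≤ μ ^ 2 + D * μ := by
    calc randomSubsetExp T p (containedCount S B ^ 2)
        = ∑ x ∈ S, ∑ y ∈ S, p ^ #(B x ∪ B y) := randomSubsetExp_containedCount_sq hB p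
      _ ≤ ∑ _x ∈ S, (#S * (p ^ m * p ^ m) + D * p ^ m) :=
          sum_le_sum fun x hx => sum_pow_card_union_le hp0 hp1 hm hx (hD x hx)
      _ = μ ^ 2 + D * μ := by rw [sum_const, nsmul_eq_mul, hμ]; ring
  have expand : (containedCount S B - μ • 1) ^ 2 =
      containedCount S B ^ 2 - (2 * μ) • containedCount S B + (μ ^ 2) • 1 := by
    ext F
    simp only [Pi.pow_apply, Pi.sub_apply, Pi.add_apply, Pi.smul_apply, Pi.one_apply, smul_eq_mul]
    ring
  rw [expand, map_add, map_sub, map_smul, map_smul, randomSubsetExp_one,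
    randomSubsetExp_containedCount hB hm, smul_eq_mul, smul_eq_mul]
  linarith

lemma one_sub_le_randomSubsetExp_half_mean_le_containedCount (hp0 : 0 < p) (hp1 : p ≤ 1)
    (hS : S.Nonempty) (hB : ∀ x ∈ S, B x ⊆ T) (hm : ∀ x ∈ S, #(B x) = m)
    (hD : ∀ x ∈ S, #{y ∈ S | ¬Disjoint (B x) (B y)} ≤ D) :
    1 - 4 * D / (#S * p ^ m) ≤ randomSubsetExp T p
      (fun F => if #S * p ^ m / 2 ≤ containedCount S B F then 1 else 0) := by
  have hvar := randomSubsetExp_containedCount_sub_mean_sq_le hp0.le hp1 hB hm hD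
  have hμ : 0 < #S * p ^ m := mul_pos (Nat.cast_pos.2 hS.card_pos) (pow_pos hp0 m)
  set μ : ℝ := #S * p ^ m
  calc 1 - 4 * D / μ = 1 - D * μ / (μ / 2) ^ 2 := by field_simp; ring
    _ ≤ 1 - randomSubsetExp T p ((containedCount S B - μ • 1) ^ 2) / (μ / 2) ^ 2 := by gcongr
    _ ≤ _ := randomSubsetExp_chebyshev_lower_tail hp0.le hp1 _ μ (half_pos hμ)
    _ = _ := by rw [sub_half]

end RandomSubset

section RandomPureComplex

lemma rpProb_eq_randomSubsetExp (n t : ℕ) (p : ℝ) (P : Finset (Finset (Fin n)) → Prop) :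
    rpProb n t p P = randomSubsetExp (powersetCard t univ) p
      (fun F => if P (genComplex F) then 1 else 0) := by
  simp [rpProb, randomSubsetExp_apply]

lemma rpProb_mono {n t : ℕ} {p : ℝ} (hp0 : 0 ≤ p) (hp1 : p ≤ 1)
    {P Q : Finset (Finset (Fin n)) → Prop} (hPQ : ∀ Δ, P Δ → Q Δ) :
    rpProb n t p P ≤ rpProb n t p Q := by
  simp only [rpProb_eq_randomSubsetExp]
  refine randomSubsetExp_mono hp0 hp1 fun F _ => ?_
  split_ifs with hP hQ <;> first | exact absurd (hPQ _ hP) hQ | norm_num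

/-- The `(t+1)`-sets all of whose `t`-subsets are faces of `Δ`. When `Δ` has no faces of size
`t + 1`, these are the boundaries of `t`-simplices contained in `Δ`. -/
def hollowSimplices {n : ℕ} (t : ℕ) (Δ : Finset (Finset (Fin n))) : Finset (Finset (Fin n)) :=
  {x | #x = t + 1 ∧ ∀ y ⊆ x, #y = t → y ∈ Δ}

lemma mem_genComplex_iff_of_card_eq {n t : ℕ} (ht : 0 < t) {F : Finset (Finset (Fin n))}
    (hF : F ⊆ powersetCard t univ) {y : Finset (Fin n)} (hy : #y = t) :
    y ∈ genComplex F ↔ y ∈ F := by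
  simp only [genComplex, mem_filter, mem_univ, true_and]
  constructor
  · rintro ⟨-, f, hf, hyf⟩
    have hfy : #f ≤ #y := ((mem_powersetCard_univ.1 (hF hf)).trans hy.symm).le
    rwa [eq_of_subset_of_card_le hyf hfy]
  · exact fun hyF => ⟨card_pos.1 (hy ▸ ht), y, hyF, Subset.rfl⟩

lemma card_hollowSimplices_genComplex {n t : ℕ} (ht : 0 < t) {F : Finset (Finset (Fin n))}
    (hF : F ⊆ powersetCard t univ) :
    (#(hollowSimplices t (genComplex F)) : ℝ) =
      containedCount (powersetCard (t + 1) univ) (powersetCard t) F := by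
  rw [containedCount_apply]
  congr 2
  ext x
  simp only [hollowSimplices, mem_filter, mem_univ, true_and, mem_powersetCard_univ]
  refine and_congr_right fun _ => ⟨fun h y hy => ?_, fun h y hyx hyt => ?_⟩
  · obtain ⟨hyx, hyt⟩ := mem_powersetCard.1 hy
    exact (mem_genComplex_iff_of_card_eq ht hF hyt).1 (h y hyx hyt)
  · exact (mem_genComplex_iff_of_card_eq ht hF hyt).2 (h (mem_powersetCard.2 ⟨hyx, hyt⟩))

lemma card_filter_not_disjoint_powersetCard_le {α : Type*} [Fintype α] [DecidableEq α] {t : ℕ}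
    {x : Finset α} (hx : #x = t + 1) :
    #{y ∈ powersetCard (t + 1) univ | ¬Disjoint (powersetCard t x) (powersetCard t y)} ≤
      Fintype.card α ^ 2 := by
  have subset_image : ({y ∈ powersetCard (t + 1) univ |
      ¬Disjoint (powersetCard t x) (powersetCard t y)} : Finset (Finset α)) ⊆
        (univ : Finset (α × α)).image fun ab => insert ab.2 (x.erase ab.1) := by
    intro y hy
    obtain ⟨hyt, hxy⟩ := mem_filter.1 hy
    obtain ⟨z, hzx, hzy⟩ := not_disjoint_iff.1 hxy
    rw [mem_powersetCard] at hzx hzy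
    rw [mem_powersetCard_univ] at hyt
    obtain ⟨a, ha, rfl⟩ := exists_eq_insert_iff.2 ⟨hzx.1, by rw [hzx.2, hx]⟩
    obtain ⟨b, -, rfl⟩ := exists_eq_insert_iff.2 ⟨hzy.1, by rw [hzy.2, hyt]⟩
    exact mem_image.2 ⟨(a, b), mem_univ _, by rw [erase_insert ha]⟩
  calc _ ≤ #((univ : Finset (α × α)).image fun ab => insert ab.2 (x.erase ab.1)) :=
        card_le_card subset_image
    _ ≤ #(univ : Finset (α × α)) := card_image_le
    _ = Fintype.card α ^ 2 := by rw [card_univ, Fintype.card_prod, sq]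

lemma one_sub_le_rpProb_half_mean_le_card_hollowSimplices {n t : ℕ} (ht : 0 < t) (htn : t < n)
    {p : ℝ} (hp0 : 0 < p) (hp1 : p ≤ 1) :
    1 - 4 * n ^ 2 / (n.choose (t + 1) * p ^ (t + 1)) ≤
      rpProb n t p (fun Δ => n.choose (t + 1) * p ^ (t + 1) / 2 ≤ #(hollowSimplices t Δ)) := by
  have card_simplices : #(powersetCard (t + 1) (univ : Finset (Fin n))) = n.choose (t + 1) := by
    rw [card_powersetCard, card_univ, Fintype.card_fin]
  have second_moment := one_sub_le_randomSubsetExp_half_mean_le_containedCount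
    (T := powersetCard t univ) (S := powersetCard (t + 1) (univ : Finset (Fin n)))
    (B := powersetCard t) (m := t + 1) (D := n ^ 2) hp0 hp1
    (powersetCard_nonempty.2 (by simpa using htn))
    (fun x _ => powersetCard_mono (subset_univ x))
    (fun x hx => by rw [card_powersetCard, mem_powersetCard_univ.1 hx, Nat.choose_succ_self_right])
    (fun x hx => by
      simpa using card_filter_not_disjoint_powersetCard_le (mem_powersetCard_univ.1 hx))
  rw [card_simplices, Nat.cast_pow] at second_moment
  rw [rpProb_eq_randomSubsetExp]
  refine second_moment.trans (randomSubsetExp_mono hp0.le hp1 fun F hF => ?_)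
  rw [card_hollowSimplices_genComplex ht hF]

end RandomPureComplex

section BinomialMode

/-- The mass at `k` of the binomial distribution with parameters `n` and `c`. The exponent
`n - k` truncates for `k > n`, where the mass vanishes because `n.choose k = 0`. -/
def binomialMass (n : ℕ) (c : ℝ) (k : ℕ) : ℝ := c ^ k * (1 - c) ^ (n - k) * n.choose k

lemma sum_binomialMass (n : ℕ) (c : ℝ) : ∑ k ∈ range (n + 1), binomialMass n c k = 1 := by
  simp only [binomialMass]
  rw [← add_pow, add_sub_cancel, one_pow]

variable {n t : ℕ} {c : ℝ}

lemma binomialMass_nonneg (hc0 : 0 ≤ c) (hc1 : c ≤ 1) (n k : ℕ) : 0 ≤ binomialMass n c k := by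
  have : 0 ≤ 1 - c := sub_nonneg.2 hc1
  unfold binomialMass
  positivity

lemma binomialMass_succ_mul (n : ℕ) (c : ℝ) (k : ℕ) :
    binomialMass n c (k + 1) * ((k + 1) * (1 - c)) = binomialMass n c k * ((n - k) * c) := by
  rcases lt_or_ge k n with hk | hk
  · have choose_succ : (n.choose (k + 1) : ℝ) * (k + 1) = n.choose k * (n - k) := by
      rw [← Nat.cast_sub hk.le]
      exact_mod_cast Nat.choose_succ_right_eq n k
    rw [binomialMass, binomialMass, show n - k = n - (k + 1) + 1 by omega, pow_succ, pow_succ]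
    linear_combination (c ^ k * c * (1 - c) ^ (n - (k + 1)) * (1 - c)) * choose_succ
  · rcases hk.eq_or_lt with rfl | hk
    · simp [binomialMass]
    · simp [binomialMass, Nat.choose_eq_zero_of_lt hk,
        Nat.choose_eq_zero_of_lt (hk.trans k.lt_succ_self)]

lemma binomialMass_le_succ (hc0 : 0 ≤ c) (hc1 : c < 1) {k : ℕ} (hk : k + 1 ≤ (n + 1) * c) :
    binomialMass n c k ≤ binomialMass n c (k + 1) := by
  have hpos : 0 < ((k : ℝ) + 1) * (1 - c) := mul_pos (by positivity) (sub_pos.2 hc1)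
  refine le_of_mul_le_mul_right ?_ hpos
  rw [binomialMass_succ_mul]
  exact mul_le_mul_of_nonneg_left (by linarith) (binomialMass_nonneg hc0 hc1.le n k)

lemma binomialMass_succ_le (hc0 : 0 ≤ c) (hc1 : c < 1) {k : ℕ} (hk : (n + 1) * c ≤ k + 1) :
    binomialMass n c (k + 1) ≤ binomialMass n c k := by
  have hpos : 0 < ((k : ℝ) + 1) * (1 - c) := mul_pos (by positivity) (sub_pos.2 hc1)
  refine le_of_mul_le_mul_right ?_ hpos
  rw [binomialMass_succ_mul]
  exact mul_le_mul_of_nonneg_left (by linarith) (binomialMass_nonneg hc0 hc1.le n k)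

lemma binomialMass_le_mode (hc0 : 0 ≤ c) (hc1 : c < 1) (ht₁ : t ≤ (n + 1) * c)
    (ht₂ : (n + 1) * c ≤ t + 1) (k : ℕ) : binomialMass n c k ≤ binomialMass n c t := by
  rcases le_total t k with htk | hkt
  · have anti : AntitoneOn (binomialMass n c) (Set.Ici t) :=
      antitoneOn_nat_Ici_of_succ_le fun j hj => binomialMass_succ_le hc0 hc1 <| by
        have : (t : ℝ) ≤ j := Nat.cast_le.2 hj
        linarith
    exact anti Set.self_mem_Ici htk htk
  · have mono : MonotoneOn (binomialMass n c) (Set.Iic t) :=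
      monotoneOn_of_le_add_one Set.ordConnected_Iic fun j _ _ hj =>
        binomialMass_le_succ hc0 hc1 <| by
          have : ((j + 1 : ℕ) : ℝ) ≤ t := Nat.cast_le.2 hj
          push_cast at this
          linarith
    exact mono hkt Set.self_mem_Iic hkt

lemma one_le_succ_mul_binomialMass_mode (hc0 : 0 ≤ c) (hc1 : c < 1) (ht₁ : t ≤ (n + 1) * c)
    (ht₂ : (n + 1) * c ≤ t + 1) : 1 ≤ (n + 1) * binomialMass n c t := by
  calc 1 = ∑ k ∈ range (n + 1), binomialMass n c k := (sum_binomialMass n c).symm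
    _ ≤ ∑ _k ∈ range (n + 1), binomialMass n c t :=
        sum_le_sum fun k _ => binomialMass_le_mode hc0 hc1 ht₁ ht₂ k
    _ = (n + 1) * binomialMass n c t := by simp

end BinomialMode

section EntropyBounds

variable {n t : ℕ} {c : ℝ}

lemma pow_mul_pow_eq_exp_neg_entropy (hc0 : 0 < c) (hc1 : c < 1) (ht : (t : ℝ) = c * n) :
    c ^ t * (1 - c) ^ (n - t) = Real.exp (-(entropy c * n)) := by
  have htn : t ≤ n := by
    have : (t : ℝ) ≤ n := ht ▸ mul_le_of_le_one_left n.cast_nonneg hc1.le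
    exact_mod_cast this
  calc c ^ t * (1 - c) ^ (n - t)
      = Real.exp (t * Real.log c) * Real.exp ((n - t : ℕ) * Real.log (1 - c)) := by
        rw [Real.exp_nat_mul, Real.exp_nat_mul, Real.exp_log hc0, Real.exp_log (sub_pos.2 hc1)]
    _ = Real.exp (-(entropy c * n)) := by
        rw [← Real.exp_add, Nat.cast_sub htn, ht, entropy]
        congr 1
        ring

lemma exp_entropy_mul_le_choose (hc0 : 0 < c) (hc1 : c < 1) (ht : (t : ℝ) = c * n) :
    Real.exp (entropy c * n) ≤ (n + 1) * n.choose t := by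
  have mode : 1 ≤ (n + 1) * binomialMass n c t :=
    one_le_succ_mul_binomialMass_mode hc0.le hc1 (by linarith) (by linarith)
  rw [binomialMass, pow_mul_pow_eq_exp_neg_entropy hc0 hc1 ht, Real.exp_neg] at mode
  calc Real.exp (entropy c * n)
      ≤ Real.exp (entropy c * n) *
          ((n + 1) * ((Real.exp (entropy c * n))⁻¹ * n.choose t)) :=
        le_mul_of_one_le_right (Real.exp_nonneg _) mode
    _ = (n + 1) * n.choose t := by field_simp

lemma choose_le_succ_mul_choose_succ (htn : t < n) :
    n.choose t ≤ (n + 1) * n.choose (t + 1) := by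
  calc n.choose t ≤ n.choose t * (n - t) := Nat.le_mul_of_pos_right _ (Nat.sub_pos_of_lt htn)
    _ = (t + 1) * n.choose (t + 1) := by rw [← Nat.choose_succ_right_eq, mul_comm]
    _ ≤ (n + 1) * n.choose (t + 1) := by gcongr

lemma exp_entropy_mul_le_choose_succ (hc0 : 0 < c) (hc1 : c < 1) (htn : t < n)
    (ht : (t : ℝ) = c * n) :
    Real.exp (entropy c * n) ≤ (n + 1) ^ 2 * n.choose (t + 1) := by
  calc Real.exp (entropy c * n) ≤ (n + 1) * n.choose t := exp_entropy_mul_le_choose hc0 hc1 ht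
    _ ≤ (n + 1) * ((n + 1) * n.choose (t + 1)) := by
        gcongr
        exact_mod_cast choose_le_succ_mul_choose_succ htn
    _ = (n + 1) ^ 2 * n.choose (t + 1) := by ring

variable {ε p : ℝ}

lemma exp_mul_exp_le_mean (hc0 : 0 < c) (hc1 : c < 1) (htn : t < n) (ht : (t : ℝ) = c * n)
    (hp : Real.exp (-entropy c / c + ε) ≤ p) :
    Real.exp (-entropy c / c + ε) * Real.exp (ε * c * n) ≤
      (n + 1) ^ 2 * (n.choose (t + 1) * p ^ (t + 1)) := by
  set p₀ := Real.exp (-entropy c / c + ε) with hp₀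
  have threshold_pow : Real.exp (entropy c * n) * p₀ ^ t = Real.exp (ε * c * n) := by
    rw [hp₀, ← Real.exp_nat_mul, ← Real.exp_add, ht]
    congr 1
    field_simp
    ring
  calc p₀ * Real.exp (ε * c * n) = Real.exp (entropy c * n) * p₀ ^ (t + 1) := by
        rw [← threshold_pow]; ring
    _ ≤ ((n + 1) ^ 2 * n.choose (t + 1)) * p ^ (t + 1) := by
        gcongr
        exact exp_entropy_mul_le_choose_succ hc0 hc1 htn ht
    _ = (n + 1) ^ 2 * (n.choose (t + 1) * p ^ (t + 1)) := by ring

lemma exp_mul_pow_le_half_mean {δ p₀ : ℝ} (hc0 : 0 < c) (hc1 : c < 1) (htn : t < n)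
    (ht : (t : ℝ) = c * n) (hp₀ : 0 < p₀) (hp : p₀ ≤ p)
    (hδn : 2 / p₀ * (n + 1) ^ 2 ≤ Real.exp (δ * n)) :
    Real.exp ((entropy c - δ) * n) * p ^ t ≤ n.choose (t + 1) * p ^ (t + 1) / 2 := by
  have hp0 : 0 < p := hp₀.trans_le hp
  have exp_split :
      Real.exp ((entropy c - δ) * n) * Real.exp (δ * n) = Real.exp (entropy c * n) := by
    rw [← Real.exp_add]
    congr 1
    ring
  have exp_le_choose : Real.exp ((entropy c - δ) * n) * (2 / p₀) ≤ n.choose (t + 1) := by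
    refine le_of_mul_le_mul_left ?_ (by positivity : (0 : ℝ) < (n + 1) ^ 2)
    calc (n + 1) ^ 2 * (Real.exp ((entropy c - δ) * n) * (2 / p₀))
        = Real.exp ((entropy c - δ) * n) * (2 / p₀ * (n + 1) ^ 2) := by ring
      _ ≤ Real.exp ((entropy c - δ) * n) * Real.exp (δ * n) := by gcongr
      _ ≤ (n + 1) ^ 2 * n.choose (t + 1) :=
          exp_split ▸ exp_entropy_mul_le_choose_succ hc0 hc1 htn ht
  calc Real.exp ((entropy c - δ) * n) * p ^ t
      = Real.exp ((entropy c - δ) * n) * (2 / p₀) * (p₀ * p ^ t) / 2 := by field_simp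
    _ ≤ n.choose (t + 1) * (p * p ^ t) / 2 := by gcongr
    _ = n.choose (t + 1) * p ^ (t + 1) / 2 := by rw [pow_succ']

end EntropyBounds

lemma eventually_const_mul_succ_pow_le_exp (K : ℝ) (k : ℕ) {a : ℝ} (ha : 0 < a) :
    ∀ᶠ n : ℕ in atTop, K * ((n : ℝ) + 1) ^ k ≤ Real.exp (a * n) := by
  have tendsto_succ : Tendsto (fun n : ℕ => (n : ℝ) + 1) atTop atTop :=
    tendsto_atTop_add_const_right _ 1 tendsto_natCast_atTop_atTop
  have little_o :=
    ((isLittleO_pow_exp_pos_mul_atTop k ha).comp_tendsto tendsto_succ).const_mul_left K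
  filter_upwards [little_o.bound (Real.exp_pos (-a))] with n hn
  calc K * ((n : ℝ) + 1) ^ k ≤ ‖K * ((n : ℝ) + 1) ^ k‖ := Real.le_norm_self _
    _ ≤ Real.exp (-a) * ‖Real.exp (a * (n + 1))‖ := hn
    _ = Real.exp (a * n) := by
        rw [Real.norm_of_nonneg (Real.exp_nonneg _), ← Real.exp_add]
        congr 1
        ring

lemma eventually_four_mul_sq_div_mean_le {c ε η : ℝ} (hc0 : 0 < c) (hc1 : c < 1) (hε : 0 < ε)
    (hη : 0 < η) :
    ∀ᶠ n : ℕ in atTop, ∀ t : ℕ, t < n → (t : ℝ) = c * n →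
      ∀ p : ℝ, Real.exp (-entropy c / c + ε) ≤ p →
        4 * n ^ 2 / (n.choose (t + 1) * p ^ (t + 1)) ≤ η := by
  set p₀ := Real.exp (-entropy c / c + ε)
  have hp₀ : 0 < p₀ := Real.exp_pos _
  filter_upwards [eventually_const_mul_succ_pow_le_exp (4 / (p₀ * η)) 4 (mul_pos hε hc0)]
    with n growth t htn ht p hp
  have hp0 : 0 < p := hp₀.trans_le hp
  have choose_pos : 0 < (n.choose (t + 1) : ℝ) := Nat.cast_pos.2 (Nat.choose_pos htn)
  set μ : ℝ := n.choose (t + 1) * p ^ (t + 1)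
  rw [div_le_iff₀ (by positivity)]
  refine le_of_mul_le_mul_left ?_ (by positivity : (0 : ℝ) < (n + 1) ^ 2)
  calc ((n : ℝ) + 1) ^ 2 * (4 * n ^ 2) ≤ (n + 1) ^ 2 * (4 * (n + 1) ^ 2) := by
        gcongr
        linarith
    _ = η * (p₀ * (4 / (p₀ * η) * (n + 1) ^ 4)) := by field_simp
    _ ≤ η * (p₀ * Real.exp (ε * c * n)) := by gcongr
    _ ≤ η * ((n + 1) ^ 2 * μ) := by
        gcongr η * ?_
        exact exp_mul_exp_le_mean hc0 hc1 htn ht hp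
    _ = (n + 1) ^ 2 * (η * μ) := by ring

lemma eventually_le_rpProb_exp_mul_pow_le_card_hollowSimplices {c ε δ η : ℝ} (hc0 : 0 < c)
    (hc1 : c < 1) (hε : 0 < ε) (hδ : 0 < δ) (hη : 0 < η) :
    ∀ᶠ n : ℕ in atTop, ∀ t : ℕ, (t : ℝ) = c * n →
      ∀ p : ℝ, Real.exp (-entropy c / c + ε) ≤ p → p ≤ 1 →
        1 - η ≤ rpProb n t p (fun Δ =>
          Real.exp ((entropy c - δ) * n) * p ^ t ≤ (#(hollowSimplices t Δ) : ℝ)) := by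
  filter_upwards [eventually_gt_atTop 0, eventually_four_mul_sq_div_mean_le hc0 hc1 hε hη,
    eventually_const_mul_succ_pow_le_exp (2 / Real.exp (-entropy c / c + ε)) 2 hδ]
    with n hn mean_large growth t ht p hp hp1
  have hn' : (0 : ℝ) < n := Nat.cast_pos.2 hn
  have ht0 : 0 < t := by
    have : (0 : ℝ) < t := ht ▸ mul_pos hc0 hn'
    exact_mod_cast this
  have htn : t < n := by
    have : (t : ℝ) < n := ht ▸ mul_lt_of_lt_one_left hn' hc1
    exact_mod_cast this
  have hp0 : 0 < p := (Real.exp_pos _).trans_le hp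
  calc 1 - η ≤ 1 - 4 * n ^ 2 / (n.choose (t + 1) * p ^ (t + 1)) :=
        sub_le_sub_left (mean_large t htn ht p hp) 1
    _ ≤ _ := one_sub_le_rpProb_half_mean_le_card_hollowSimplices ht0 htn hp0 hp1
    _ ≤ _ := rpProb_mono hp0.le hp1 fun _ =>
        (exp_mul_pow_le_half_mean hc0 hc1 htn ht (Real.exp_pos _) hp growth).trans

theorem stmt7_general (c ε δ : ℝ) (hc0 : 0 < c) (hc1 : c < 1) (hε : 0 < ε) (hδ : 0 < δ)
    (p : ℕ → ℝ) (hp1 : ∀ n : ℕ, Real.exp (-entropy c / c + ε) ≤ p n)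
    (hp2 : ∀ n : ℕ, p n ≤ 1) :
    (∀ ε' : ℝ, 0 < ε' → ∃ N : ℕ, ∀ n : ℕ, N ≤ n → ∀ t : ℕ, (t : ℝ) = c * n →
        1 - ε' ≤ rpProb n t (p n)
          (fun Δ => ∃ x : Finset (Fin n), x.card = t + 1 ∧
            ∀ y ⊆ x, y.card = t → y ∈ Δ)) ∧
      ∀ ε' : ℝ, 0 < ε' → ∃ N : ℕ, ∀ n : ℕ, N ≤ n → ∀ t : ℕ, (t : ℝ) = c * n →
        1 - ε' ≤ rpProb n t (p n)
          (fun Δ =>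
            Real.exp ((entropy c - δ) * n) * (p n) ^ t ≤
              ((Finset.univ.filter (fun x : Finset (Fin n) =>
                x.card = t + 1 ∧ ∀ y ⊆ x, y.card = t → y ∈ Δ)).card : ℝ)) := by
  have count_large (ε' : ℝ) (hε' : 0 < ε') :
      ∃ N : ℕ, ∀ n : ℕ, N ≤ n → ∀ t : ℕ, (t : ℝ) = c * n → 1 - ε' ≤ rpProb n t (p n)
        (fun Δ => Real.exp ((entropy c - δ) * n) * (p n) ^ t ≤ (#(hollowSimplices t Δ) : ℝ)) := by
    obtain ⟨N, hN⟩ := eventually_atTop.1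
      (eventually_le_rpProb_exp_mul_pow_le_card_hollowSimplices hc0 hc1 hε hδ hε')
    exact ⟨N, fun n hn t ht => hN n hn t ht (p n) (hp1 n) (hp2 n)⟩
  refine ⟨fun ε' hε' => ?_, count_large⟩
  obtain ⟨N, hN⟩ := count_large ε' hε'
  refine ⟨N, fun n hn t ht => (hN n hn t ht).trans ?_⟩
  have hp0 : 0 < p n := (Real.exp_pos _).trans_le (hp1 n)
  refine rpProb_mono hp0.le (hp2 n) fun Δ hΔ => ?_
  have count_pos : (0 : ℝ) < #(hollowSimplices t Δ) := lt_of_lt_of_le (by positivity) hΔ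
  obtain ⟨x, hx⟩ := card_pos.1 (Nat.cast_pos.1 count_pos)
  exact ⟨x, (mem_filter.1 hx).2⟩

/-- For constants `0 < c < 1`, `ε, δ > 0`, `t = cn` and
`exp(-α(c)/c + ε) ≤ p_n ≤ 1`, `Δ ~ RP(n,t,p_n)`: (i) with high probability
there is a `(t+1)`-set all of whose `t`-subsets are faces; (ii) if moreover
`p_n ≤ 1 - ε`, with high probability the number of such `(t+1)`-sets is at
least `exp((α(c) - δ)n)·p_n^{cn}`. -/
theorem stmt7 (c ε δ : ℝ) (hc0 : 0 < c) (hc1 : c < 1) (hε : 0 < ε) (hδ : 0 < δ)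
    (p : ℕ → ℝ) (hp1 : ∀ n : ℕ, Real.exp (-entropy c / c + ε) ≤ p n)
    (hp2 : ∀ n : ℕ, p n ≤ 1) :
    ((∀ ε' : ℝ, 0 < ε' → ∃ N : ℕ, ∀ n : ℕ, N ≤ n → ∀ t : ℕ, (t : ℝ) = c * n →
        1 - ε' ≤ rpProb n t (p n)
          (fun Δ => ∃ x : Finset (Fin n), x.card = t + 1 ∧
            ∀ y ⊆ x, y.card = t → y ∈ Δ)) ∧
      ((∀ n : ℕ, p n ≤ 1 - ε) →
        ∀ ε' : ℝ, 0 < ε' → ∃ N : ℕ, ∀ n : ℕ, N ≤ n → ∀ t : ℕ, (t : ℝ) = c * n →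
          1 - ε' ≤ rpProb n t (p n)
            (fun Δ =>
              Real.exp ((entropy c - δ) * n) * (p n) ^ t ≤
                ((Finset.univ.filter (fun x : Finset (Fin n) =>
                  x.card = t + 1 ∧ ∀ y ⊆ x, y.card = t → y ∈ Δ)).card : ℝ)))) :=
  (stmt7_general c ε δ hc0 hc1 hε hδ p hp1 hp2).imp_right fun count_large _ => count_large
end
end
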